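/- arXiv:1202.6259 — 2 statements merged into one kernel-verified Lean document; each statement's English description precedes it below -/
import Mathlib

section
/- Let Ψ = (X, A, q, g) be a standard MDP where X is a compact subset of the simplex Δ(K) for a nonempty finite set K, and assume: for all x, y ∈ X, a ∈ A, f ∈ D_1, α ≥ 0, β ≥ 0, one has |α·f(q(x,a)) − β·f(q(y,a))| ≤ ‖α·x − β·y‖₁ and |α·g(x,a) − β·g(y,a)| ≤ ‖α·x − β·y‖₁ (f being linearly extended to finitely supported probabilities). Then Ψ has a general uniform value v*, and for all x ∈ X, v*(x) is the infimum of w(x) over all continuous affine functions w : Δ(X) → [0,1] such that (1) w(δ_{x'}) ≥ sup_{a ∈ A} w(q(x',a)) for all x' ∈ X, and (2) w(u) ≥ y for all (u,y) ∈ RR, where RR is the set of invariant couples of Ψ. -/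
open Set MeasureTheory

namespace Stmt16

/-- The simplex `Δ(K)` of probability vectors on `K`, inside `K → ℝ`
(endowed with the ℓ¹ norm, written explicitly as sums of absolute values below). -/
def ΔK (K : Type*) [Fintype K] : Set (K → ℝ) := {p | (∀ k, 0 ≤ p k) ∧ ∑ k, p k = 1}

/-- `D₁`, realized as continuous functions on the simplex (given through all of their
ambient extensions): `a·f(x) − b·f(y) ≤ ‖a·x − b·y‖₁` for `x, y ∈ Δ(K)`, `a, b ≥ 0`. -/
def D1 (K : Type*) [Fintype K] : Set ((K → ℝ) → ℝ) :=
  {f | ContinuousOn f (ΔK K) ∧ ∀ x ∈ ΔK K, ∀ y ∈ ΔK K, ∀ a b : ℝ, 0 ≤ a → 0 ≤ b →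
    a * f x - b * f y ≤ ∑ k, |a * x k - b * y k|}

/-- `Δ_f(𝒳)`: finitely supported probability measures, as weight functions. -/
def Δf (𝒳 : Type*) : Set (𝒳 →₀ ℝ) := {u | (∀ x, 0 ≤ u x) ∧ u.sum (fun _ r => r) = 1}

/-- Linear extension of a function to finitely supported probabilities on a subset `X`
of `K → ℝ`. -/
noncomputable def fExt {K : Type*} {X : Set (K → ℝ)} (f : (K → ℝ) → ℝ)
    (u : X →₀ ℝ) : ℝ :=
  u.sum fun p w => w * f (p : K → ℝ)

variable {𝒳 A : Type*}

/-- Behavioral strategies: given the past history and the current state, play a finitely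
supported mixed action. -/
def IsStrat (σ : List (𝒳 × A) → 𝒳 → (A →₀ ℝ)) : Prop := ∀ h x, σ h x ∈ Δf A

/-- The (finitely supported) distribution at time `t` of the pair
(history of states and actions up to stage `t`, state at stage `t+1`),
for initial state `x₁` and strategy `σ`. -/
noncomputable def hist (q : 𝒳 → A → (𝒳 →₀ ℝ)) (σ : List (𝒳 × A) → 𝒳 → (A →₀ ℝ))
    (x₁ : 𝒳) : ℕ → (List (𝒳 × A) × 𝒳 →₀ ℝ)
  | 0 => Finsupp.single ([], x₁) 1
  | t + 1 => (hist q σ x₁ t).sum fun hx w =>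
      (σ hx.1 hx.2).sum fun a pa =>
        (q hx.2 a).sum fun x' pr => Finsupp.single (hx.1 ++ [(hx.2, a)], x') (w * pa * pr)

/-- The expected payoff `E_{x₁,σ}(g(x_{t+1}, a_{t+1}))` at stage `t+1`. -/
noncomputable def stagePay (q : 𝒳 → A → (𝒳 →₀ ℝ)) (g : 𝒳 → A → ℝ)
    (σ : List (𝒳 × A) → 𝒳 → (A →₀ ℝ)) (x₁ : 𝒳) (t : ℕ) : ℝ :=
  (hist q σ x₁ t).sum fun hx w => (σ hx.1 hx.2).sum fun a pa => w * pa * g hx.2 a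

/-- An evaluation: a probability distribution `θ = (θ_t)_{t ≥ 1}` over stages
(indexed here by `t : ℕ`, `t` standing for stage `t+1`). -/
def IsEval (θ : ℕ → ℝ) : Prop := (∀ t, 0 ≤ θ t) ∧ ∑' t, θ t = 1

/-- The impatience `I(θ) = Σ_{t≥1} |θ_{t+1} − θ_t|`. -/
noncomputable def impatience (θ : ℕ → ℝ) : ℝ := ∑' t, |θ (t + 1) - θ t|

/-- The `θ`-payoff `γ_θ(x₁,σ) = E_{x₁,σ}(Σ_t θ_t g(x_t,a_t))`. -/
noncomputable def payoff (q : 𝒳 → A → (𝒳 →₀ ℝ)) (g : 𝒳 → A → ℝ)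
    (θ : ℕ → ℝ) (σ : List (𝒳 × A) → 𝒳 → (A →₀ ℝ)) (x₁ : 𝒳) : ℝ :=
  ∑' t, θ t * stagePay q g σ x₁ t

/-- The `θ`-value `v_θ(x₁) = sup_σ γ_θ(x₁,σ)`. -/
noncomputable def value (q : 𝒳 → A → (𝒳 →₀ ℝ)) (g : 𝒳 → A → ℝ)
    (θ : ℕ → ℝ) (x₁ : 𝒳) : ℝ :=
  sSup {c : ℝ | ∃ σ, IsStrat σ ∧ c = payoff q g θ σ x₁}

/-- The Borel measure associated to a finitely supported weight function. -/
noncomputable def toMeas [MeasurableSpace 𝒳] (u : 𝒳 →₀ ℝ) : Measure 𝒳 :=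
  u.sum fun x a => ENNReal.ofReal a • Measure.dirac x

/-- `w` is affine on `Δ(𝒳)`. -/
def IsAffine [MeasurableSpace 𝒳] (w : ProbabilityMeasure 𝒳 → ℝ) : Prop :=
  ∀ (u v m : ProbabilityMeasure 𝒳) (α : ℝ), α ∈ Icc (0:ℝ) 1 →
    (m : Measure 𝒳) =
      ENNReal.ofReal α • (u : Measure 𝒳) + ENNReal.ofReal (1 - α) • (v : Measure 𝒳) →
    w m = α * w u + (1 - α) * w v

/-- `Q(u,a) = Σ_x u(x) q(x, a(x))` for a mixed action profile `a`. -/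
noncomputable def Qmix (q : 𝒳 → A → (𝒳 →₀ ℝ)) (u : 𝒳 →₀ ℝ)
    (a : 𝒳 → (A →₀ ℝ)) : 𝒳 →₀ ℝ :=
  u.sum fun x w => w • ((a x).sum fun act p => p • q x act)

/-- `G(u,a) = Σ_x u(x) g(x, a(x))` for a mixed action profile `a`. -/
noncomputable def Gmix (g : 𝒳 → A → ℝ) (u : 𝒳 →₀ ℝ) (a : 𝒳 → (A →₀ ℝ)) : ℝ :=
  u.sum fun x w => w * (a x).sum fun act p => p * g x act

/-- The set `RR` of invariant couples: `(u,y) ∈ Δ(𝒳)×[0,1]` with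
`((u,y),(u,y)) ∈ cl(Graph F̂)` for the weak-* topology. -/
def RR [MeasurableSpace 𝒳] [TopologicalSpace 𝒳] [OpensMeasurableSpace 𝒳]
    (q : 𝒳 → A → (𝒳 →₀ ℝ)) (g : 𝒳 → A → ℝ) :
    Set (ProbabilityMeasure 𝒳 × ℝ) :=
  {py | (py, py) ∈ closure {z : (ProbabilityMeasure 𝒳 × ℝ) × (ProbabilityMeasure 𝒳 × ℝ) |
    z.1.2 ∈ Icc (0:ℝ) 1 ∧ ∃ u ∈ Δf 𝒳, ∃ a : 𝒳 → (A →₀ ℝ), (∀ x, a x ∈ Δf A) ∧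
      (z.1.1 : Measure 𝒳) = toMeas u ∧
      (z.2.1 : Measure 𝒳) = toMeas (Qmix q u a) ∧ z.2.2 = Gmix g u a}}

end Stmt16


namespace Stmt16b

set_option linter.unusedSectionVars false
set_option linter.unusedVariables false

open Stmt16 Filter Topology Set MeasureTheory

section abs

variable {S : Type*} {A : Type*}

/-- Pairing of a finitely supported weight with a function, linear in the weight. -/
noncomputable def pr (f : S → ℝ) : (S →₀ ℝ) →ₗ[ℝ] ℝ := Finsupp.linearCombination ℝ f

lemma pr_apply (f : S → ℝ) (u : S →₀ ℝ) : pr f u = u.sum fun x w => w * f x := by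
  simp [pr, Finsupp.linearCombination_apply]

@[simp] lemma pr_single (f : S → ℝ) (x : S) (c : ℝ) : pr f (Finsupp.single x c) = c * f x := by
  simp [pr]

lemma pr_mono {f f' : S → ℝ} {u : S →₀ ℝ} (hu : ∀ x, 0 ≤ u x) (h : ∀ x, f x ≤ f' x) :
    pr f u ≤ pr f' u := by
  rw [pr_apply, pr_apply]
  exact Finset.sum_le_sum fun x _ => mul_le_mul_of_nonneg_left (h x) (hu x)

lemma pr_add (f f' : S → ℝ) (u : S →₀ ℝ) :
    pr (fun x => f x + f' x) u = pr f u + pr f' u := by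
  simp only [pr_apply, Finsupp.sum, mul_add, Finset.sum_add_distrib]

lemma pr_smul (c : ℝ) (f : S → ℝ) (u : S →₀ ℝ) :
    pr (fun x => c * f x) u = c * pr f u := by
  simp only [pr_apply, Finsupp.sum, Finset.mul_sum]
  exact Finset.sum_congr rfl fun x _ => by ring

lemma pr_sub (f f' : S → ℝ) (u : S →₀ ℝ) :
    pr (fun x => f x - f' x) u = pr f u - pr f' u := by
  simp only [pr_apply, Finsupp.sum, mul_sub, Finset.sum_sub_distrib]

lemma mem_Δf {u : S →₀ ℝ} : u ∈ Δf S ↔ (∀ x, 0 ≤ u x) ∧ pr (fun _ => 1) u = 1 := by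
  simp [Δf, pr_apply]

lemma pr_const {u : S →₀ ℝ} (hu : u ∈ Δf S) (c : ℝ) : pr (fun _ => c) u = c := by
  have := pr_smul c (fun _ => 1) u
  rw [(mem_Δf.1 hu).2] at this
  simpa using this

lemma pr_add_const {u : S →₀ ℝ} (hu : u ∈ Δf S) (f : S → ℝ) (c : ℝ) :
    pr (fun x => f x + c) u = pr f u + c := by
  rw [pr_add f (fun _ => c), pr_const hu]

lemma pr_sub_const {u : S →₀ ℝ} (hu : u ∈ Δf S) (f : S → ℝ) (c : ℝ) :
    pr (fun x => f x - c) u = pr f u - c := by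
  rw [pr_sub f (fun _ => c), pr_const hu]

lemma pr_nonneg {f : S → ℝ} {u : S →₀ ℝ} (hu : ∀ x, 0 ≤ u x) (h : ∀ x, 0 ≤ f x) :
    0 ≤ pr f u := by
  have := pr_mono hu h
  have h0 : pr (fun _ : S => (0:ℝ)) u = 0 := by simp [pr_apply]
  linarith

lemma pr_tendsto {ι : Type*} {l : Filter ι} {F : ι → S → ℝ} {f : S → ℝ}
    (h : ∀ x, Tendsto (fun i => F i x) l (𝓝 (f x))) (u : S →₀ ℝ) :
    Tendsto (fun i => pr (F i) u) l (𝓝 (pr f u)) := by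
  simp only [pr_apply, Finsupp.sum]
  exact tendsto_finsetSum _ fun x _ => (h x).const_mul _

lemma ext_pr {u v : S →₀ ℝ} (h : ∀ f : S → ℝ, pr f u = pr f v) : u = v := by
  classical
  ext x
  have := h (fun y => if y = x then 1 else 0)
  simp only [pr_apply, Finsupp.sum, mul_ite, mul_one, mul_zero, Finset.sum_ite_eq',
    Finsupp.mem_support_iff] at this
  by_cases h1 : u x = 0 <;> by_cases h2 : v x = 0 <;> simp_all

lemma single_mem_Δf (x : S) : Finsupp.single x (1:ℝ) ∈ Δf S := by
  rw [mem_Δf]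
  refine ⟨fun y => ?_, by simp⟩
  classical
  rw [Finsupp.single_apply]; split_ifs <;> norm_num

/-- State marginal of a state-action weight. -/
noncomputable def marg : (S × A →₀ ℝ) →ₗ[ℝ] (S →₀ ℝ) :=
  Finsupp.linearCombination ℝ (fun p => Finsupp.single p.1 1)

/-- Next-state law. -/
noncomputable def Qm (q : S → A → (S →₀ ℝ)) : (S × A →₀ ℝ) →ₗ[ℝ] (S →₀ ℝ) :=
  Finsupp.linearCombination ℝ (fun p => q p.1 p.2)

/-- Expected stage payoff. -/
noncomputable def Gm (g : S → A → ℝ) : (S × A →₀ ℝ) →ₗ[ℝ] ℝ := pr (fun p => g p.1 p.2)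

lemma pr_lc {T : Type*} (f : T → ℝ) (k : S → (T →₀ ℝ)) (u : S →₀ ℝ) :
    pr f (Finsupp.linearCombination ℝ k u) = pr (fun x => pr f (k x)) u := by
  rw [Finsupp.linearCombination_apply, map_finsuppSum, pr_apply]
  simp

lemma pr_marg (f : S → ℝ) (m : S × A →₀ ℝ) : pr f (marg m) = pr (fun p => f p.1) m := by
  rw [marg, pr_lc]; simp

lemma pr_Qm (q : S → A → (S →₀ ℝ)) (f : S → ℝ) (m : S × A →₀ ℝ) :
    pr f (Qm q m) = pr (fun p => pr f (q p.1 p.2)) m := by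
  rw [Qm, pr_lc]

lemma lc_nonneg {T : Type*} {k : S → (T →₀ ℝ)} {u : S →₀ ℝ} (hu : ∀ x, 0 ≤ u x)
    (hk : ∀ x y, 0 ≤ k x y) (y : T) : 0 ≤ Finsupp.linearCombination ℝ k u y := by
  rw [Finsupp.linearCombination_apply, Finsupp.sum, Finsupp.finsetSum_apply]
  exact Finset.sum_nonneg fun x _ => mul_nonneg (hu x) (hk x y)

lemma lc_mem {T : Type*} {k : S → (T →₀ ℝ)} {u : S →₀ ℝ} (hu : u ∈ Δf S)
    (hk : ∀ x, k x ∈ Δf T) : Finsupp.linearCombination ℝ k u ∈ Δf T := by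
  rw [mem_Δf]
  refine ⟨lc_nonneg hu.1 fun x => (hk x).1, ?_⟩
  rw [pr_lc]
  simp only [(mem_Δf.1 (hk _)).2]
  exact pr_const hu 1

lemma mem_of_marg {m : S × A →₀ ℝ} (h0 : ∀ p, 0 ≤ m p) (h : marg m ∈ Δf S) :
    m ∈ Δf (S × A) := by
  rw [mem_Δf] at h ⊢
  have h2 := h.2
  rw [pr_marg] at h2
  exact ⟨h0, h2⟩

lemma marg_mem {m : S × A →₀ ℝ} (h : m ∈ Δf (S × A)) : marg m ∈ Δf S :=
  lc_mem h fun _ => single_mem_Δf _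

/-- Lift of a state law along a pure selection. -/
noncomputable def lift (a : S → A) (u : S →₀ ℝ) : S × A →₀ ℝ :=
  Finsupp.linearCombination ℝ (fun x => Finsupp.single (x, a x) 1) u

lemma pr_lift (f : S × A → ℝ) (a : S → A) (u : S →₀ ℝ) :
    pr f (lift a u) = pr (fun x => f (x, a x)) u := by
  rw [lift, pr_lc]; simp

lemma lift_nonneg {a : S → A} {u : S →₀ ℝ} (hu : ∀ x, 0 ≤ u x) (p : S × A) :
    0 ≤ lift a u p := lc_nonneg hu (fun _ => (single_mem_Δf _).1) p

lemma marg_lift (a : S → A) (u : S →₀ ℝ) : marg (lift a u) = u := by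
  apply ext_pr; intro f; rw [pr_marg, pr_lift]

/-- Shift of an evaluation. -/
def shn (n : ℕ) (θ : ℕ → ℝ) : ℕ → ℝ := fun t => θ (t + n)

lemma shn_shn (m n : ℕ) (θ : ℕ → ℝ) : shn m (shn n θ) = shn (n + m) θ := by
  funext t; simp only [shn]; congr 1; omega

lemma shn_zero (θ : ℕ → ℝ) : shn 0 θ = θ := rfl

/-- Finite horizon Bellman recursion. -/
noncomputable def B (q : S → A → (S →₀ ℝ)) (g : S → A → ℝ) : ℕ → (ℕ → ℝ) → S → ℝ
  | 0, _, _ => 0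
  | n + 1, θ, x => ⨆ a, (θ 0 * g x a + pr (B q g n (shn 1 θ)) (q x a))

/-- Infinite horizon value. -/
noncomputable def W (q : S → A → (S →₀ ℝ)) (g : S → A → ℝ) (θ : ℕ → ℝ) (x : S) : ℝ :=
  ⨆ n, B q g n θ x

variable [Nonempty A] {q : S → A → (S →₀ ℝ)} {g : S → A → ℝ}

lemma shn_nonneg {θ : ℕ → ℝ} (h : ∀ t, 0 ≤ θ t) (n : ℕ) : ∀ t, 0 ≤ shn n θ t := fun _ => h _

lemma sum_shn (θ : ℕ → ℝ) (n : ℕ) :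
    ∑ t ∈ Finset.range (n + 1), θ t = θ 0 + ∑ t ∈ Finset.range n, shn 1 θ t := by
  rw [Finset.sum_range_succ']; simp [shn, add_comm]

lemma B_bounds (hq : ∀ x a, q x a ∈ Δf S) (hg : ∀ x a, g x a ∈ Icc (0:ℝ) 1) :
    ∀ (n : ℕ) (θ : ℕ → ℝ), (∀ t, 0 ≤ θ t) → ∀ x,
      0 ≤ B q g n θ x ∧ B q g n θ x ≤ ∑ t ∈ Finset.range n, θ t := by
  intro n
  induction n with
  | zero => intro θ _ x; simp [B]
  | succ n ih =>
    intro θ hθ x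
    have ih' := ih (shn 1 θ) (shn_nonneg hθ 1)
    constructor
    · rw [B]
      apply Real.iSup_nonneg
      intro a
      exact add_nonneg (mul_nonneg (hθ 0) (hg x a).1) (pr_nonneg (hq x a).1 fun y => (ih' y).1)
    · rw [B, sum_shn]
      apply ciSup_le
      intro a
      have h1 := pr_mono (hq x a).1 (fun y => (ih' y).2)
      rw [pr_const (hq x a)] at h1
      have h2 := mul_le_mul_of_nonneg_left (hg x a).2 (hθ 0)
      linarith

lemma B_term_le (hq : ∀ x a, q x a ∈ Δf S) (hg : ∀ x a, g x a ∈ Icc (0:ℝ) 1)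
    (n : ℕ) {θ : ℕ → ℝ} (hθ : ∀ t, 0 ≤ θ t) (x : S) (a : A) :
    θ 0 * g x a + pr (B q g n (shn 1 θ)) (q x a) ≤ ∑ t ∈ Finset.range (n + 1), θ t := by
  rw [sum_shn]
  have h1 := pr_mono (hq x a).1 (fun y => (B_bounds hq hg n (shn 1 θ) (shn_nonneg hθ 1) y).2)
  rw [pr_const (hq x a)] at h1
  have h2 := mul_le_mul_of_nonneg_left (hg x a).2 (hθ 0)
  linarith

lemma B_step (hq : ∀ x a, q x a ∈ Δf S) (hg : ∀ x a, g x a ∈ Icc (0:ℝ) 1)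
    (n : ℕ) {θ : ℕ → ℝ} (hθ : ∀ t, 0 ≤ θ t) (x : S) (a : A) :
    θ 0 * g x a + pr (B q g n (shn 1 θ)) (q x a) ≤ B q g (n + 1) θ x := by
  rw [B]
  exact le_ciSup (f := fun a => θ 0 * g x a + pr (B q g n (shn 1 θ)) (q x a))
    ⟨_, by rintro _ ⟨a, rfl⟩; exact B_term_le hq hg n hθ x a⟩ a

lemma B_succ_le {n : ℕ} {θ : ℕ → ℝ} {x : S} {c : ℝ}
    (h : ∀ a, θ 0 * g x a + pr (B q g n (shn 1 θ)) (q x a) ≤ c) : B q g (n + 1) θ x ≤ c := by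
  rw [B]; exact ciSup_le h

lemma B_mono_n (hq : ∀ x a, q x a ∈ Δf S) (hg : ∀ x a, g x a ∈ Icc (0:ℝ) 1) :
    ∀ (n : ℕ) {θ : ℕ → ℝ}, (∀ t, 0 ≤ θ t) → ∀ x, B q g n θ x ≤ B q g (n + 1) θ x := by
  intro n
  induction n with
  | zero => intro θ hθ x; exact (B_bounds hq hg 1 θ hθ x).1
  | succ n ih =>
    intro θ hθ x
    apply B_succ_le
    intro a
    refine le_trans ?_ (B_step hq hg (n + 1) hθ x a)
    have := pr_mono (hq x a).1 (ih (shn_nonneg hθ 1))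
    linarith

lemma B_mono (hq : ∀ x a, q x a ∈ Δf S) (hg : ∀ x a, g x a ∈ Icc (0:ℝ) 1) :
    ∀ (n : ℕ) {θ θ' : ℕ → ℝ}, (∀ t, 0 ≤ θ t) → (∀ t, θ t ≤ θ' t) →
      ∀ x, B q g n θ x ≤ B q g n θ' x := by
  intro n
  induction n with
  | zero => intro θ θ' _ _ x; simp [B]
  | succ n ih =>
    intro θ θ' hθ h x
    apply B_succ_le
    intro a
    refine le_trans ?_ (B_step hq hg n (fun t => (hθ t).trans (h t)) x a)
    have := pr_mono (hq x a).1 (ih (shn_nonneg hθ 1) (fun t => h (t + 1)) :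
      ∀ x, B q g n (shn 1 θ) x ≤ B q g n (shn 1 θ') x)
    have := mul_le_mul_of_nonneg_right (h 0) (hg x a).1
    linarith

lemma B_add (hq : ∀ x a, q x a ∈ Δf S) (hg : ∀ x a, g x a ∈ Icc (0:ℝ) 1) :
    ∀ (n : ℕ) {θ θ' : ℕ → ℝ}, (∀ t, 0 ≤ θ t) → (∀ t, 0 ≤ θ' t) →
      ∀ x, B q g n (fun t => θ t + θ' t) x ≤ B q g n θ x + B q g n θ' x := by
  intro n
  induction n with
  | zero => intro θ θ' _ _ x; simp [B]
  | succ n ih =>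
    intro θ θ' hθ h x
    apply B_succ_le
    intro a
    have h1 := B_step hq hg n hθ x a
    have h2 := B_step hq hg n h x a
    have h3 := pr_mono (hq x a).1 (ih (shn_nonneg hθ 1) (shn_nonneg h 1))
    rw [pr_add] at h3
    have h4 : shn 1 (fun t => θ t + θ' t) = fun t => shn 1 θ t + shn 1 θ' t := rfl
    rw [h4]
    linarith

lemma B_smul (hq : ∀ x a, q x a ∈ Δf S) (hg : ∀ x a, g x a ∈ Icc (0:ℝ) 1) {c : ℝ} (hc : 0 ≤ c) :
    ∀ (n : ℕ) {θ : ℕ → ℝ}, (∀ t, 0 ≤ θ t) →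
      ∀ x, B q g n (fun t => c * θ t) x ≤ c * B q g n θ x := by
  intro n
  induction n with
  | zero => intro θ _ x; simp [B]
  | succ n ih =>
    intro θ hθ x
    apply B_succ_le
    intro a
    have h1 := mul_le_mul_of_nonneg_left (B_step hq hg n hθ x a) hc
    have h3 := pr_mono (hq x a).1 (ih (shn_nonneg hθ 1))
    rw [pr_smul] at h3
    have h4 : shn 1 (fun t => c * θ t) = fun t => c * shn 1 θ t := rfl
    rw [h4]
    linarith

/-- Nonnegative summable sequences. -/
def NS (θ : ℕ → ℝ) : Prop := (∀ t, 0 ≤ θ t) ∧ Summable θ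

lemma NS.shn {θ : ℕ → ℝ} (h : NS θ) (n : ℕ) : NS (shn n θ) :=
  ⟨fun _ => h.1 _, (summable_nat_add_iff n).2 h.2⟩

lemma NS.add {θ θ' : ℕ → ℝ} (h : NS θ) (h' : NS θ') : NS (fun t => θ t + θ' t) :=
  ⟨fun t => add_nonneg (h.1 t) (h'.1 t), h.2.add h'.2⟩

lemma NS.smul {θ : ℕ → ℝ} (h : NS θ) {c : ℝ} (hc : 0 ≤ c) : NS (fun t => c * θ t) :=
  ⟨fun t => mul_nonneg hc (h.1 t), h.2.mul_left c⟩

lemma NS.sum_le {θ : ℕ → ℝ} (h : NS θ) (n : ℕ) : ∑ t ∈ Finset.range n, θ t ≤ ∑' t, θ t :=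
  h.2.sum_le_tsum _ fun t _ => h.1 t

lemma NS.tail {θ : ℕ → ℝ} (h : NS θ) : Tendsto (fun n => ∑' t, Stmt16b.shn n θ t) atTop (𝓝 0) :=
  tendsto_sum_nat_add θ

lemma W_tendsto (hq : ∀ x a, q x a ∈ Δf S) (hg : ∀ x a, g x a ∈ Icc (0:ℝ) 1)
    {θ : ℕ → ℝ} (h : NS θ) (x : S) :
    Tendsto (fun n => B q g n θ x) atTop (𝓝 (W q g θ x)) := by
  apply tendsto_atTop_ciSup
  · exact monotone_nat_of_le_succ fun n => B_mono_n hq hg n h.1 x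
  · refine ⟨∑' t, θ t, ?_⟩
    rintro _ ⟨n, rfl⟩
    exact ((B_bounds hq hg n θ h.1 x).2).trans (h.sum_le n)

lemma W_nonneg (hq : ∀ x a, q x a ∈ Δf S) (hg : ∀ x a, g x a ∈ Icc (0:ℝ) 1)
    {θ : ℕ → ℝ} (h : NS θ) (x : S) : 0 ≤ W q g θ x :=
  ge_of_tendsto' (W_tendsto hq hg h x) fun n => (B_bounds hq hg n θ h.1 x).1

lemma W_le (hq : ∀ x a, q x a ∈ Δf S) (hg : ∀ x a, g x a ∈ Icc (0:ℝ) 1)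
    {θ : ℕ → ℝ} (h : NS θ) (x : S) : W q g θ x ≤ ∑' t, θ t :=
  le_of_tendsto' (W_tendsto hq hg h x) fun n =>
    ((B_bounds hq hg n θ h.1 x).2).trans (h.sum_le n)

lemma B_le_W (hq : ∀ x a, q x a ∈ Δf S) (hg : ∀ x a, g x a ∈ Icc (0:ℝ) 1)
    {θ : ℕ → ℝ} (h : NS θ) (n : ℕ) (x : S) : B q g n θ x ≤ W q g θ x :=
  (monotone_nat_of_le_succ fun n => B_mono_n hq hg n h.1 x).ge_of_tendsto
    (W_tendsto hq hg h x) n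

lemma W_step (hq : ∀ x a, q x a ∈ Δf S) (hg : ∀ x a, g x a ∈ Icc (0:ℝ) 1)
    {θ : ℕ → ℝ} (h : NS θ) (x : S) (a : A) :
    θ 0 * g x a + pr (W q g (shn 1 θ)) (q x a) ≤ W q g θ x := by
  refine le_of_tendsto' ((pr_tendsto (W_tendsto hq hg (h.shn 1)) (q x a)).const_add _) fun n => ?_
  exact (B_step hq hg n h.1 x a).trans (B_le_W hq hg h _ x)

lemma W_sel (hq : ∀ x a, q x a ∈ Δf S) (hg : ∀ x a, g x a ∈ Icc (0:ℝ) 1)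
    {θ : ℕ → ℝ} (h : NS θ) (x : S) {η : ℝ} (hη : 0 < η) :
    ∃ a, W q g θ x - η ≤ θ 0 * g x a + pr (W q g (shn 1 θ)) (q x a) := by
  by_contra! hcon
  have : W q g θ x ≤ W q g θ x - η := by
    refine le_of_tendsto' ((W_tendsto hq hg h x).comp (tendsto_add_atTop_nat 1)) fun n => ?_
    apply B_succ_le
    intro a
    have := pr_mono (hq x a).1 (B_le_W hq hg (h.shn 1) n)
    linarith [hcon a]
  linarith

lemma W_mono (hq : ∀ x a, q x a ∈ Δf S) (hg : ∀ x a, g x a ∈ Icc (0:ℝ) 1)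
    {θ θ' : ℕ → ℝ} (h : NS θ) (h' : NS θ') (hle : ∀ t, θ t ≤ θ' t) (x : S) :
    W q g θ x ≤ W q g θ' x :=
  le_of_tendsto_of_tendsto' (W_tendsto hq hg h x) (W_tendsto hq hg h' x)
    fun n => B_mono hq hg n h.1 hle x

lemma W_add (hq : ∀ x a, q x a ∈ Δf S) (hg : ∀ x a, g x a ∈ Icc (0:ℝ) 1)
    {θ θ' : ℕ → ℝ} (h : NS θ) (h' : NS θ') (x : S) :
    W q g (fun t => θ t + θ' t) x ≤ W q g θ x + W q g θ' x :=
  le_of_tendsto_of_tendsto' (W_tendsto hq hg (h.add h') x)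
    ((W_tendsto hq hg h x).add (W_tendsto hq hg h' x))
    fun n => B_add hq hg n h.1 h'.1 x

lemma W_smul (hq : ∀ x a, q x a ∈ Δf S) (hg : ∀ x a, g x a ∈ Icc (0:ℝ) 1)
    {θ : ℕ → ℝ} (h : NS θ) {c : ℝ} (hc : 0 ≤ c) (x : S) :
    W q g (fun t => c * θ t) x ≤ c * W q g θ x :=
  le_of_tendsto_of_tendsto' (W_tendsto hq hg (h.smul hc) x)
    ((W_tendsto hq hg h x).const_mul c)
    fun n => B_smul hq hg hc n h.1 x

lemma W_lip (hq : ∀ x a, q x a ∈ Δf S) (hg : ∀ x a, g x a ∈ Icc (0:ℝ) 1)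
    {θ θ' : ℕ → ℝ} (h : NS θ) (h' : NS θ') (x : S) :
    W q g θ x ≤ W q g θ' x + ∑' t, |θ t - θ' t| := by
  have hd : NS (fun t => |θ t - θ' t|) := ⟨fun _ => abs_nonneg _, (h.2.sub h'.2).abs⟩
  have h1 := W_mono hq hg h (h'.add hd)
    (fun t => by have := le_abs_self (θ t - θ' t); linarith) x
  have h2 := W_add hq hg h' hd x
  have h3 := W_le hq hg hd x
  linarith

lemma NS.sum {ι : Type*} {s : Finset ι} {c : ι → ℝ} {Θ : ι → ℕ → ℝ} (hc : ∀ i, 0 ≤ c i)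
    (h : ∀ i, NS (Θ i)) : NS (fun t => ∑ i ∈ s, c i * Θ i t) :=
  ⟨fun t => Finset.sum_nonneg fun i _ => mul_nonneg (hc i) ((h i).1 t),
    summable_sum fun i _ => (h i).2.mul_left (c i)⟩

lemma W_sum (hq : ∀ x a, q x a ∈ Δf S) (hg : ∀ x a, g x a ∈ Icc (0:ℝ) 1)
    {ι : Type*} (s : Finset ι) {c : ι → ℝ} {Θ : ι → ℕ → ℝ} (hc : ∀ i, 0 ≤ c i)
    (h : ∀ i, NS (Θ i)) (x : S) :
    W q g (fun t => ∑ i ∈ s, c i * Θ i t) x ≤ ∑ i ∈ s, c i * W q g (Θ i) x := by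
  classical
  induction s using Finset.induction_on with
  | empty =>
    have h0 : NS (fun _ => (0:ℝ)) := ⟨fun _ => le_rfl, summable_zero⟩
    have := W_le hq hg h0 x
    simpa using this
  | insert i s hi ih =>
    simp only [Finset.sum_insert hi]
    refine (W_add hq hg ((h i).smul (hc i)) (NS.sum hc h) x).trans ?_
    exact add_le_add (W_smul hq hg (h i) (hc i) x) ih

/-- Non-expansiveness predicate. -/
def PD (N : ℝ → S → ℝ → S → ℝ) (c : ℝ) (f : S → ℝ) : Prop :=
  ∀ x y α β, 0 ≤ α → 0 ≤ β → |α * f x - β * f y| ≤ c * N α x β y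

lemma abs_iSup_sub {F F' : A → ℝ} {M M' D α β : ℝ} (hF : ∀ a, F a ≤ M) (hF' : ∀ a, F' a ≤ M')
    (hα : 0 ≤ α) (hβ : 0 ≤ β) (h : ∀ a, |α * F a - β * F' a| ≤ D) :
    |α * (⨆ a, F a) - β * (⨆ a, F' a)| ≤ D := by
  have b : BddAbove (range F) := ⟨M, by rintro _ ⟨a, rfl⟩; exact hF a⟩
  have b' : BddAbove (range F') := ⟨M', by rintro _ ⟨a, rfl⟩; exact hF' a⟩
  rw [abs_le]
  constructor
  · have : β * (⨆ a, F' a) ≤ α * (⨆ a, F a) + D := by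
      rw [Real.mul_iSup_of_nonneg hβ]
      apply ciSup_le
      intro a
      have h1 := (abs_le.1 (h a)).1
      have h2 := mul_le_mul_of_nonneg_left (le_ciSup b a) hα
      linarith
    linarith
  · have : α * (⨆ a, F a) ≤ β * (⨆ a, F' a) + D := by
      rw [Real.mul_iSup_of_nonneg hα]
      apply ciSup_le
      intro a
      have h1 := (abs_le.1 (h a)).2
      have h2 := mul_le_mul_of_nonneg_left (le_ciSup b' a) hβ
      linarith
    linarith

lemma B_PD (hq : ∀ x a, q x a ∈ Δf S) (hg : ∀ x a, g x a ∈ Icc (0:ℝ) 1)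
    {N : ℝ → S → ℝ → S → ℝ}
    (hNq : ∀ c f, 0 ≤ c → PD N c f → ∀ a, PD N c (fun x => pr f (q x a)))
    (hNg : ∀ a, PD N 1 (fun x => g x a)) :
    ∀ (n : ℕ) {θ : ℕ → ℝ}, (∀ t, 0 ≤ θ t) → PD N (∑ t ∈ Finset.range n, θ t) (B q g n θ) := by
  intro n
  induction n with
  | zero => intro θ _ x y α β _ _; simp [B]
  | succ n ih =>
    intro θ hθ x y α β hα hβ
    simp only [B]
    apply abs_iSup_sub (B_term_le hq hg n hθ x) (B_term_le hq hg n hθ y) hα hβ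
    intro a
    have h1 := hNq _ _ (Finset.sum_nonneg fun t _ => shn_nonneg hθ 1 t)
      (ih (shn_nonneg hθ 1)) a x y α β hα hβ
    have h2 := mul_le_mul_of_nonneg_left (hNg a x y α β hα hβ) (hθ 0)
    rw [sum_shn]
    have h3 : α * (θ 0 * g x a + pr (B q g n (shn 1 θ)) (q x a)) -
        β * (θ 0 * g y a + pr (B q g n (shn 1 θ)) (q y a)) =
        θ 0 * (α * g x a - β * g y a) +
        (α * pr (B q g n (shn 1 θ)) (q x a) - β * pr (B q g n (shn 1 θ)) (q y a)) := by ring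
    rw [h3]
    refine (abs_add_le _ _).trans ?_
    rw [abs_mul, abs_of_nonneg (hθ 0)]
    linarith

lemma W_PD (hq : ∀ x a, q x a ∈ Δf S) (hg : ∀ x a, g x a ∈ Icc (0:ℝ) 1)
    {N : ℝ → S → ℝ → S → ℝ}
    (hNq : ∀ c f, 0 ≤ c → PD N c f → ∀ a, PD N c (fun x => pr f (q x a)))
    (hNg : ∀ a, PD N 1 (fun x => g x a)) {θ : ℕ → ℝ} (h : NS θ) :
    PD N (∑' t, θ t) (W q g θ) := by
  intro x y α β hα hβ
  refine le_of_tendsto_of_tendsto'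
    (((W_tendsto hq hg h x).const_mul α).sub ((W_tendsto hq hg h y).const_mul β)).abs
    (h.2.hasSum.tendsto_sum_nat.mul_const _) fun n => B_PD hq hg hNq hNg n h.1 x y α β hα hβ

end abs

end Stmt16b


namespace Stmt16b

set_option linter.unusedSectionVars false
set_option linter.unusedVariables false

open Stmt16 Filter Topology Set MeasureTheory

section plays

variable {S : Type*} {A : Type*} [Nonempty A] {q : S → A → (S →₀ ℝ)} {g : S → A → ℝ}

/-- A play in the space of state-action laws. -/
def IsPlay (q : S → A → (S →₀ ℝ)) (u : S →₀ ℝ) (m : ℕ → (S × A →₀ ℝ)) : Prop :=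
  (∀ t p, 0 ≤ m t p) ∧ marg (m 0) = u ∧ ∀ t, marg (m (t + 1)) = Qm q (m t)

lemma Qm_mem (hq : ∀ x a, q x a ∈ Δf S) {m : S × A →₀ ℝ} (h : m ∈ Δf (S × A)) :
    Qm q m ∈ Δf S := lc_mem h fun _ => hq _ _

lemma IsPlay.mem (hq : ∀ x a, q x a ∈ Δf S) {u : S →₀ ℝ} (hu : u ∈ Δf S)
    {m : ℕ → (S × A →₀ ℝ)} (h : IsPlay q u m) (t : ℕ) : m t ∈ Δf (S × A) := by
  induction t with
  | zero => exact mem_of_marg (h.1 0) (by rw [h.2.1]; exact hu)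
  | succ t ih => exact mem_of_marg (h.1 _) (by rw [h.2.2]; exact Qm_mem hq ih)

lemma Gm_mem (hg : ∀ x a, g x a ∈ Icc (0:ℝ) 1) {m : S × A →₀ ℝ} (h : m ∈ Δf (S × A)) :
    Gm g m ∈ Icc (0:ℝ) 1 := by
  refine ⟨pr_nonneg h.1 fun p => (hg _ _).1, ?_⟩
  have := pr_mono h.1 (fun p : S × A => (hg p.1 p.2).2)
  rwa [pr_const h] at this

lemma W_stepm (hq : ∀ x a, q x a ∈ Δf S) (hg : ∀ x a, g x a ∈ Icc (0:ℝ) 1)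
    {θ : ℕ → ℝ} (h : NS θ) {m : S × A →₀ ℝ} (hm : ∀ p, 0 ≤ m p) :
    θ 0 * Gm g m + pr (W q g (shn 1 θ)) (Qm q m) ≤ pr (W q g θ) (marg m) := by
  have := pr_mono hm (fun p : S × A => W_step hq hg h p.1 p.2)
  rw [pr_add, pr_smul] at this
  rw [pr_Qm, pr_marg]
  exact this

lemma W_selm (hq : ∀ x a, q x a ∈ Δf S) (hg : ∀ x a, g x a ∈ Icc (0:ℝ) 1)
    {θ : ℕ → ℝ} (h : NS θ) {u : S →₀ ℝ} (hu : u ∈ Δf S) {η : ℝ} (hη : 0 < η) :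
    ∃ m : S × A →₀ ℝ, (∀ p, 0 ≤ m p) ∧ marg m = u ∧
      pr (W q g θ) u - η ≤ θ 0 * Gm g m + pr (W q g (shn 1 θ)) (Qm q m) := by
  choose a ha using fun x => W_sel hq hg h x hη
  refine ⟨lift a u, lift_nonneg hu.1, marg_lift a u, ?_⟩
  have := pr_mono hu.1 ha
  rw [pr_sub_const hu, pr_add, pr_smul] at this
  rw [pr_Qm, Gm, pr_lift, pr_lift]
  exact this

lemma play_upper (hq : ∀ x a, q x a ∈ Δf S) (hg : ∀ x a, g x a ∈ Icc (0:ℝ) 1)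
    {θ : ℕ → ℝ} (h : NS θ) {u : S →₀ ℝ} {m : ℕ → (S × A →₀ ℝ)} (hm : IsPlay q u m) (n : ℕ) :
    ∑ t ∈ Finset.range n, θ t * Gm g (m t) + pr (W q g (shn n θ)) (marg (m n)) ≤
      pr (W q g θ) u := by
  induction n with
  | zero => simp [hm.2.1, shn_zero]
  | succ n ih =>
    rw [Finset.sum_range_succ, hm.2.2]
    have := W_stepm hq hg (h.shn n) (hm.1 n)
    rw [shn_shn] at this
    have h2 : shn n θ 0 = θ n := by simp [shn]
    rw [h2] at this
    linarith

lemma summable_pay (hg : ∀ x a, g x a ∈ Icc (0:ℝ) 1)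
    {θ : ℕ → ℝ} (h : NS θ) {m : ℕ → (S × A →₀ ℝ)} (hm : ∀ t, m t ∈ Δf (S × A)) :
    Summable (fun t => θ t * Gm g (m t)) :=
  Summable.of_nonneg_of_le (fun t => mul_nonneg (h.1 t) (Gm_mem hg (hm t)).1)
    (fun t => mul_le_of_le_one_right (h.1 t) (Gm_mem hg (hm t)).2) h.2

lemma play_upper_tsum (hq : ∀ x a, q x a ∈ Δf S) (hg : ∀ x a, g x a ∈ Icc (0:ℝ) 1)
    {θ : ℕ → ℝ} (h : NS θ) {u : S →₀ ℝ} (hu : u ∈ Δf S)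
    {m : ℕ → (S × A →₀ ℝ)} (hm : IsPlay q u m) :
    ∑' t, θ t * Gm g (m t) ≤ pr (W q g θ) u := by
  refine le_of_tendsto' (summable_pay hg h (hm.mem hq hu)).hasSum.tendsto_sum_nat fun n => ?_
  have h1 := play_upper hq hg h hm n
  have h2 := pr_nonneg (marg_mem (hm.mem hq hu n)).1 (W_nonneg hq hg (h.shn n))
  linarith

/-- Constructing plays step by step, from a one-step choice depending on the past. -/
lemma exists_play {u : S →₀ ℝ}
    (P : ℕ → ((ℕ → (S × A →₀ ℝ)) → (S →₀ ℝ) → Prop))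
    (hP : ∀ t m m' v, (∀ s < t, m s = m' s) → P t m v → P t m' v)
    (h0 : ∀ m, P 0 m u)
    (hstep : ∀ t m v, P t m v → ∃ k : S × A →₀ ℝ, (∀ p, 0 ≤ k p) ∧ marg k = v ∧
      P (t + 1) (Function.update m t k) (Qm q k)) :
    ∃ m, IsPlay q u m ∧ ∀ t, P t m (marg (m t)) := by
  classical
  choose! K hK using hstep
  -- state: past sequence and current law
  let st : ℕ → (ℕ → (S × A →₀ ℝ)) × (S →₀ ℝ) := fun t =>
    Nat.rec (fun _ => 0, u)
      (fun t s => (Function.update s.1 t (K t s.1 s.2), Qm q (K t s.1 s.2))) t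
  have st0 : st 0 = (fun _ => 0, u) := rfl
  have sts : ∀ t, st (t + 1) = (Function.update (st t).1 t (K t (st t).1 (st t).2),
      Qm q (K t (st t).1 (st t).2)) := fun t => rfl
  have hPst : ∀ t, P t (st t).1 (st t).2 := by
    intro t
    induction t with
    | zero => exact h0 _
    | succ t ih => rw [sts]; exact (hK t _ _ ih).2.2
  let m : ℕ → (S × A →₀ ℝ) := fun t => K t (st t).1 (st t).2
  have hm : ∀ t s, s < t → (st t).1 s = m s := by
    intro t
    induction t with
    | zero => intro s hs; omega
    | succ t ih =>
      intro s hs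
      rw [sts]
      by_cases hst : s = t
      · subst hst; simp [m]
      · simp only [Function.update_of_ne hst]
        exact ih s (by omega)
  have hmarg : ∀ t, marg (m t) = (st t).2 := fun t => (hK t _ _ (hPst t)).2.1
  refine ⟨m, ⟨fun t => (hK t _ _ (hPst t)).1, by rw [hmarg, st0], fun t => by
    rw [hmarg, sts]⟩, fun t => ?_⟩
  rw [hmarg]
  exact hP t _ _ _ (hm t) (hPst t)

lemma tendsto_geom_err (η : ℝ) : ∀ n : ℕ, ∑ t ∈ Finset.range n, η / 2 / 2 ^ t =
    η * (1 - (1 / 2) ^ n) := by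
  intro n
  induction n with
  | zero => simp
  | succ n ih =>
    rw [Finset.sum_range_succ, ih, pow_succ]
    have : (1 / 2 : ℝ) ^ n = 1 / 2 ^ n := by rw [div_pow, one_pow]
    rw [this]; field_simp; ring

lemma geom_err_le {η : ℝ} (hη : 0 ≤ η) (n : ℕ) : ∑ t ∈ Finset.range n, η / 2 / 2 ^ t ≤ η := by
  rw [tendsto_geom_err]
  have : (0:ℝ) ≤ (1 / 2) ^ n := by positivity
  nlinarith

lemma sum_congr_lt (θ : ℕ → ℝ) {t : ℕ} {m m' : ℕ → (S × A →₀ ℝ)} (h : ∀ s < t, m s = m' s) :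
    ∑ s ∈ Finset.range t, θ s * Gm g (m s) = ∑ s ∈ Finset.range t, θ s * Gm g (m' s) :=
  Finset.sum_congr rfl fun s hs => by rw [h s (Finset.mem_range.1 hs)]

lemma sum_upd (θ : ℕ → ℝ) (t : ℕ) (m : ℕ → (S × A →₀ ℝ)) (k : S × A →₀ ℝ) :
    ∑ s ∈ Finset.range t, θ s * Gm g (Function.update m t k s) =
      ∑ s ∈ Finset.range t, θ s * Gm g (m s) :=
  sum_congr_lt θ fun s hs => Function.update_of_ne hs.ne _ _

lemma play_lower (hq : ∀ x a, q x a ∈ Δf S) (hg : ∀ x a, g x a ∈ Icc (0:ℝ) 1)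
    {θ : ℕ → ℝ} (h : NS θ) {u : S →₀ ℝ} (hu : u ∈ Δf S) {η : ℝ} (hη : 0 < η) :
    ∃ m, IsPlay q u m ∧ pr (W q g θ) u - η ≤ ∑' t, θ t * Gm g (m t) := by
  obtain ⟨m, hm, hPm⟩ := exists_play (q := q) (u := u)
    (fun n m v => v ∈ Δf S ∧ pr (W q g θ) u - ∑ t ∈ Finset.range n, η / 2 / 2 ^ t ≤
      ∑ t ∈ Finset.range n, θ t * Gm g (m t) + pr (W q g (shn n θ)) v)
    (by
      rintro t m m' v hmm ⟨h1, h2⟩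
      refine ⟨h1, ?_⟩
      rw [← sum_congr_lt θ hmm]
      exact h2)
    (fun m => ⟨hu, by simp [shn_zero]⟩)
    (by
      rintro t m v ⟨hv, h2⟩
      obtain ⟨k, hk0, hk1, hk2⟩ := W_selm hq hg (h.shn t) hv (η := η / 2 / 2 ^ t) (by positivity)
      have hkm : k ∈ Δf (S × A) := mem_of_marg hk0 (by rw [hk1]; exact hv)
      refine ⟨k, hk0, hk1, Qm_mem hq hkm, ?_⟩
      rw [Finset.sum_range_succ, Finset.sum_range_succ, Function.update_self, sum_upd]
      rw [shn_shn] at hk2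
      have h3 : shn t θ 0 = θ t := by simp [shn]
      rw [h3] at hk2
      linarith)
  refine ⟨m, hm, ?_⟩
  have hlim : Tendsto (fun n => ∑ t ∈ Finset.range n, θ t * Gm g (m t) + ∑' t, shn n θ t) atTop
      (𝓝 (∑' t, θ t * Gm g (m t) + 0)) :=
    (summable_pay hg h (hm.mem hq hu)).hasSum.tendsto_sum_nat.add h.tail
  rw [add_zero] at hlim
  refine ge_of_tendsto' hlim fun n => ?_
  have h1 := (hPm n).2
  have h2 := pr_mono (hPm n).1.1 (W_le hq hg (h.shn n))
  rw [pr_const (hPm n).1] at h2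
  linarith [geom_err_le hη.le n]

/-- Disintegration of a state-action law. -/
lemma disint {m : S × A →₀ ℝ} (hm : m ∈ Δf (S × A)) :
    ∃ a : S → (A →₀ ℝ), (∀ x, a x ∈ Δf A) ∧ ∀ F : S × A → ℝ,
      pr F m = pr (fun x => pr (fun b => F (x, b)) (a x)) (marg m) := by
  classical
  have hcur : ∀ F : S × A → ℝ, pr F m = m.curry.sum fun x f => pr (fun b => F (x, b)) f := by
    intro F
    simp only [pr_apply]
    rw [Finsupp.sum_curry_index m (fun x b c => c * F (x, b))]
  have hmarg : ∀ x, marg m x = pr (fun _ => 1) (m.curry x) := by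
    intro x
    have e1 : marg m x = pr (fun y => if y = x then 1 else 0) (marg m) := by
      simp only [pr_apply, Finsupp.sum, mul_ite, mul_one, mul_zero, Finset.sum_ite_eq',
        Finsupp.mem_support_iff]
      by_cases hx : marg m x = 0 <;> simp [hx]
    rw [e1, pr_marg, hcur, Finsupp.sum, Finset.sum_eq_single x]
    · simp
    · intro y _ hy
      simp [hy, pr_apply]
    · intro hx
      rw [Finsupp.notMem_support_iff.1 hx]; simp
  have hcn : ∀ x b, 0 ≤ m.curry x b := fun x b => by
    rw [Finsupp.curry_apply]; exact hm.1 _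
  have hmn : ∀ x, 0 ≤ marg m x := (marg_mem hm).1
  have hz : ∀ x, marg m x = 0 → m.curry x = 0 := by
    intro x hx
    rw [hmarg, pr_apply, Finsupp.sum,
      Finset.sum_eq_zero_iff_of_nonneg (fun b _ => by simpa using hcn x b)] at hx
    ext b
    by_contra hb
    have := hx b (Finsupp.mem_support_iff.2 hb)
    simp at this
    exact hb (by simpa using this)
  obtain ⟨b0⟩ := ‹Nonempty A›
  let a : S → (A →₀ ℝ) := fun x =>
    if marg m x = 0 then Finsupp.single b0 1 else (marg m x)⁻¹ • m.curry x
  have ha : ∀ x, marg m x • a x = m.curry x := by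
    intro x
    by_cases hx : marg m x = 0
    · rw [hx, hz x hx]; simp
    · simp only [a, if_neg hx, smul_smul, mul_inv_cancel₀ hx, one_smul]
  refine ⟨a, fun x => ?_, fun F => ?_⟩
  · by_cases hx : marg m x = 0
    · simp only [a, if_pos hx]; exact single_mem_Δf _
    · simp only [a, if_neg hx]
      rw [mem_Δf]
      refine ⟨fun b => mul_nonneg (inv_nonneg.2 (hmn x)) (hcn x b), ?_⟩
      rw [map_smul, ← hmarg, smul_eq_mul, inv_mul_cancel₀ hx]
  · rw [hcur, pr_apply, Finsupp.sum_of_support_subset (marg m) (s := m.curry.support)]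
    · rw [Finsupp.sum]
      refine Finset.sum_congr rfl fun x _ => ?_
      rw [← ha x, map_smul, smul_eq_mul]
    · intro x hx
      rw [Finsupp.mem_support_iff] at hx ⊢
      intro h0
      exact hx (by rw [hmarg, h0]; simp)
    · simp

lemma Qmix_eq (q : S → A → (S →₀ ℝ)) (u : S →₀ ℝ) (a : S → (A →₀ ℝ)) (f : S → ℝ) :
    pr f (Qmix q u a) = pr (fun x => pr (fun b => pr f (q x b)) (a x)) u := by
  simp only [Qmix, map_finsuppSum, map_smul, smul_eq_mul]
  simp only [pr_apply]

lemma Gmix_eq (g : S → A → ℝ) (u : S →₀ ℝ) (a : S → (A →₀ ℝ)) :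
    Gmix g u a = pr (fun x => pr (fun b => g x b) (a x)) u := by
  simp only [Gmix, pr_apply]

lemma disint_mix {m : S × A →₀ ℝ} (hm : m ∈ Δf (S × A)) (q : S → A → (S →₀ ℝ)) (g : S → A → ℝ) :
    ∃ a : S → (A →₀ ℝ), (∀ x, a x ∈ Δf A) ∧ Qmix q (marg m) a = Qm q m ∧
      Gmix g (marg m) a = Gm g m := by
  obtain ⟨a, ha, h⟩ := disint hm
  refine ⟨a, ha, ?_, ?_⟩
  · apply ext_pr; intro f; rw [Qmix_eq, pr_Qm, h]
  · rw [Gmix_eq, Gm, h]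

/-- From a profile to a state-action law. -/
noncomputable def mixm (u : S →₀ ℝ) (a : S → (A →₀ ℝ)) : S × A →₀ ℝ :=
  Finsupp.linearCombination ℝ (fun x => Finsupp.linearCombination ℝ
    (fun b => Finsupp.single (x, b) 1) (a x)) u

lemma pr_mixm (u : S →₀ ℝ) (a : S → (A →₀ ℝ)) (F : S × A → ℝ) :
    pr F (mixm u a) = pr (fun x => pr (fun b => F (x, b)) (a x)) u := by
  simp [mixm, pr_lc]

lemma mixm_mem {u : S →₀ ℝ} (hu : u ∈ Δf S) {a : S → (A →₀ ℝ)} (ha : ∀ x, a x ∈ Δf A) :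
    mixm u a ∈ Δf (S × A) :=
  lc_mem hu fun x => lc_mem (ha x) fun b => single_mem_Δf _

lemma marg_mixm (u : S →₀ ℝ) {a : S → (A →₀ ℝ)} (ha : ∀ x, a x ∈ Δf A) :
    marg (mixm u a) = u := by
  apply ext_pr; intro f
  rw [pr_marg, pr_mixm]
  simp only [pr_const (ha _)]

/-- State-action law at stage `t` induced by a strategy. -/
noncomputable def joint (q : S → A → (S →₀ ℝ)) (σ : List (S × A) → S → (A →₀ ℝ)) (x : S)
    (t : ℕ) : S × A →₀ ℝ :=
  Finsupp.linearCombination ℝ (fun hx => Finsupp.linearCombination ℝ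
    (fun b => Finsupp.single (hx.2, b) 1) (σ hx.1 hx.2)) (hist q σ x t)

lemma pr_joint (q : S → A → (S →₀ ℝ)) (σ : List (S × A) → S → (A →₀ ℝ)) (x : S) (t : ℕ)
    (F : S × A → ℝ) : pr F (joint q σ x t) =
      pr (fun hx => pr (fun b => F (hx.2, b)) (σ hx.1 hx.2)) (hist q σ x t) := by
  simp [joint, pr_lc]

lemma pr_hist_succ (q : S → A → (S →₀ ℝ)) (σ : List (S × A) → S → (A →₀ ℝ)) (x : S) (t : ℕ)
    (F : List (S × A) × S → ℝ) : pr F (hist q σ x (t + 1)) =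
      pr (fun hx => pr (fun b => pr (fun x' => F (hx.1 ++ [(hx.2, b)], x')) (q hx.2 b))
        (σ hx.1 hx.2)) (hist q σ x t) := by
  rw [hist]
  simp only [map_finsuppSum, pr_single]
  simp only [pr_apply, Finsupp.sum, Finset.mul_sum]
  refine Finset.sum_congr rfl fun _ _ => Finset.sum_congr rfl fun _ _ =>
    Finset.sum_congr rfl fun _ _ => by ring

lemma hist_mem (hq : ∀ x a, q x a ∈ Δf S) {σ : List (S × A) → S → (A →₀ ℝ)} (hσ : IsStrat σ)
    (x : S) (t : ℕ) : hist q σ x t ∈ Δf (List (S × A) × S) := by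
  induction t with
  | zero => exact single_mem_Δf _
  | succ t ih =>
    have : hist q σ x (t + 1) = Finsupp.linearCombination ℝ (fun hx =>
        Finsupp.linearCombination ℝ (fun b => Finsupp.linearCombination ℝ
          (fun x' => Finsupp.single (hx.1 ++ [(hx.2, b)], x') 1) (q hx.2 b))
        (σ hx.1 hx.2)) (hist q σ x t) := by
      apply ext_pr; intro f
      rw [pr_hist_succ]
      simp [pr_lc]
    rw [this]
    exact lc_mem ih fun hx => lc_mem (hσ _ _) fun b => lc_mem (hq _ _) fun x' => single_mem_Δf _

lemma stagePay_eq (q : S → A → (S →₀ ℝ)) (g : S → A → ℝ) (σ : List (S × A) → S → (A →₀ ℝ))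
    (x : S) (t : ℕ) : stagePay q g σ x t = Gm g (joint q σ x t) := by
  rw [Gm, pr_joint]
  simp only [stagePay, pr_apply, Finsupp.sum, Finset.mul_sum]
  refine Finset.sum_congr rfl fun _ _ => Finset.sum_congr rfl fun _ _ => by ring

lemma joint_play (hq : ∀ x a, q x a ∈ Δf S) {σ : List (S × A) → S → (A →₀ ℝ)} (hσ : IsStrat σ)
    (x : S) : IsPlay q (Finsupp.single x 1) (joint q σ x) := by
  refine ⟨fun t => ?_, ?_, fun t => ?_⟩
  · exact (lc_mem (hist_mem hq hσ x t) fun hx => lc_mem (hσ _ _) fun b => single_mem_Δf _).1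
  · apply ext_pr; intro f
    rw [pr_marg, pr_joint]
    simp only [pr_const (hσ _ _), hist, pr_single]
  · apply ext_pr; intro f
    rw [pr_marg, pr_joint, pr_Qm, pr_joint]
    simp only [pr_const (hσ _ _)]
    rw [pr_hist_succ]

lemma pr_congr_supp {f f' : S → ℝ} {u : S →₀ ℝ} (h : ∀ x, u x ≠ 0 → f x = f' x) :
    pr f u = pr f' u := by
  rw [pr_apply, pr_apply]
  exact Finset.sum_congr rfl fun x hx => by
    simp only []
    rw [h x (Finsupp.mem_support_iff.1 hx)]

lemma hist_len (hq : ∀ x a, q x a ∈ Δf S) {σ : List (S × A) → S → (A →₀ ℝ)} (hσ : IsStrat σ)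
    (x : S) (t : ℕ) (F : List (S × A) × S → ℝ) (hF : ∀ hx, hx.1.length = t → F hx = 0) :
    pr F (hist q σ x t) = 0 := by
  induction t generalizing F with
  | zero => simp [hist, hF]
  | succ t ih =>
    rw [pr_hist_succ]
    apply ih
    intro hx hl
    have : ∀ b x', F (hx.1 ++ [(hx.2, b)], x') = 0 := fun b x' => hF _ (by simp [hl])
    simp [this, pr_apply]

lemma play_strat (hq : ∀ x a, q x a ∈ Δf S) {x : S} {m : ℕ → (S × A →₀ ℝ)}
    (hm : IsPlay q (Finsupp.single x 1) m) :
    ∃ σ, IsStrat σ ∧ ∀ t, joint q σ x t = m t := by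
  choose a ha hF using fun t => disint (hm.mem hq (single_mem_Δf x) t)
  have hσ : IsStrat (fun (h : List (S × A)) x => a h.length x) := fun h x => ha _ _
  refine ⟨_, hσ, ?_⟩
  have key : ∀ t, marg (joint q (fun (h : List (S × A)) x => a h.length x) x t) = marg (m t) →
      joint q (fun (h : List (S × A)) x => a h.length x) x t = m t := by
    intro t ht
    apply ext_pr; intro F
    rw [hF t F, ← ht, pr_marg, pr_joint, pr_joint]
    simp only [pr_const (ha _ _)]
    rw [← sub_eq_zero, ← pr_sub]
    apply hist_len hq hσ
    intro hx hl
    simp [hl]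
  intro t
  induction t with
  | zero => exact key 0 (by rw [(joint_play hq hσ x).2.1, hm.2.1])
  | succ t ih => exact key _ (by rw [(joint_play hq hσ x).2.2, hm.2.2, ih])

lemma IsEval.ns {θ : ℕ → ℝ} (h : IsEval θ) : NS θ := by
  refine ⟨h.1, ?_⟩
  by_contra hs
  have := h.2
  rw [tsum_eq_zero_of_not_summable hs] at this
  norm_num at this

lemma payoff_eq (q : S → A → (S →₀ ℝ)) (g : S → A → ℝ) (θ : ℕ → ℝ)
    (σ : List (S × A) → S → (A →₀ ℝ)) (x : S) :
    payoff q g θ σ x = ∑' t, θ t * Gm g (joint q σ x t) := by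
  simp only [payoff, stagePay_eq]

lemma value_eq (hq : ∀ x a, q x a ∈ Δf S) (hg : ∀ x a, g x a ∈ Icc (0:ℝ) 1)
    {θ : ℕ → ℝ} (h : NS θ) (x : S) : value q g θ x = W q g θ x := by
  have hub : ∀ c ∈ {c : ℝ | ∃ σ, IsStrat σ ∧ c = payoff q g θ σ x}, c ≤ W q g θ x := by
    rintro c ⟨σ, hσ, rfl⟩
    rw [payoff_eq]
    have := play_upper_tsum hq hg h (single_mem_Δf x) (joint_play hq hσ x)
    simpa using this
  have hlow : ∀ η > 0, ∃ c ∈ {c : ℝ | ∃ σ, IsStrat σ ∧ c = payoff q g θ σ x},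
      W q g θ x - η ≤ c := by
    intro η hη
    obtain ⟨m, hm, hle⟩ := play_lower hq hg h (single_mem_Δf x) hη
    obtain ⟨σ, hσ, hj⟩ := play_strat hq hm
    refine ⟨_, ⟨σ, hσ, rfl⟩, ?_⟩
    rw [payoff_eq]
    simp only [hj]
    simpa using hle
  rw [value]
  apply le_antisymm
  · obtain ⟨c, hc, _⟩ := hlow 1 one_pos
    exact csSup_le ⟨c, hc⟩ hub
  · apply le_of_forall_pos_le_add
    intro η hη
    obtain ⟨c, hc, hle⟩ := hlow η hη
    have := le_csSup ⟨_, hub⟩ hc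
    linarith

end plays

end Stmt16b


namespace Stmt16b

open Stmt16 Filter Topology Set MeasureTheory
open scoped BoundedContinuousFunction

/-- A finite dimensional minimax statement. -/
lemma fin_minimax {ι : Type*} [Fintype ι] {C : Set (ι → ℝ)} (hC : Convex ℝ C) (hne : C.Nonempty)
    {b : ℝ} (h : ∀ l : ι → ℝ, (∀ i, 0 ≤ l i) → ∑ i, l i = 1 → ∃ c ∈ C, b < ∑ i, l i * c i) :
    ∃ c ∈ C, ∀ i, b < c i := by
  classical
  by_contra! hcon
  let O : Set (ι → ℝ) := {z | ∀ i, b < z i}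
  have hOc : Convex ℝ O := by
    intro z hz z' hz' s t hs ht hst i
    have h1 := hz i
    have h2 := hz' i
    simp only [Pi.add_apply, Pi.smul_apply, smul_eq_mul]
    have : s * b + t * b = b := by rw [← add_mul, hst, one_mul]
    rcases hs.eq_or_lt with h0 | h0
    · have ht1 : t = 1 := by linarith
      subst ht1; rw [← h0]; linarith
    · have := mul_lt_mul_of_pos_left h1 h0
      have := mul_le_mul_of_nonneg_left h2.le ht
      linarith
  have hOo : IsOpen O := by
    have : O = ⋂ i, {z : ι → ℝ | b < z i} := by ext z; simp [O]
    rw [this]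
    exact isOpen_iInter_of_finite fun i => isOpen_lt continuous_const (continuous_apply i)
  have hd : Disjoint O C := by
    rw [Set.disjoint_left]
    intro z hz hzC
    obtain ⟨i, hi⟩ := hcon z hzC
    exact absurd (hz i) (not_lt.2 hi)
  obtain ⟨f, s, hf1, hf2⟩ := geometric_hahn_banach_open hOc hOo hC hd
  let l : ι → ℝ := fun i => - f (Pi.single i 1)
  have hfz : ∀ z, f z = - ∑ i, l i * z i := by
    intro z
    have hz : z = ∑ i, z i • (Pi.single i (1:ℝ) : ι → ℝ) := by
      ext j
      simp [Finset.sum_apply, Pi.single_apply]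
    conv_lhs => rw [hz]
    rw [map_sum]
    simp only [map_smul, smul_eq_mul, l, neg_mul, Finset.sum_neg_distrib, neg_neg]
    exact Finset.sum_congr rfl fun i _ => mul_comm _ _
  have hconst : ∀ r > b, - (r * ∑ i, l i) < s := by
    intro r hr
    have := hf1 (fun _ => r) (fun _ => hr)
    rw [hfz, ← Finset.sum_mul] at this
    linarith [mul_comm r (∑ i, l i)]
  have hl : ∀ i, 0 ≤ l i := by
    intro i
    by_contra! hi
    have key : ∀ k : ℝ, 0 ≤ k → - ((b + 1) * ∑ j, l j) - k * l i < s := by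
      intro k hk
      have := hf1 (fun j => (b + 1) + if j = i then k else 0) (fun j => by
        simp only []; split_ifs <;> linarith)
      rw [hfz] at this
      simp only [mul_add, mul_ite, mul_zero, Finset.sum_add_distrib, Finset.sum_ite_eq',
        Finset.mem_univ, if_true] at this
      rw [← Finset.sum_add_distrib] at this
      have e : ∑ j, (l j * b + l j * 1) = (b + 1) * ∑ j, l j := by
        rw [Finset.mul_sum]; exact Finset.sum_congr rfl fun j _ => by ring
      rw [e] at this
      linarith [mul_comm k (l i)]
    have k1 := key 0 le_rfl
    have h1 := key ((s + ((b + 1) * ∑ j, l j)) / (- l i)) (by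
      apply div_nonneg <;> linarith)
    have e : (s + ((b + 1) * ∑ j, l j)) / (- l i) * l i = - (s + ((b + 1) * ∑ j, l j)) := by
      have : l i ≠ 0 := hi.ne
      field_simp
    rw [e] at h1
    linarith
  have hbs : - (b * ∑ i, l i) ≤ s := by
    have hlim : Tendsto (fun r : ℝ => - (r * ∑ i, l i)) (𝓝[>] b) (𝓝 (- (b * ∑ i, l i))) := by
      apply Tendsto.mono_left _ nhdsWithin_le_nhds
      exact (Continuous.tendsto (by fun_prop) b)
    refine le_of_tendsto hlim ?_
    filter_upwards [self_mem_nhdsWithin] with r hr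
    exact (hconst r hr).le
  have hL0 : 0 ≤ ∑ i, l i := Finset.sum_nonneg fun i _ => hl i
  rcases hL0.eq_or_lt with h0 | h0
  · have hz : ∀ i, l i = 0 := fun i =>
      (Finset.sum_eq_zero_iff_of_nonneg fun i _ => hl i).1 h0.symm i (Finset.mem_univ i)
    obtain ⟨c, hc⟩ := hne
    have h1 := hf2 c hc
    have h2 := hconst (b + 1) (by linarith)
    rw [hfz] at h1
    simp only [hz, zero_mul, Finset.sum_const_zero, mul_zero, neg_zero] at h1 h2
    linarith
  · obtain ⟨c, hc, hlt⟩ := h (fun i => l i / ∑ j, l j) (fun i => div_nonneg (hl i) hL0)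
      (by rw [← Finset.sum_div]; exact div_self h0.ne')
    have h1 := hf2 c hc
    rw [hfz] at h1
    have e : ∑ i, l i / (∑ j, l j) * c i = (∑ i, l i * c i) / ∑ j, l j := by
      rw [Finset.sum_div]; exact Finset.sum_congr rfl fun i _ => by ring
    rw [e, lt_div_iff₀ h0] at hlt
    linarith

section unif

variable {S : Type*} {A : Type*} [Nonempty A] {q : S → A → (S →₀ ℝ)} {g : S → A → ℝ}
variable [TopologicalSpace S]

lemma net (hq : ∀ x a, q x a ∈ Δf S) (hg : ∀ x a, g x a ∈ Icc (0:ℝ) 1)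
    {𝒦 : Set (S →ᵇ ℝ)} (hK : IsCompact 𝒦)
    (hKW : ∀ θ, NS θ → ∑' t, θ t ≤ 1 → ∃ F ∈ 𝒦, ⇑F = W q g θ)
    {𝒯 : Set (ℕ → ℝ)} (hT : ∀ θ ∈ 𝒯, NS θ ∧ ∑' t, θ t ≤ 1)
    (t : ℕ) (y : ℕ → ℝ) (hy : ∀ s < t, y s ∈ Icc (0:ℝ) 1) {η : ℝ} (hη : 0 < η) :
    ∃ T : Set (ℕ → ℝ), T ⊆ 𝒯 ∧ T.Finite ∧ ∀ θ ∈ 𝒯, ∃ θ' ∈ T,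
      |∑ s ∈ Finset.range t, θ s * y s - ∑ s ∈ Finset.range t, θ' s * y s| ≤ η ∧
      |θ t - θ' t| ≤ η ∧
      ∀ x, |W q g (shn (t + 1) θ) x - W q g (shn (t + 1) θ') x| ≤ η := by
  classical
  have hsh : ∀ θ ∈ 𝒯, ∃ F ∈ 𝒦, ⇑F = W q g (shn (t + 1) θ) := by
    intro θ hθ
    obtain ⟨h1, h2⟩ := hT θ hθ
    refine hKW _ (h1.shn _) ?_
    have := h1.2.sum_add_tsum_nat_add (t + 1)
    have h3 : 0 ≤ ∑ i ∈ Finset.range (t + 1), θ i := Finset.sum_nonneg fun i _ => h1.1 i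
    simp only [shn]
    linarith
  choose! F hF1 hF2 using hsh
  let Φ : (ℕ → ℝ) → ℝ × ℝ × (S →ᵇ ℝ) := fun θ =>
    (∑ s ∈ Finset.range t, θ s * y s, θ t, F θ)
  have hsub : Φ '' 𝒯 ⊆ Icc (0:ℝ) 1 ×ˢ (Icc (0:ℝ) 1 ×ˢ 𝒦) := by
    rintro _ ⟨θ, hθ, rfl⟩
    obtain ⟨h1, h2⟩ := hT θ hθ
    refine ⟨⟨?_, ?_⟩, ⟨h1.1 t, ?_⟩, hF1 θ hθ⟩
    · exact Finset.sum_nonneg fun s hs => mul_nonneg (h1.1 s) (hy s (Finset.mem_range.1 hs)).1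
    · have : ∑ s ∈ Finset.range t, θ s * y s ≤ ∑ s ∈ Finset.range t, θ s :=
        Finset.sum_le_sum fun s hs =>
          mul_le_of_le_one_right (h1.1 s) (hy s (Finset.mem_range.1 hs)).2
      exact this.trans ((h1.sum_le t).trans h2)
    · exact (h1.2.le_tsum t fun j _ => h1.1 j).trans h2
  have htb : TotallyBounded (Φ '' 𝒯) :=
    ((isCompact_Icc.prod (isCompact_Icc.prod hK)).totallyBounded).subset hsub
  obtain ⟨T', hT'1, hT'2, hT'3⟩ := Metric.finite_approx_of_totallyBounded htb η hη
  obtain ⟨T, hTs, hTf, hTe⟩ := Set.exists_subset_image_finite_and.1 ⟨T', hT'1, hT'2, rfl⟩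
  refine ⟨T, hTs, hTf, fun θ hθ => ?_⟩
  have := hT'3 (mem_image_of_mem Φ hθ)
  simp only [mem_iUnion, exists_prop] at this
  obtain ⟨z, hz, hd⟩ := this
  rw [hTe] at hz
  obtain ⟨θ', hθ', rfl⟩ := hz
  rw [Metric.mem_ball, Prod.dist_eq, max_lt_iff, Prod.dist_eq, max_lt_iff] at hd
  refine ⟨θ', hθ', hd.1.le, hd.2.1.le, fun x => ?_⟩
  rw [← hF2 θ hθ, ← hF2 θ' (hTs hθ')]
  exact (BoundedContinuousFunction.dist_coe_le_dist x).trans hd.2.2.le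

lemma one_step (hq : ∀ x a, q x a ∈ Δf S) (hg : ∀ x a, g x a ∈ Icc (0:ℝ) 1)
    {𝒦 : Set (S →ᵇ ℝ)} (hK : IsCompact 𝒦)
    (hKW : ∀ θ, NS θ → ∑' t, θ t ≤ 1 → ∃ F ∈ 𝒦, ⇑F = W q g θ)
    {𝒯 : Set (ℕ → ℝ)} (hTc : Convex ℝ 𝒯) (hT : ∀ θ ∈ 𝒯, NS θ ∧ ∑' t, θ t ≤ 1)
    (t : ℕ) (y : ℕ → ℝ) (hy : ∀ s < t, y s ∈ Icc (0:ℝ) 1) {v : S →₀ ℝ} (hv : v ∈ Δf S) {b : ℝ}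
    (H : ∀ θ ∈ 𝒯, b ≤ ∑ s ∈ Finset.range t, θ s * y s + pr (W q g (shn t θ)) v)
    {η : ℝ} (hη : 0 < η) :
    ∃ k : S × A →₀ ℝ, (∀ p, 0 ≤ k p) ∧ marg k = v ∧ ∀ θ ∈ 𝒯, b - η ≤
      ∑ s ∈ Finset.range t, θ s * y s + θ t * Gm g k + pr (W q g (shn (t + 1) θ)) (Qm q k) := by
  obtain ⟨T, hTs, hTf, hnet⟩ := net hq hg hK hKW hT t y hy (η := η / 6) (by positivity)
  have : Fintype T := hTf.fintype
  let L : (S × A →₀ ℝ) → T → ℝ := fun k i =>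
    ∑ s ∈ Finset.range t, i.1 s * y s + i.1 t * Gm g k + pr (W q g (shn (t + 1) i.1)) (Qm q k)
  let C : Set (T → ℝ) := L '' {k | (∀ p, 0 ≤ k p) ∧ marg k = v}
  have hC : Convex ℝ C := by
    rintro _ ⟨k, hk, rfl⟩ _ ⟨k', hk', rfl⟩ c d hc hd hcd
    refine ⟨c • k + d • k', ⟨fun p => ?_, ?_⟩, ?_⟩
    · exact add_nonneg (mul_nonneg hc (hk.1 p)) (mul_nonneg hd (hk'.1 p))
    · rw [map_add, map_smul, map_smul, hk.2, hk'.2, ← add_smul, hcd, one_smul]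
    · funext i
      simp only [L, map_add, map_smul, smul_eq_mul, Pi.add_apply, Pi.smul_apply]
      linear_combination (-(∑ s ∈ Finset.range t, i.1 s * y s)) * hcd
  have hne : C.Nonempty := by
    obtain ⟨a⟩ := ‹Nonempty A›
    exact ⟨_, lift (fun _ => a) v, ⟨lift_nonneg hv.1, marg_lift _ _⟩, rfl⟩
  obtain ⟨c, ⟨k, hk, rfl⟩, hlt⟩ := fin_minimax hC hne (b := b - η / 2) (by
    intro l hl hl1
    have hmem : (fun s => ∑ i, l i * i.1 s) ∈ 𝒯 := by
      have := hTc.sum_mem (t := Finset.univ) (fun i _ => hl i) hl1 (z := fun i : T => i.1)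
        (fun i _ => hTs i.2)
      convert this using 1
      funext s
      simp [Finset.sum_apply]
    have hns := (hT _ hmem).1
    obtain ⟨k, hk0, hk1, hk2⟩ := W_selm hq hg (hns.shn t) hv (η := η / 4) (by positivity)
    refine ⟨L k, ⟨k, ⟨hk0, hk1⟩, rfl⟩, ?_⟩
    have hkm : k ∈ Δf (S × A) := mem_of_marg hk0 (by rw [hk1]; exact hv)
    have h1 := H _ hmem
    rw [shn_shn] at hk2
    have h3 : shn t (fun s => ∑ i, l i * i.1 s) 0 = ∑ i, l i * i.1 t := by simp [shn]
    rw [h3] at hk2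
    have h4 : pr (W q g (shn (t + 1) (fun s => ∑ i, l i * i.1 s))) (Qm q k) ≤
        ∑ i, l i * pr (W q g (shn (t + 1) i.1)) (Qm q k) := by
      have := pr_mono (Qm_mem hq hkm).1 (W_sum hq hg Finset.univ hl
        (Θ := fun i : T => shn (t + 1) i.1) (fun i => (hT _ (hTs i.2)).1.shn _))
      refine this.trans (le_of_eq ?_)
      simp only [pr_apply, Finsupp.sum, Finset.mul_sum]
      rw [Finset.sum_comm]
      exact Finset.sum_congr rfl fun _ _ => Finset.sum_congr rfl fun _ _ => by ring
    have h5 : ∑ s ∈ Finset.range t, (∑ i, l i * i.1 s) * y s =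
        ∑ i, l i * ∑ s ∈ Finset.range t, i.1 s * y s := by
      simp only [Finset.sum_mul, Finset.mul_sum]
      rw [Finset.sum_comm]
      exact Finset.sum_congr rfl fun _ _ => Finset.sum_congr rfl fun _ _ => by ring
    have h6 : ∑ i, l i * L k i = ∑ i, l i * (∑ s ∈ Finset.range t, i.1 s * y s) +
        (∑ i, l i * i.1 t) * Gm g k + ∑ i, l i * pr (W q g (shn (t + 1) i.1)) (Qm q k) := by
      rw [Finset.sum_mul, ← Finset.sum_add_distrib, ← Finset.sum_add_distrib]
      exact Finset.sum_congr rfl fun _ _ => by simp only [L]; ring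
    rw [h6]
    rw [h5] at h1
    linarith)
  refine ⟨k, hk.1, hk.2, fun θ hθ => ?_⟩
  have hkm : k ∈ Δf (S × A) := mem_of_marg hk.1 (by rw [hk.2]; exact hv)
  obtain ⟨θ', hθ', n1, n2, n3⟩ := hnet θ hθ
  have h1 := hlt ⟨θ', hθ'⟩
  simp only [L] at h1
  have h2 := pr_mono (Qm_mem hq hkm).1 (fun x => (abs_le.1 (n3 x)).1)
  rw [pr_const (Qm_mem hq hkm), pr_sub] at h2
  have h3 : θ' t * Gm g k - η / 6 ≤ θ t * Gm g k := by
    have hG := Gm_mem hg hkm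
    have := (abs_le.1 n2).1
    nlinarith [hG.1, hG.2]
  have h4 := (abs_le.1 n1).1
  linarith

lemma unif_play (hq : ∀ x a, q x a ∈ Δf S) (hg : ∀ x a, g x a ∈ Icc (0:ℝ) 1)
    {𝒦 : Set (S →ᵇ ℝ)} (hK : IsCompact 𝒦)
    (hKW : ∀ θ, NS θ → ∑' t, θ t ≤ 1 → ∃ F ∈ 𝒦, ⇑F = W q g θ)
    {𝒯 : Set (ℕ → ℝ)} (hTc : Convex ℝ 𝒯) (hT : ∀ θ ∈ 𝒯, NS θ ∧ ∑' t, θ t ≤ 1)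
    {u : S →₀ ℝ} (hu : u ∈ Δf S) {b : ℝ} (H : ∀ θ ∈ 𝒯, b ≤ pr (W q g θ) u)
    {η : ℝ} (hη : 0 < η) :
    ∃ m, IsPlay q u m ∧ ∀ θ ∈ 𝒯, b - η ≤ ∑' t, θ t * Gm g (m t) := by
  obtain ⟨m, hm, hPm⟩ := exists_play (q := q) (u := u)
    (fun n m v => v ∈ Δf S ∧ (∀ s < n, m s ∈ Δf (S × A)) ∧ ∀ θ ∈ 𝒯,
      b - ∑ t ∈ Finset.range n, η / 2 / 2 ^ t ≤
      ∑ t ∈ Finset.range n, θ t * Gm g (m t) + pr (W q g (shn n θ)) v)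
    (by
      rintro t m m' v hmm ⟨h1, h1', h2⟩
      refine ⟨h1, fun s hs => by rw [← hmm s hs]; exact h1' s hs, fun θ hθ => ?_⟩
      rw [← sum_congr_lt θ hmm]
      exact h2 θ hθ)
    (fun m => ⟨hu, fun s hs => by omega, fun θ hθ => by simpa [shn_zero] using H θ hθ⟩)
    (by
      rintro t m v ⟨hv, hms, h2⟩
      obtain ⟨k, hk0, hk1, hk2⟩ := one_step hq hg hK hKW hTc hT t (fun s => Gm g (m s))
        (fun s hs => Gm_mem hg (hms s hs)) hv h2 (η := η / 2 / 2 ^ t) (by positivity)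
      have hkm : k ∈ Δf (S × A) := mem_of_marg hk0 (by rw [hk1]; exact hv)
      refine ⟨k, hk0, hk1, Qm_mem hq hkm, fun s hs => ?_, fun θ hθ => ?_⟩
      · by_cases hst : s = t
        · subst hst; simpa using hkm
        · rw [Function.update_of_ne hst]; exact hms s (by omega)
      · rw [Finset.sum_range_succ, Finset.sum_range_succ, Function.update_self, sum_upd]
        have := hk2 θ hθ
        linarith)
  refine ⟨m, hm, fun θ hθ => ?_⟩
  have h := (hT θ hθ).1
  have hlim : Tendsto (fun n => ∑ t ∈ Finset.range n, θ t * Gm g (m t) + ∑' t, shn n θ t) atTop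
      (𝓝 (∑' t, θ t * Gm g (m t) + 0)) :=
    (summable_pay hg h (hm.mem hq hu)).hasSum.tendsto_sum_nat.add h.tail
  rw [add_zero] at hlim
  refine ge_of_tendsto' hlim fun n => ?_
  have h1 := (hPm n).2.2 θ hθ
  have h2 := pr_mono (hPm n).1.1 (W_le hq hg (h.shn n))
  rw [pr_const (hPm n).1] at h2
  linarith [geom_err_le hη.le n]

end unif

end Stmt16b


namespace Stmt16b

open Stmt16 Filter Topology Set MeasureTheory
open scoped BoundedContinuousFunction NNReal

section ext
variable {K : Type*} [Fintype K]

/-- The `ℓ¹` norm. -/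
def L1 (p : K → ℝ) : ℝ := ∑ k, |p k|

lemma L1_nonneg (p : K → ℝ) : 0 ≤ L1 p := Finset.sum_nonneg fun _ _ => abs_nonneg _

lemma L1_add (p r : K → ℝ) : L1 (p + r) ≤ L1 p + L1 r := by
  rw [L1, L1, L1, ← Finset.sum_add_distrib]
  exact Finset.sum_le_sum fun k _ => abs_add_le _ _

lemma L1_smul {c : ℝ} (hc : 0 ≤ c) (p : K → ℝ) : L1 (c • p) = c * L1 p := by
  rw [L1, L1, Finset.mul_sum]
  exact Finset.sum_congr rfl fun k _ => by
    rw [Pi.smul_apply, smul_eq_mul, abs_mul, abs_of_nonneg hc]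

lemma L1_neg (p : K → ℝ) : L1 (-p) = L1 p := by simp [L1]

/-- The homogeneous `ℓ¹` distance on `X`. -/
def NN (X : Set (K → ℝ)) (α : ℝ) (x : X) (β : ℝ) (y : X) : ℝ :=
  ∑ k, |α * (x : K → ℝ) k - β * (y : K → ℝ) k|

lemma NN_eq {X : Set (K → ℝ)} (α : ℝ) (x : X) (β : ℝ) (y : X) :
    NN X α x β y = L1 (α • (x : K → ℝ) - β • (y : K → ℝ)) := rfl

lemma ext_D1 {X : Set (K → ℝ)} [Nonempty X] {f : X → ℝ}
    (hf : PD (NN X) 1 f) : ∃ F ∈ D1 K, ∀ x : X, F x = f x := by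
  have hlow : ∀ (p : K → ℝ) (z : X × ℝ≥0),
      - L1 p ≤ z.2 * f z.1 + L1 (p - (z.2 : ℝ) • (z.1 : K → ℝ)) := by
    rintro p ⟨z, s⟩
    have h1 := hf z z s 0 s.2 le_rfl
    rw [NN_eq, zero_smul, sub_zero, zero_mul, sub_zero, one_mul] at h1
    have h2 := L1_add p (-(p - (s : ℝ) • (z : K → ℝ)))
    rw [L1_neg, show p + -(p - (s : ℝ) • (z : K → ℝ)) = (s : ℝ) • (z : K → ℝ) by abel] at h2
    have h3 := (abs_le.1 h1).1
    simp only
    linarith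
  have hbdd : ∀ p : K → ℝ, BddBelow (range fun z : X × ℝ≥0 =>
      z.2 * f z.1 + L1 (p - (z.2 : ℝ) • (z.1 : K → ℝ))) := fun p =>
    ⟨- L1 p, by rintro _ ⟨z, rfl⟩; exact hlow p z⟩
  let F : (K → ℝ) → ℝ := fun p => ⨅ z : X × ℝ≥0, (z.2 * f z.1 + L1 (p - (z.2 : ℝ) • (z.1 : K → ℝ)))
  have hFle : ∀ (p : K → ℝ) (z : X) (s : ℝ), 0 ≤ s →
      F p ≤ s * f z + L1 (p - s • (z : K → ℝ)) := fun p z s hs =>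
    ciInf_le (hbdd p) (z, ⟨s, hs⟩)
  have hFge : ∀ p, - L1 p ≤ F p := fun p => le_ciInf (hlow p)
  have hD : ∀ x y : K → ℝ, ∀ a b : ℝ, 0 ≤ a → 0 ≤ b →
      a * F x - b * F y ≤ ∑ k, |a * x k - b * y k| := by
    intro x y a b ha hb
    change _ ≤ L1 (a • x - b • y)
    rcases ha.eq_or_lt with rfl | ha
    · rw [zero_smul, zero_sub, L1_neg, L1_smul hb]
      nlinarith [hFge y]
    · have : a * F x - L1 (a • x - b • y) ≤ b * F y := by
        simp only [F]
        rw [Real.mul_iInf_of_nonneg hb]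
        refine le_ciInf fun z => ?_
        obtain ⟨z, s, hs⟩ := z
        have h1 := hFle x z (b * s / a) (by positivity)
        have h2 : a * L1 (x - (b * s / a) • (z : K → ℝ)) = L1 (a • x - (b * s) • (z : K → ℝ)) := by
          rw [← L1_smul ha.le, smul_sub, smul_smul, mul_div_cancel₀ _ ha.ne']
        have h3 := L1_add (a • x - b • y) (b • (y - s • (z : K → ℝ)))
        rw [L1_smul hb, show a • x - b • y + b • (y - s • (z : K → ℝ)) =
          a • x - (b * s) • (z : K → ℝ) by rw [smul_sub, smul_smul]; abel] at h3
        have h4 := mul_le_mul_of_nonneg_left h1 ha.le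
        rw [mul_add, h2, ← mul_assoc, mul_div_cancel₀ _ ha.ne'] at h4
        change _ ≤ b * (s * f z + L1 (y - s • (z : K → ℝ)))
        have h5 : a * F x = a * ⨅ z : X × ℝ≥0,
          (z.2 * f z.1 + L1 (x - (z.2 : ℝ) • (z.1 : K → ℝ))) := rfl
        rw [← h5]
        linarith
      linarith
  refine ⟨F, ⟨?_, fun x _ y _ a b ha hb => hD x y a b ha hb⟩, fun x => le_antisymm ?_ ?_⟩
  · refine Continuous.continuousOn (continuous_iff_continuousAt.2 fun x => ?_)
    have hlip : ∀ y, |F y - F x| ≤ ∑ k, |y k - x k| := by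
      intro y
      have h1 := hD y x 1 1 zero_le_one zero_le_one
      have h2 := hD x y 1 1 zero_le_one zero_le_one
      simp only [one_mul] at h1 h2
      rw [abs_le]
      have : ∑ k, |x k - y k| = ∑ k, |y k - x k| :=
        Finset.sum_congr rfl fun k _ => abs_sub_comm _ _
      constructor <;> linarith
    refine tendsto_iff_dist_tendsto_zero.2 (squeeze_zero (fun _ => dist_nonneg) hlip ?_)
    have hc : Continuous fun y : K → ℝ => ∑ k, |y k - x k| := by fun_prop
    have := hc.tendsto x
    simpa using this
  · have := hFle x x 1 zero_le_one
    simpa [L1] using this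
  · refine le_ciInf fun z => ?_
    have h1 := (abs_le.1 (hf x z.1 1 z.2 zero_le_one z.2.2)).2
    rw [NN_eq, one_smul] at h1
    linarith

variable {A : Type*} {X : Set (K → ℝ)} {q : X → A → (X →₀ ℝ)} {g : X → A → ℝ}

lemma hNq_of (hlip : ∀ (x y : X) (a : A), ∀ f ∈ D1 K, ∀ α β : ℝ, 0 ≤ α → 0 ≤ β →
      |α * fExt f (q x a) - β * fExt f (q y a)| ≤
        ∑ k, |α * (x : K → ℝ) k - β * (y : K → ℝ) k|) (c : ℝ) (f : X → ℝ) (hc : 0 ≤ c)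
    (hf : PD (NN X) c f) (a : A) : PD (NN X) c (fun x => pr f (q x a)) := by
  intro x y α β hα hβ
  have : Nonempty X := ⟨x⟩
  rcases hc.eq_or_lt with rfl | hc
  · have h0 : f = fun _ => 0 := by
      funext z
      have := hf z z 1 0 zero_le_one le_rfl
      simpa using this
    have h1 : ∀ u : X →₀ ℝ, pr f u = 0 := fun u => by rw [h0]; simp [pr_apply]
    simp [h1]
  · obtain ⟨F, hF, hFf⟩ := ext_D1 (f := fun x => c⁻¹ * f x) (by
      intro x y α β hα hβ
      have := hf x y α β hα hβ
      rw [show α * (c⁻¹ * f x) - β * (c⁻¹ * f y) = c⁻¹ * (α * f x - β * f y) by ring, abs_mul,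
        abs_of_pos (inv_pos.2 hc), one_mul, inv_mul_le_iff₀ hc]
      exact this)
    have hE : ∀ u : X →₀ ℝ, fExt F u = c⁻¹ * pr f u := by
      intro u
      rw [← pr_smul, pr_apply, fExt]
      simp only [hFf]
    have := hlip x y a F hF α β hα hβ
    rw [hE, hE, show ∀ r s : ℝ, α * (c⁻¹ * r) - β * (c⁻¹ * s) = c⁻¹ * (α * r - β * s) by
      intros; ring, abs_mul, abs_of_pos (inv_pos.2 hc), inv_mul_le_iff₀ hc] at this
    exact this

/-- The compact set of functions containing all values. -/
def KK (X : Set (K → ℝ)) : Set (X →ᵇ ℝ) :=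
  {F | (∀ x, F x ∈ Icc (0:ℝ) 1) ∧ ∀ x y : X, |F x - F y| ≤ ∑ k, |(x : K → ℝ) k - (y : K → ℝ) k|}

lemma KK_compact [CompactSpace X] : IsCompact (KK X) := by
  refine BoundedContinuousFunction.arzela_ascoli₂ (Icc (0:ℝ) 1) isCompact_Icc _ ?_
    (fun f x hf => hf.1 x) ?_
  · have hev : ∀ x : X, Continuous fun F : X →ᵇ ℝ => F x := fun x =>
      continuous_eval_const x
    simp only [KK, Set.ofPred_and, Set.ofPred_forall]
    refine IsClosed.inter (isClosed_iInter fun x => isClosed_Icc.preimage (hev x))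
      (isClosed_iInter fun x => isClosed_iInter fun y =>
        isClosed_le ((hev x).sub (hev y)).abs continuous_const)
  · intro x
    rw [Metric.equicontinuousAt_iff_right]
    intro ε hε
    have hc : Continuous fun y : X => ∑ k, |(x : K → ℝ) k - (y : K → ℝ) k| :=
      continuous_finsetSum _ fun k _ => (continuous_const.sub
        ((continuous_apply k).comp continuous_subtype_val)).abs
    have h0 : ∑ k, |(x : K → ℝ) k - (x : K → ℝ) k| < ε := by simpa using hε
    filter_upwards [hc.tendsto x (Iio_mem_nhds h0)] with y hy F
    exact (F.2.2 x y).trans_lt hy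

lemma W_KK [Nonempty A] (hq : ∀ x a, q x a ∈ Δf X) (hg : ∀ x a, g x a ∈ Icc (0:ℝ) 1)
    (hlip : ∀ (x y : X) (a : A), ∀ f ∈ D1 K, ∀ α β : ℝ, 0 ≤ α → 0 ≤ β →
      |α * fExt f (q x a) - β * fExt f (q y a)| ≤
        ∑ k, |α * (x : K → ℝ) k - β * (y : K → ℝ) k| ∧
      |α * g x a - β * g y a| ≤ ∑ k, |α * (x : K → ℝ) k - β * (y : K → ℝ) k|)
    [CompactSpace X] (θ : ℕ → ℝ) (hθ : NS θ) (h1 : ∑' t, θ t ≤ 1) : ∃ F ∈ KK X, ⇑F = W q g θ := by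
  have h0 : (fun _ => 0 : (K → ℝ) → ℝ) ∈ D1 K := by
    refine ⟨continuousOn_const, fun x _ y _ a b _ _ => ?_⟩
    simp only [mul_zero, sub_zero]
    exact Finset.sum_nonneg fun _ _ => abs_nonneg _
  have hPD := W_PD hq hg (hNq_of fun x y a f hf α β hα hβ => (hlip x y a f hf α β hα hβ).1)
    (fun a x y α β hα hβ => by
      rw [one_mul]; exact (hlip x y a _ h0 α β hα hβ).2) hθ
  have hL : ∀ x y : X, |W q g θ x - W q g θ y| ≤ ∑ k, |(x : K → ℝ) k - (y : K → ℝ) k| := by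
    intro x y
    have := hPD x y 1 1 zero_le_one zero_le_one
    simp only [NN, one_mul] at this
    exact this.trans (mul_le_of_le_one_left (Finset.sum_nonneg fun _ _ => abs_nonneg _) h1)
  have hcont : Continuous (W q g θ) := by
    refine continuous_iff_continuousAt.2 fun x => ?_
    refine tendsto_iff_dist_tendsto_zero.2
      (squeeze_zero (fun _ => dist_nonneg) (fun y => hL y x) ?_)
    have hc : Continuous fun y : X => ∑ k, |(y : K → ℝ) k - (x : K → ℝ) k| :=
      continuous_finsetSum _ fun k _ =>
        (((continuous_apply k).comp continuous_subtype_val).sub continuous_const).abs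
    simpa using hc.tendsto x
  exact ⟨BoundedContinuousFunction.mkOfCompact ⟨W q g θ, hcont⟩,
    ⟨fun x => ⟨W_nonneg hq hg hθ x, (W_le hq hg hθ x).trans h1⟩, hL⟩, rfl⟩

end ext
end Stmt16b


namespace Stmt16b

open Stmt16 Filter Topology Set MeasureTheory
open scoped BoundedContinuousFunction NNReal
set_option linter.unusedSectionVars false

section evals

lemma imp_summable {θ : ℕ → ℝ} (h : NS θ) : Summable fun t => |θ (t + 1) - θ t| :=
  (((summable_nat_add_iff 1).2 h.2).sub h.2).abs

lemma imp_sum_le {θ : ℕ → ℝ} (h : NS θ) (n : ℕ) :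
    ∑ t ∈ Finset.range n, |θ (t + 1) - θ t| ≤ impatience θ :=
  (imp_summable h).sum_le_tsum _ fun _ _ => abs_nonneg _

lemma le_imp {θ : ℕ → ℝ} (h : NS θ) (t : ℕ) : θ t ≤ impatience θ := by
  have h1 : ∀ n, θ t - θ (t + n) ≤
      ∑ s ∈ Finset.range (t + n), |θ (s + 1) - θ s| := by
    intro n
    induction n with
    | zero => simpa using Finset.sum_nonneg fun _ _ => abs_nonneg _
    | succ n ih =>
      rw [← add_assoc, Finset.sum_range_succ]
      have := neg_abs_le (θ (t + n + 1) - θ (t + n))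
      linarith
  have h2 : Tendsto (fun n => θ t - θ (t + n)) atTop (𝓝 (θ t - 0)) := by
    refine tendsto_const_nhds.sub ?_
    have := (tendsto_add_atTop_iff_nat t).2 h.2.tendsto_atTop_zero
    simpa [add_comm] using this
  rw [sub_zero] at h2
  exact le_of_tendsto' h2 fun n => (h1 n).trans (imp_sum_le h _)

lemma imp_pos {θ : ℕ → ℝ} (h : IsEval θ) : 0 < impatience θ := by
  by_contra! hc
  have h0 : ∀ t, θ t = 0 := fun t => le_antisymm ((le_imp (IsEval.ns h) t).trans hc) (h.1 t)
  have := h.2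
  simp [h0] at this

lemma abel_bound {θ : ℕ → ℝ} (h : NS θ) {f : ℕ → ℝ} {M : ℝ} (hf : ∀ t, |f t| ≤ M) (n : ℕ) :
    |∑ t ∈ Finset.range n, θ t * (f (t + 1) - f t)| ≤ 3 * impatience θ * M := by
  have hM : 0 ≤ M := (abs_nonneg _).trans (hf 0)
  have h1 : |∑ t ∈ Finset.range n, θ t * (f (t + 1) - f t) - (θ n * f n - θ 0 * f 0)| ≤
      (∑ t ∈ Finset.range n, |θ (t + 1) - θ t|) * M := by
    induction n with
    | zero => simp
    | succ n ih =>
      rw [Finset.sum_range_succ, Finset.sum_range_succ, add_mul]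
      have h2 : |(θ (n + 1) - θ n) * f (n + 1)| ≤ |θ (n + 1) - θ n| * M := by
        rw [abs_mul]; exact mul_le_mul_of_nonneg_left (hf _) (abs_nonneg _)
      have h3 := abs_sub (∑ t ∈ Finset.range n, θ t * (f (t + 1) - f t) - (θ n * f n - θ 0 * f 0))
        ((θ (n + 1) - θ n) * f (n + 1))
      rw [show ∑ t ∈ Finset.range n, θ t * (f (t + 1) - f t) + θ n * (f (n + 1) - f n) -
        (θ (n + 1) * f (n + 1) - θ 0 * f 0) =
        ∑ t ∈ Finset.range n, θ t * (f (t + 1) - f t) - (θ n * f n - θ 0 * f 0) -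
        (θ (n + 1) - θ n) * f (n + 1) by ring]
      linarith
  have h2 : ∀ t, |θ t * f t| ≤ impatience θ * M := fun t => by
    rw [abs_mul, abs_of_nonneg (h.1 t)]
    exact mul_le_mul (le_imp h t) (hf t) (abs_nonneg _) ((h.1 t).trans (le_imp h t))
  have h3 := mul_le_mul_of_nonneg_right (imp_sum_le h n) hM
  have h4 := abs_le.1 (h2 n)
  have h5 := abs_le.1 (h2 0)
  have h6 := abs_le.1 h1
  rw [abs_le]
  constructor <;> linarith [h4.1, h4.2, h5.1, h5.2, h6.1, h6.2]

/-- The filter of patient evaluations. -/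
noncomputable def PF : Filter (ℕ → ℝ) := comap impatience (𝓝 0) ⊓ 𝓟 {θ | IsEval θ}

lemma geom_eval {l : ℝ} (h0 : 0 < l) (h1 : l < 1) :
    IsEval (fun t => l * (1 - l) ^ t) ∧ impatience (fun t => l * (1 - l) ^ t) = l := by
  have hs : ∑' t : ℕ, l * (1 - l) ^ t = 1 := by
    rw [tsum_mul_left, tsum_geometric_of_lt_one (by linarith) (by linarith), sub_sub_cancel,
      mul_inv_cancel₀ h0.ne']
  refine ⟨⟨fun t => mul_nonneg h0.le (pow_nonneg (by linarith) _), hs⟩, ?_⟩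
  rw [impatience]
  have : ∀ t : ℕ, |l * (1 - l) ^ (t + 1) - l * (1 - l) ^ t| = l * (l * (1 - l) ^ t) := by
    intro t
    rw [show l * (1 - l) ^ (t + 1) - l * (1 - l) ^ t = -(l * (l * (1 - l) ^ t)) by ring, abs_neg,
      abs_of_nonneg]
    have : 0 ≤ (1 - l) ^ t := pow_nonneg (by linarith) _
    positivity
  simp only [this]
  rw [tsum_mul_left, hs, mul_one]

instance PF_neBot : PF.NeBot := by
  have hev : ∀ᶠ l : ℝ in 𝓝[>] 0, 0 < l ∧ l < 1 := by
    filter_upwards [Ioo_mem_nhdsGT (zero_lt_one' ℝ)] with l hl using hl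
  have : Tendsto (fun (l : ℝ) (t : ℕ) => l * (1 - l) ^ t) (𝓝[>] 0) PF := by
    refine tendsto_inf.2 ⟨tendsto_comap_iff.2 ?_, tendsto_principal.2 ?_⟩
    · refine Tendsto.congr' (f₁ := fun l : ℝ => l) ?_ nhdsWithin_le_nhds
      filter_upwards [hev] with l hl
      exact (geom_eval hl.1 hl.2).2.symm
    · filter_upwards [hev] with l hl
      exact (geom_eval hl.1 hl.2).1
  exact this.neBot

lemma PF_eventually {P : (ℕ → ℝ) → Prop} (h : ∀ᶠ θ in PF, P θ) :
    ∃ α > (0:ℝ), ∀ θ, IsEval θ → impatience θ ≤ α → P θ := by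
  rw [PF, eventually_inf_principal, eventually_comap] at h
  obtain ⟨α, hα, h⟩ := Metric.eventually_nhds_iff.1 h
  refine ⟨α / 2, by positivity, fun θ h1 h2 => h ?_ θ rfl h1⟩
  rw [Real.dist_eq, sub_zero, abs_of_pos (imp_pos h1)]
  linarith

lemma PF_eval : ∀ᶠ θ in PF, IsEval θ := mem_inf_of_right (mem_principal_self _)

lemma PF_imp : Tendsto impatience PF (𝓝 0) := tendsto_comap.mono_left inf_le_left

lemma evals_convex (α : ℝ) : Convex ℝ {θ : ℕ → ℝ | IsEval θ ∧ impatience θ ≤ α} := by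
  rintro θ ⟨h1, h2⟩ θ' ⟨h1', h2'⟩ c d hc hd hcd
  have hn := IsEval.ns h1
  have hn' := IsEval.ns h1'
  refine ⟨⟨fun t => add_nonneg (mul_nonneg hc (h1.1 t)) (mul_nonneg hd (h1'.1 t)), ?_⟩, ?_⟩
  · simp only [Pi.add_apply, Pi.smul_apply, smul_eq_mul]
    rw [(hn.2.mul_left c).tsum_add (hn'.2.mul_left d), tsum_mul_left, tsum_mul_left, h1.2, h1'.2]
    linarith
  · have hle : impatience (c • θ + d • θ') ≤ c * impatience θ + d * impatience θ' := by
      simp only [impatience]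
      rw [← tsum_mul_left, ← tsum_mul_left, ← Summable.tsum_add ((imp_summable hn).mul_left c)
        ((imp_summable hn').mul_left d)]
      have hb : ∀ t, |(c • θ + d • θ') (t + 1) - (c • θ + d • θ') t| ≤
          c * |θ (t + 1) - θ t| + d * |θ' (t + 1) - θ' t| := by
        intro t
        simp only [Pi.add_apply, Pi.smul_apply, smul_eq_mul]
        calc _ = |c * (θ (t + 1) - θ t) + d * (θ' (t + 1) - θ' t)| := by ring_nf
          _ ≤ _ := abs_add_le _ _
          _ = _ := by rw [abs_mul, abs_mul, abs_of_nonneg hc, abs_of_nonneg hd]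
      have hs := ((imp_summable hn).mul_left c).add ((imp_summable hn').mul_left d)
      exact (Summable.of_nonneg_of_le (fun _ => abs_nonneg _) hb hs).tsum_le_tsum hb hs
    have e1 := mul_le_mul_of_nonneg_left h2 hc
    have e2 := mul_le_mul_of_nonneg_left h2' hd
    have e3 : c * α + d * α = α := by rw [← add_mul, hcd, one_mul]
    change impatience (c • θ + d • θ') ≤ α
    linarith

end evals

section meas

variable {S : Type*} [MeasurableSpace S]

lemma toMeas_eq {u : S →₀ ℝ} {T : Finset S} (h : u.support ⊆ T) :
    toMeas u = ∑ x ∈ T, ENNReal.ofReal (u x) • Measure.dirac x := by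
  rw [toMeas]
  exact Finsupp.sum_of_support_subset _ h _ (by simp)

lemma toMeas_prob {u : S →₀ ℝ} (hu : u ∈ Δf S) : IsProbabilityMeasure (toMeas u) := by
  constructor
  rw [toMeas_eq subset_rfl]
  simp only [Measure.finsetSum_apply, Measure.smul_apply, measure_univ, smul_eq_mul, mul_one]
  rw [← ENNReal.ofReal_sum_of_nonneg fun x _ => hu.1 x]
  have := hu.2
  rw [Finsupp.sum] at this
  rw [this, ENNReal.ofReal_one]

lemma toMeas_comb {u v : S →₀ ℝ} (hu : u ∈ Δf S) (hv : v ∈ Δf S) {a b : ℝ} (ha : 0 ≤ a)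
    (hb : 0 ≤ b) : toMeas (a • u + b • v) =
      ENNReal.ofReal a • toMeas u + ENNReal.ofReal b • toMeas v := by
  classical
  rw [toMeas_eq (u := u) (T := u.support ∪ v.support) Finset.subset_union_left,
    toMeas_eq (u := v) (T := u.support ∪ v.support) Finset.subset_union_right,
    toMeas_eq (T := u.support ∪ v.support)
      (Finsupp.support_add.trans (Finset.union_subset_union Finsupp.support_smul
        Finsupp.support_smul)), Finset.smul_sum, Finset.smul_sum, ← Finset.sum_add_distrib]
  refine Finset.sum_congr rfl fun x _ => ?_
  rw [smul_smul, smul_smul, ← add_smul, ← ENNReal.ofReal_mul ha, ← ENNReal.ofReal_mul hb,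
    ← ENNReal.ofReal_add (mul_nonneg ha (hu.1 x)) (mul_nonneg hb (hv.1 x))]
  rfl

lemma toMeas_single (x : S) : toMeas (Finsupp.single x (1:ℝ)) = Measure.dirac x := by
  rw [toMeas, Finsupp.sum_single_index (by simp)]; simp

/-- Probability measure of a finitely supported law. -/
noncomputable def pm (u : Δf S) : ProbabilityMeasure S := ⟨toMeas u.1, toMeas_prob u.2⟩

/-- Dirac mass. -/
noncomputable def dm (x : S) : ProbabilityMeasure S := ⟨Measure.dirac x, inferInstance⟩

lemma Δf_convex : Convex ℝ (Δf S) := by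
  intro u hu v hv a b ha hb hab
  rw [mem_Δf] at *
  refine ⟨fun x => add_nonneg (mul_nonneg ha (hu.1 x)) (mul_nonneg hb (hv.1 x)), ?_⟩
  rw [map_add, map_smul, map_smul, hu.2, hv.2]
  simpa using hab

lemma affine_pr {w : ProbabilityMeasure S → ℝ} (hw : IsAffine w) (u : Δf S) :
    w (pm u) = pr (fun x => w (dm x)) u.1 := by
  classical
  let w' : (S →₀ ℝ) → ℝ := fun u => if h : u ∈ Δf S then w (pm ⟨u, h⟩) else 0
  have hw' : ∀ (u) (h : u ∈ Δf S), w' u = w (pm ⟨u, h⟩) := fun u h => dif_pos h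
  have hcomb : ∀ ⦃u⦄, u ∈ Δf S → ∀ ⦃v⦄, v ∈ Δf S → ∀ ⦃a b : ℝ⦄, 0 ≤ a → 0 ≤ b → a + b = 1 →
      w' (a • u + b • v) = a * w' u + b * w' v := by
    intro u hu v hv a b ha hb hab
    have hm := Δf_convex hu hv ha hb hab
    rw [hw' _ hu, hw' _ hv, hw' _ hm]
    have hb' : b = 1 - a := by linarith
    subst hb'
    exact hw (pm ⟨u, hu⟩) (pm ⟨v, hv⟩) (pm ⟨_, hm⟩) a ⟨ha, by linarith⟩ (toMeas_comb hu hv ha hb)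
  have h1 : ConvexOn ℝ (Δf S) w' := ⟨Δf_convex, fun u hu v hv a b ha hb hab =>
    (hcomb hu hv ha hb hab).le⟩
  have h2 : ConcaveOn ℝ (Δf S) w' := ⟨Δf_convex, fun u hu v hv a b ha hb hab =>
    (hcomb hu hv ha hb hab).ge⟩
  obtain ⟨u, hu⟩ := u
  have hsum : ∑ x ∈ u.support, u x = 1 := hu.2
  have e : ∑ x ∈ u.support, u x • Finsupp.single x (1:ℝ) = u := by
    conv_rhs => rw [← Finsupp.sum_single u]
    rw [Finsupp.sum]
    simp
  have e2 : ∀ x, w' (Finsupp.single x 1) = w (dm x) := by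
    intro x
    rw [hw' _ (single_mem_Δf x)]
    congr 1
    exact Subtype.ext (toMeas_single x)
  have i1 := h1.map_sum_le (t := u.support) (w := u) (p := fun x => Finsupp.single x 1)
    (fun x _ => hu.1 x) hsum fun x _ => single_mem_Δf x
  have i2 := h2.le_map_sum (t := u.support) (w := u) (p := fun x => Finsupp.single x 1)
    (fun x _ => hu.1 x) hsum fun x _ => single_mem_Δf x
  rw [e, hw' u hu] at i1 i2
  simp only [e2, smul_eq_mul] at i1 i2
  rw [pr_apply]
  exact le_antisymm i1 i2

variable [TopologicalSpace S] [BorelSpace S] [T2Space S]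

lemma integral_toMeas {u : S →₀ ℝ} (hu : u ∈ Δf S) (f : S →ᵇ ℝ) :
    ∫ x, f x ∂(toMeas u) = pr f u := by
  rw [toMeas_eq subset_rfl, integral_finsetSum_measure, pr_apply]
  · refine Finset.sum_congr rfl fun x _ => ?_
    rw [integral_smul_measure, integral_dirac, ENNReal.toReal_ofReal (hu.1 x), smul_eq_mul]
  · intro x _
    exact (f.integrable (Measure.dirac x)).smul_measure (by simp)

lemma cont_integral (f : S →ᵇ ℝ) :
    Continuous fun μ : ProbabilityMeasure S => ∫ x, f x ∂(μ : Measure S) := by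
  rw [continuous_iff_continuousAt]
  intro μ
  exact (ProbabilityMeasure.tendsto_iff_forall_integral_tendsto.1 tendsto_id) f

end meas
end Stmt16b


namespace Stmt16b

open Stmt16 Filter Topology Set MeasureTheory
open scoped BoundedContinuousFunction NNReal
set_option linter.unusedSectionVars false

variable {S : Type*} {A : Type*} [Nonempty A] {q : S → A → (S →₀ ℝ)} {g : S → A → ℝ}

/-- Occupation measure of a nearly optimal play. -/
lemma approx (hq : ∀ x a, q x a ∈ Δf S) (hg : ∀ x a, g x a ∈ Icc (0:ℝ) 1)
    {θ : ℕ → ℝ} (h : IsEval θ) (x : S) :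
    ∃ k ∈ Δf (S × A), W q g θ x - 2 * impatience θ ≤ Gm g k ∧
      (∀ f : S → ℝ, (∀ x' a, pr f (q x' a) ≤ f x') → pr f (marg k) ≤ f x) ∧
      (∀ (f : S → ℝ) (M : ℝ), (∀ x, |f x| ≤ M) →
        |pr f (Qm q k) - pr f (marg k)| ≤ 6 * impatience θ * M) := by
  have hn := IsEval.ns h
  have hI := imp_pos h
  obtain ⟨m, hm, hlow⟩ := play_lower hq hg hn (single_mem_Δf x) hI
  rw [pr_single, one_mul] at hlow
  have hmem := hm.mem hq (single_mem_Δf x)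
  have hT : Tendsto (fun n => ∑ t ∈ Finset.range n, θ t) atTop (𝓝 1) := by
    have := hn.2.hasSum.tendsto_sum_nat
    rwa [h.2] at this
  obtain ⟨n, hn1, hn2⟩ := ((hT.eventually (lt_mem_nhds (show (1/2:ℝ) < 1 by norm_num))).and
    (hT.eventually (lt_mem_nhds (show 1 - impatience θ < 1 by linarith)))).exists
  have hS1 : ∑ t ∈ Finset.range n, θ t ≤ 1 := by
    have := hn.sum_le n
    rwa [h.2] at this
  set s := ∑ t ∈ Finset.range n, θ t with hs
  have hs0 : 0 < s := by linarith
  have hsi : s⁻¹ ≤ 2 := by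
    rw [inv_le_comm₀ hs0 two_pos]; linarith
  have hsi1 : 1 ≤ s⁻¹ := (one_le_inv₀ hs0).2 hS1
  have hlin : ∀ L : (S × A →₀ ℝ) →ₗ[ℝ] ℝ, L (s⁻¹ • ∑ t ∈ Finset.range n, θ t • m t) =
      s⁻¹ * ∑ t ∈ Finset.range n, θ t * L (m t) := by
    intro L
    rw [map_smul, map_sum]
    simp only [map_smul, smul_eq_mul]
  refine ⟨s⁻¹ • ∑ t ∈ Finset.range n, θ t • m t, ?_, ?_, ?_, ?_⟩
  · rw [mem_Δf]
    refine ⟨fun p => ?_, ?_⟩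
    · rw [Finsupp.smul_apply, Finsupp.finsetSum_apply]
      exact mul_nonneg (by positivity) (Finset.sum_nonneg fun t _ =>
        mul_nonneg (hn.1 t) (hm.1 t p))
    · rw [hlin]
      simp only [fun t => (mem_Δf.1 (hmem t)).2, mul_one]
      exact inv_mul_cancel₀ hs0.ne'
  · rw [hlin]
    have h1 := (summable_pay hg hn hmem).sum_add_tsum_nat_add n
    have h2 := hn.2.sum_add_tsum_nat_add n
    have h3 : ∑' t, θ (t + n) * Gm g (m (t + n)) ≤ ∑' t, θ (t + n) :=
      Summable.tsum_le_tsum (fun t => mul_le_of_le_one_right (hn.1 _) (Gm_mem hg (hmem _)).2)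
        ((summable_nat_add_iff (f := fun t => θ t * Gm g (m t)) n).2 (summable_pay hg hn hmem))
        ((summable_nat_add_iff n).2 hn.2)
    have h4 : 0 ≤ ∑ t ∈ Finset.range n, θ t * Gm g (m t) :=
      Finset.sum_nonneg fun t _ => mul_nonneg (hn.1 t) (Gm_mem hg (hmem t)).1
    rw [h.2] at h2
    nlinarith
  · intro f hf
    have hdec : ∀ t, pr f (marg (m t)) ≤ f x := by
      intro t
      induction t with
      | zero => rw [hm.2.1]; simp
      | succ t ih =>
        refine le_trans ?_ ih
        rw [hm.2.2, pr_Qm, pr_marg]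
        exact pr_mono (hm.1 t) fun p => hf _ _
    have := hlin ((pr f).comp marg)
    simp only [LinearMap.comp_apply] at this
    rw [this, inv_mul_le_iff₀ hs0, hs, Finset.sum_mul]
    exact Finset.sum_le_sum fun t _ => mul_le_mul_of_nonneg_left (hdec t) (hn.1 t)
  · intro f M hf
    have e1 := hlin ((pr f).comp marg)
    have e2 := hlin ((pr f).comp (Qm q))
    simp only [LinearMap.comp_apply] at e1 e2
    simp only [← hm.2.2] at e2
    rw [e1, e2, ← mul_sub, ← Finset.sum_sub_distrib]
    simp only [← mul_sub]
    rw [abs_mul, abs_of_pos (inv_pos.2 hs0)]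
    have hb : ∀ t, |pr f (marg (m t))| ≤ M := by
      intro t
      have hmt := marg_mem (hmem t)
      have h1 := pr_mono hmt.1 (fun x => (abs_le.1 (hf x)).1)
      have h2 := pr_mono hmt.1 (fun x => (abs_le.1 (hf x)).2)
      rw [pr_const hmt] at h1 h2
      exact abs_le.2 ⟨h1, h2⟩
    have := abel_bound hn hb n
    have h0 := abs_nonneg (∑ t ∈ Finset.range n, θ t * (pr f (marg (m (t + 1))) - pr f (marg (m t))))
    nlinarith

variable [MeasurableSpace S] [TopologicalSpace S] [BorelSpace S] [T2Space S] [CompactSpace S]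

/-- Admissible functions. -/
def Adm (q : S → A → (S →₀ ℝ)) (g : S → A → ℝ) (w : ProbabilityMeasure S → ℝ) : Prop :=
  Continuous w ∧ (∀ μ, w μ ∈ Icc (0:ℝ) 1) ∧ IsAffine w ∧
  (∀ (x' : S) (a : A), ∀ μ : ProbabilityMeasure S, (μ : Measure S) = toMeas (q x' a) →
    w ⟨Measure.dirac x', inferInstance⟩ ≥ w μ) ∧
  (∀ py ∈ RR q g, w py.1 ≥ py.2)

lemma claimA (hq : ∀ x a, q x a ∈ Δf S) (hg : ∀ x a, g x a ∈ Icc (0:ℝ) 1)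
    (𝒰 : Ultrafilter (ℕ → ℝ)) (hU : ↑𝒰 ≤ PF) {w : ProbabilityMeasure S → ℝ} (hw : Adm q g w)
    {x : S} {c : ℝ} (hc : Tendsto (fun θ => W q g θ x) 𝒰 (𝓝 c)) : c ≤ w (dm x) := by
  obtain ⟨hw1, hw2, hw3, hw4, hw5⟩ := hw
  have hev : ∀ᶠ θ in 𝒰, IsEval θ := hU PF_eval
  have hI : Tendsto impatience 𝒰 (𝓝 0) := PF_imp.mono_left hU
  have key : ∀ θ : ℕ → ℝ, ∃ k : S × A →₀ ℝ, k ∈ Δf (S × A) ∧ (IsEval θ →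
      W q g θ x - 2 * impatience θ ≤ Gm g k ∧
      (∀ f : S → ℝ, (∀ x' a, pr f (q x' a) ≤ f x') → pr f (marg k) ≤ f x) ∧
      (∀ (f : S → ℝ) (M : ℝ), (∀ x, |f x| ≤ M) →
        |pr f (Qm q k) - pr f (marg k)| ≤ 6 * impatience θ * M)) := by
    intro θ
    by_cases h : IsEval θ
    · obtain ⟨k, hk, hk'⟩ := approx hq hg h x
      exact ⟨k, hk, fun _ => hk'⟩
    · exact ⟨_, single_mem_Δf (x, Classical.arbitrary A), fun h' => absurd h' h⟩
  choose k hk hkk using key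
  let μθ : (ℕ → ℝ) → ProbabilityMeasure S := fun θ => pm ⟨marg (k θ), marg_mem (hk θ)⟩
  let νθ : (ℕ → ℝ) → ProbabilityMeasure S := fun θ => pm ⟨Qm q (k θ), Qm_mem hq (hk θ)⟩
  obtain ⟨μ, -, hμ⟩ := isCompact_univ.ultrafilter_le_nhds (𝒰.map μθ) (by simp)
  have hμ : Tendsto μθ 𝒰 (𝓝 μ) := hμ
  obtain ⟨y, hy, hyl⟩ := (isCompact_Icc (a := (0:ℝ)) (b := 1)).ultrafilter_le_nhds
    (𝒰.map fun θ => Gm g (k θ)) (by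
      rw [le_principal_iff]
      exact Eventually.of_forall (f := (𝒰 : Filter (ℕ → ℝ))) fun θ => Gm_mem hg (hk θ))
  have hyl : Tendsto (fun θ => Gm g (k θ)) 𝒰 (𝓝 y) := hyl
  have hν : Tendsto νθ 𝒰 (𝓝 μ) := by
    rw [ProbabilityMeasure.tendsto_iff_forall_integral_tendsto] at hμ ⊢
    intro f
    have h1 := hμ f
    have h2 : Tendsto (fun θ => pr f (Qm q (k θ)) - pr f (marg (k θ))) 𝒰 (𝓝 0) := by
      have h3 : Tendsto (fun θ => 6 * impatience θ * ‖f‖) 𝒰 (𝓝 0) := by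
        simpa using (hI.const_mul 6).mul_const ‖f‖
      refine squeeze_zero_norm' ?_ h3
      filter_upwards [hev] with θ hθ
      exact (hkk θ hθ).2.2 f ‖f‖ fun x => f.norm_coe_le_norm x
    have h3 := h2.add h1
    rw [zero_add] at h3
    refine h3.congr fun θ => ?_
    change pr f (Qm q (k θ)) - pr f (marg (k θ)) + ∫ x, f x ∂(toMeas (marg (k θ))) =
      ∫ x, f x ∂(toMeas (Qm q (k θ)))
    rw [integral_toMeas (marg_mem (hk θ)), integral_toMeas (Qm_mem hq (hk θ))]
    ring
  have hRR : (μ, y) ∈ RR q g := by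
    refine mem_closure_of_tendsto (f := fun θ => ((μθ θ, Gm g (k θ)), (νθ θ, Gm g (k θ))))
      (b := (𝒰 : Filter (ℕ → ℝ))) ((hμ.prodMk_nhds hyl).prodMk_nhds (hν.prodMk_nhds hyl)) ?_
    refine Eventually.of_forall fun θ => ?_
    obtain ⟨a, ha, h1, h2⟩ := disint_mix (hk θ) q g
    refine ⟨Gm_mem hg (hk θ), marg (k θ), marg_mem (hk θ), a, ha, rfl, ?_, h2.symm⟩
    rw [h1]; rfl
  have h1 : y ≤ w μ := hw5 _ hRR
  have h2 : w μ ≤ w (dm x) := by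
    refine le_of_tendsto ((hw1.tendsto μ).comp hμ) ?_
    filter_upwards [hev] with θ hθ
    simp only [Function.comp, μθ]
    rw [affine_pr hw3]
    refine (hkk θ hθ).2.1 (fun x => w (dm x)) fun x' a => ?_
    rw [← affine_pr hw3 ⟨q x' a, hq x' a⟩]
    exact hw4 x' a _ rfl
  have h3 : c ≤ y := by
    have h4 : Tendsto (fun θ => W q g θ x - 2 * impatience θ) 𝒰 (𝓝 (c - 2 * 0)) :=
      hc.sub (hI.const_mul 2)
    rw [mul_zero, sub_zero] at h4
    refine le_of_tendsto_of_tendsto h4 hyl ?_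
    filter_upwards [hev] with θ hθ
    exact (hkk θ hθ).1
  linarith

lemma RR_le (hq : ∀ x a, q x a ∈ Δf S) (hg : ∀ x a, g x a ∈ Icc (0:ℝ) 1)
    (hBW : ∀ θ, NS θ → ∑' t, θ t ≤ 1 → ∃ F : S →ᵇ ℝ, ⇑F = W q g θ)
    {py : ProbabilityMeasure S × ℝ} (hpy : py ∈ RR q g) {θ : ℕ → ℝ} (h : IsEval θ) :
    py.2 ≤ ∫ x, W q g θ x ∂(py.1 : Measure S) := by
  have hn := IsEval.ns h
  have hle : ∀ n, ∑' t, shn n θ t ≤ 1 := by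
    intro n
    have := hn.2.sum_add_tsum_nat_add n
    have h3 : 0 ≤ ∑ i ∈ Finset.range n, θ i := Finset.sum_nonneg fun i _ => hn.1 i
    rw [h.2] at this
    simp only [shn]
    linarith
  choose F hF using fun n => hBW (shn n θ) (hn.shn n) (hle n)
  have hstep : ∀ n, θ n * py.2 + ∫ x, F (n + 1) x ∂(py.1 : Measure S) ≤
      ∫ x, F n x ∂(py.1 : Measure S) := by
    intro n
    have hcl : IsClosed {z : (ProbabilityMeasure S × ℝ) × (ProbabilityMeasure S × ℝ) |
        θ n * z.2.2 + ∫ x, F (n + 1) x ∂(z.2.1 : Measure S) ≤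
          ∫ x, F n x ∂(z.1.1 : Measure S)} := by
      refine isClosed_le ?_ ?_
      · exact (continuous_const.mul (continuous_snd.comp continuous_snd)).add
          ((cont_integral (F (n + 1))).comp (continuous_fst.comp continuous_snd))
      · exact (cont_integral (F n)).comp (continuous_fst.comp continuous_fst)
    refine closure_minimal ?_ hcl hpy
    rintro ⟨⟨μ, y⟩, ⟨ν, y'⟩⟩ ⟨-, u, hu, a, ha, h1, h2, h3⟩
    simp only at h1 h2 h3
    have hmm := mixm_mem hu ha
    have eQ : Qmix q u a = Qm q (mixm u a) := by
      apply ext_pr; intro f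
      rw [Qmix_eq, pr_Qm, pr_mixm]
    have eG : Gmix g u a = Gm g (mixm u a) := by
      rw [Gmix_eq, Gm, pr_mixm]
    change θ n * y' + ∫ x, F (n + 1) x ∂(ν : Measure S) ≤ ∫ x, F n x ∂(μ : Measure S)
    rw [h1, h2, h3, eQ, eG, integral_toMeas hu, integral_toMeas (Qm_mem hq hmm), hF, hF]
    have := W_stepm hq hg (hn.shn n) hmm.1
    rw [marg_mixm u ha, shn_shn] at this
    simpa [shn] using this
  have hsum : ∀ n, (∑ t ∈ Finset.range n, θ t) * py.2 + ∫ x, F n x ∂(py.1 : Measure S) ≤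
      ∫ x, F 0 x ∂(py.1 : Measure S) := by
    intro n
    induction n with
    | zero => simp
    | succ n ih =>
      rw [Finset.sum_range_succ, add_mul]
      linarith [hstep n]
  have hlim : Tendsto (fun n => (∑ t ∈ Finset.range n, θ t) * py.2) atTop (𝓝 (1 * py.2)) := by
    have := hn.2.hasSum.tendsto_sum_nat
    rw [h.2] at this
    exact this.mul_const _
  rw [one_mul] at hlim
  have hF0 := hF 0
  rw [shn_zero] at hF0
  rw [← hF0]
  refine le_of_tendsto' hlim fun n => ?_
  have : 0 ≤ ∫ x, F n x ∂(py.1 : Measure S) := by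
    refine integral_nonneg fun x => ?_
    rw [hF n]
    exact W_nonneg hq hg (hn.shn n) x
  linarith [hsum n]

lemma claimB (hq : ∀ x a, q x a ∈ Δf S) (hg : ∀ x a, g x a ∈ Icc (0:ℝ) 1)
    (hBW : ∀ θ, NS θ → ∑' t, θ t ≤ 1 → ∃ F : S →ᵇ ℝ, ⇑F = W q g θ)
    (𝒰 : Ultrafilter (ℕ → ℝ)) (hU : ↑𝒰 ≤ PF) {Fθ : (ℕ → ℝ) → (S →ᵇ ℝ)}
    (hF : ∀ θ, IsEval θ → ⇑(Fθ θ) = W q g θ) {v : S →ᵇ ℝ} (hv : Tendsto Fθ 𝒰 (𝓝 v)) :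
    Adm q g (fun μ => ∫ x, v x ∂(μ : Measure S)) := by
  have hev : ∀ᶠ θ in 𝒰, IsEval θ := hU PF_eval
  have hI : Tendsto impatience 𝒰 (𝓝 0) := PF_imp.mono_left hU
  have hpt : ∀ x, Tendsto (fun θ => Fθ θ x) 𝒰 (𝓝 (v x)) := fun x =>
    ((continuous_eval_const x).tendsto v).comp hv
  have hv01 : ∀ x, v x ∈ Icc (0:ℝ) 1 := by
    intro x
    refine isClosed_Icc.mem_of_tendsto (hpt x) ?_
    filter_upwards [hev] with θ hθ
    rw [hF θ hθ]
    refine ⟨W_nonneg hq hg (IsEval.ns hθ) x, ?_⟩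
    have := W_le hq hg (IsEval.ns hθ) x
    rwa [hθ.2] at this
  have hvi : ∀ (μ : Measure S) [IsFiniteMeasure μ], Integrable (fun x => v x) μ :=
    fun μ _ => v.integrable μ
  refine ⟨cont_integral v, fun μ => ⟨integral_nonneg fun x => (hv01 x).1, ?_⟩, ?_, ?_, ?_⟩
  · have := integral_mono (hvi (μ : Measure S)) (integrable_const (1:ℝ)) fun x => (hv01 x).2
    simpa using this
  · intro μ ν m α hα hm
    simp only [hm]
    rw [integral_add_measure ((hvi _).smul_measure (by simp)) ((hvi _).smul_measure (by simp)),
      integral_smul_measure, integral_smul_measure, ENNReal.toReal_ofReal hα.1,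
      ENNReal.toReal_ofReal (by linarith [hα.2])]
    rfl
  · intro x a μ hμ
    change ∫ x, v x ∂(μ : Measure S) ≤ ∫ x, v x ∂(Measure.dirac x)
    rw [hμ, integral_toMeas (hq x a), integral_dirac]
    have h1 : Tendsto (fun θ => pr (Fθ θ) (q x a)) 𝒰 (𝓝 (pr v (q x a))) := pr_tendsto hpt _
    have h2 : Tendsto (fun θ => Fθ θ x + impatience θ) 𝒰 (𝓝 (v x + 0)) := (hpt x).add hI
    rw [add_zero] at h2
    refine le_of_tendsto_of_tendsto h1 h2 ?_
    filter_upwards [hev] with θ hθ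
    have hn := IsEval.ns hθ
    rw [hF θ hθ]
    have e : ∑' t, |θ t - shn 1 θ t| = impatience θ := by
      simp only [impatience, shn, abs_sub_comm]
    have h3 := pr_mono (hq x a).1 fun y => W_lip hq hg hn (hn.shn 1) y
    rw [pr_add_const (hq x a), e] at h3
    have h4 := W_step hq hg hn x a
    have h5 := mul_nonneg (hn.1 0) (hg x a).1
    linarith
  · intro py hpy
    refine le_of_forall_pos_le_add fun ε hε => ?_
    obtain ⟨θ, hθ, hd⟩ := (hev.and (hv.eventually (Metric.ball_mem_nhds v hε))).exists
    have h1 := RR_le hq hg hBW hpy hθ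
    rw [← hF θ hθ] at h1
    refine h1.trans ?_
    have h2 : ∫ x, Fθ θ x ∂(py.1 : Measure S) ≤ ∫ x, (v x + ε) ∂(py.1 : Measure S) := by
      refine integral_mono ((Fθ θ).integrable _) ((hvi _).add (integrable_const ε)) fun x => ?_
      have := (BoundedContinuousFunction.dist_coe_le_dist (f := Fθ θ) (g := v) x).trans_lt hd
      rw [Real.dist_eq] at this
      have := (abs_lt.1 this).2
      simp only
      linarith
    rw [integral_add (hvi _) (integrable_const ε)] at h2
    simpa using h2

theorem main_thm (hq : ∀ x a, q x a ∈ Δf S) (hg : ∀ x a, g x a ∈ Icc (0:ℝ) 1)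
    {𝒦 : Set (S →ᵇ ℝ)} (hK : IsCompact 𝒦)
    (hKW : ∀ θ, NS θ → ∑' t, θ t ≤ 1 → ∃ F ∈ 𝒦, ⇑F = W q g θ) :
    ∃ vstar : S → ℝ,
      (∀ ε > (0:ℝ), ∃ α > (0:ℝ), ∀ θ : ℕ → ℝ, IsEval θ → impatience θ ≤ α →
        ∀ x : S, |value q g θ x - vstar x| ≤ ε) ∧
      (∀ ε > (0:ℝ), ∃ α > (0:ℝ), ∀ x : S, ∃ σ, IsStrat σ ∧
        ∀ θ : ℕ → ℝ, IsEval θ → impatience θ ≤ α → payoff q g θ σ x ≥ vstar x - ε) ∧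
      (∀ x : S, IsLeast {c : ℝ | ∃ w : ProbabilityMeasure S → ℝ, Adm q g w ∧
        c = w (dm x)} (vstar x)) := by
  have hBW : ∀ θ, NS θ → ∑' t, θ t ≤ 1 → ∃ F : S →ᵇ ℝ, ⇑F = W q g θ := fun θ h h1 =>
    let ⟨F, _, hF⟩ := hKW θ h h1; ⟨F, hF⟩
  have hsel : ∀ θ, IsEval θ → ∃ F ∈ 𝒦, ⇑F = W q g θ := fun θ h => hKW θ (IsEval.ns h) h.2.le
  choose! Fθ hF1 hF2 using hsel
  have hlim : ∀ 𝒰 : Ultrafilter (ℕ → ℝ), ↑𝒰 ≤ PF → ∃ v, Tendsto Fθ 𝒰 (𝓝 v) := by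
    intro 𝒰 hU
    obtain ⟨v, -, hv⟩ := hK.ultrafilter_le_nhds (𝒰.map Fθ) (by
      rw [le_principal_iff]
      have hev : ∀ᶠ θ in 𝒰, IsEval θ := hU PF_eval
      exact hev.mono fun θ hθ => hF1 θ hθ)
    exact ⟨v, hv⟩
  have hpt : ∀ (𝒰 : Ultrafilter (ℕ → ℝ)), ↑𝒰 ≤ PF → ∀ v : S →ᵇ ℝ, Tendsto Fθ 𝒰 (𝓝 v) →
      ∀ x, Tendsto (fun θ => W q g θ x) 𝒰 (𝓝 (v x)) := by
    intro 𝒰 hU v hv x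
    have h1 : Tendsto (fun θ => Fθ θ x) 𝒰 (𝓝 (v x)) :=
      ((continuous_eval_const x).tendsto v).comp hv
    refine h1.congr' ?_
    have hev : ∀ᶠ θ in 𝒰, IsEval θ := hU PF_eval
    filter_upwards [hev] with θ hθ
    rw [hF2 θ hθ]
  have hcmp : ∀ (𝒰 𝒱 : Ultrafilter (ℕ → ℝ)), ↑𝒰 ≤ PF → ↑𝒱 ≤ PF → ∀ v v' : S →ᵇ ℝ,
      Tendsto Fθ 𝒰 (𝓝 v) → Tendsto Fθ 𝒱 (𝓝 v') → ∀ x, v x ≤ v' x := by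
    intro 𝒰 𝒱 hU hV v v' hv hv' x
    have := claimA hq hg 𝒰 hU (claimB hq hg hBW 𝒱 hV hF2 hv') (hpt 𝒰 hU v hv x)
    refine this.trans_eq ?_
    exact integral_dirac _ _
  have hU0 : ↑(Ultrafilter.of PF) ≤ PF := Ultrafilter.of_le PF
  obtain ⟨v, hv⟩ := hlim _ hU0
  have hconv : Tendsto Fθ PF (𝓝 v) := by
    rw [tendsto_iff_ultrafilter]
    intro 𝒰 hU
    obtain ⟨v', hv'⟩ := hlim 𝒰 hU
    have : v' = v := by
      ext x
      exact le_antisymm (hcmp _ _ hU hU0 _ _ hv' hv x) (hcmp _ _ hU0 hU _ _ hv hv' x)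
    rwa [← this]
  have hunif : ∀ ε > (0:ℝ), ∃ α > (0:ℝ), ∀ θ : ℕ → ℝ, IsEval θ → impatience θ ≤ α →
        ∀ x : S, |W q g θ x - v x| ≤ ε := by
    intro ε hε
    obtain ⟨α, hα, h⟩ := PF_eventually (hconv.eventually (Metric.ball_mem_nhds v hε))
    refine ⟨α, hα, fun θ h1 h2 x => ?_⟩
    rw [← hF2 θ h1, ← Real.dist_eq]
    exact (BoundedContinuousFunction.dist_coe_le_dist x).trans (h θ h1 h2).le
  refine ⟨v, fun ε hε => ?_, fun ε hε => ?_, fun x => ⟨?_, ?_⟩⟩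
  · obtain ⟨α, hα, h⟩ := hunif ε hε
    refine ⟨α, hα, fun θ h1 h2 x => ?_⟩
    rw [value_eq hq hg (IsEval.ns h1)]
    exact h θ h1 h2 x
  · obtain ⟨α, hα, h⟩ := hunif (ε / 2) (by positivity)
    refine ⟨α, hα, fun x => ?_⟩
    obtain ⟨m, hm, hm2⟩ := unif_play hq hg hK hKW (evals_convex α)
      (fun θ hθ => ⟨IsEval.ns hθ.1, hθ.1.2.le⟩) (single_mem_Δf x) (b := v x - ε / 2)
      (fun θ hθ => by
        rw [pr_single, one_mul]
        linarith [(abs_le.1 (h θ hθ.1 hθ.2 x)).1]) (η := ε / 2) (by positivity)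
    obtain ⟨σ, hσ, hj⟩ := play_strat hq hm
    refine ⟨σ, hσ, fun θ h1 h2 => ?_⟩
    have := hm2 θ ⟨h1, h2⟩
    rw [payoff_eq]
    simp only [hj]
    linarith
  · exact ⟨_, claimB hq hg hBW _ hU0 hF2 hv, (integral_dirac _ _).symm⟩
  · rintro c ⟨w, hw, rfl⟩
    exact claimA hq hg _ hU0 hw (hpt _ hU0 v hv x)

end Stmt16b


/-- **Theorem 4 (Renault–Venel).** A standard MDP `Ψ = (X,A,q,g)`, with `X` a compact
subset of a simplex `Δ(K)` and `q`, `g` satisfying the `D₁`-non-expansiveness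
assumptions, has a general uniform value `v*`, characterized as the infimum over
continuous affine `w : Δ(X) → [0,1]` that are (1) excessive and (2) above the payoff on
invariant couples, of `w(δ_x)`. -/
theorem stmt16 (K : Type*) [Fintype K] [Nonempty K]
    (X : Set (K → ℝ)) (hX : IsCompact X) (hXΔ : X ⊆ Stmt16.ΔK K)
    (A : Type*) [Nonempty A]
    (q : X → A → (X →₀ ℝ)) (hq : ∀ x a, q x a ∈ Stmt16.Δf X)
    (g : X → A → ℝ) (hg : ∀ x a, g x a ∈ Icc (0:ℝ) 1)
    (hlip : ∀ (x y : X) (a : A), ∀ f ∈ Stmt16.D1 K, ∀ α β : ℝ, 0 ≤ α → 0 ≤ β →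
      |α * Stmt16.fExt f (q x a) - β * Stmt16.fExt f (q y a)| ≤
        ∑ k, |α * (x : K → ℝ) k - β * (y : K → ℝ) k| ∧
      |α * g x a - β * g y a| ≤ ∑ k, |α * (x : K → ℝ) k - β * (y : K → ℝ) k|) :
    ∃ vstar : X → ℝ,
      -- general limit value
      (∀ ε > (0:ℝ), ∃ α > (0:ℝ), ∀ θ : ℕ → ℝ, Stmt16.IsEval θ →
        Stmt16.impatience θ ≤ α →
        ∀ x : X, |Stmt16.value q g θ x - vstar x| ≤ ε) ∧
      -- general uniform value
      (∀ ε > (0:ℝ), ∃ α > (0:ℝ), ∀ x : X, ∃ σ, Stmt16.IsStrat σ ∧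
        ∀ θ : ℕ → ℝ, Stmt16.IsEval θ → Stmt16.impatience θ ≤ α →
          Stmt16.payoff q g θ σ x ≥ vstar x - ε) ∧
      -- characterization of `v*`
      (∀ x : X, vstar x =
        sInf {c : ℝ | ∃ w : ProbabilityMeasure X → ℝ, Continuous w ∧
          (∀ μ, w μ ∈ Icc (0:ℝ) 1) ∧ Stmt16.IsAffine w ∧
          (∀ (x' : X) (a : A), ∀ μ : ProbabilityMeasure X,
            (μ : Measure X) = Stmt16.toMeas (q x' a) →
            w ⟨Measure.dirac x', inferInstance⟩ ≥ w μ) ∧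
          (∀ py ∈ Stmt16.RR q g, w py.1 ≥ py.2) ∧
          c = w ⟨Measure.dirac x, inferInstance⟩}) := by
  have : CompactSpace X := isCompact_iff_compactSpace.1 hX
  obtain ⟨v, h1, h2, h3⟩ := Stmt16b.main_thm hq hg (Stmt16b.KK_compact (X := X))
    (Stmt16b.W_KK hq hg hlip)
  refine ⟨v, h1, h2, fun x => ?_⟩
  rw [← (h3 x).csInf_eq]
  congr 1
  ext c
  constructor
  · rintro ⟨w, ⟨a1, a2, a3, a4, a5⟩, e⟩
    exact ⟨w, a1, a2, a3, a4, a5, e⟩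
  · rintro ⟨w, a1, a2, a3, a4, a5, e⟩
    exact ⟨w, ⟨a1, a2, a3, a4, a5⟩, e⟩
end

section
/- Every standard MDP (K, A, q, g) with a finite nonempty set of states K has a general uniform value v*, and for each state k, v*(k) is the infimum of w(k) over all affine functions w : Δ(K) → [0,1] such that (1) w(δ_{k'}) ≥ sup_{a ∈ A} w(q(k',a)) for all k' ∈ K, and (2) w(p) ≥ y for all (p,y) ∈ RR, where RR = {(p,y) ∈ Δ(K)×[0,1] : ((p,y),(p,y)) ∈ cl(conv(Graph F))} with F(k,y) = {(q(k,a), g(k,a)) : a ∈ A}. -/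
open Set

namespace Stmt17

variable {K A : Type*} [Fintype K]

/-- The simplex `Δ(K)` of probability vectors on `K`. -/
def ΔK (K : Type*) [Fintype K] : Set (K → ℝ) := {p | (∀ k, 0 ≤ p k) ∧ ∑ k, p k = 1}

/-- `Δ_f(A)`: finitely supported probability measures on `A`, as weight functions. -/
def Δf (A : Type*) : Set (A →₀ ℝ) := {u | (∀ a, 0 ≤ u a) ∧ u.sum (fun _ r => r) = 1}

/-- The Dirac probability vector `δ_k`. -/
def dirac [DecidableEq K] (k : K) : K → ℝ := fun k' => if k' = k then 1 else 0

/-- Behavioral strategies: given the past history and the current state, play a finitely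
supported mixed action. -/
def IsStrat (σ : List (K × A) → K → (A →₀ ℝ)) : Prop := ∀ h k, σ h k ∈ Δf A

/-- The (finitely supported) distribution at time `t` of the pair
(history of states and actions up to stage `t`, state at stage `t+1`),
for initial state `k₁` and strategy `σ`. -/
noncomputable def hist (q : K → A → (K → ℝ)) (σ : List (K × A) → K → (A →₀ ℝ))
    (k₁ : K) : ℕ → (List (K × A) × K →₀ ℝ)
  | 0 => Finsupp.single ([], k₁) 1
  | t + 1 => (hist q σ k₁ t).sum fun hk w =>
      (σ hk.1 hk.2).sum fun a pa =>
        ∑ k', Finsupp.single (hk.1 ++ [(hk.2, a)], k') (w * pa * q hk.2 a k')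

/-- The expected payoff `E_{k₁,σ}(g(k_{t+1}, a_{t+1}))` at stage `t+1`. -/
noncomputable def stagePay (q : K → A → (K → ℝ)) (g : K → A → ℝ)
    (σ : List (K × A) → K → (A →₀ ℝ)) (k₁ : K) (t : ℕ) : ℝ :=
  (hist q σ k₁ t).sum fun hk w => (σ hk.1 hk.2).sum fun a pa => w * pa * g hk.2 a

/-- An evaluation: a probability distribution `θ = (θ_t)_{t ≥ 1}` over stages
(indexed here by `t : ℕ`, `t` standing for stage `t+1`). -/
def IsEval (θ : ℕ → ℝ) : Prop := (∀ t, 0 ≤ θ t) ∧ ∑' t, θ t = 1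

/-- The impatience `I(θ) = Σ_{t≥1} |θ_{t+1} − θ_t|`. -/
noncomputable def impatience (θ : ℕ → ℝ) : ℝ := ∑' t, |θ (t + 1) - θ t|

/-- The `θ`-payoff `γ_θ(k₁,σ) = E_{k₁,σ}(Σ_t θ_t g(k_t,a_t))`. -/
noncomputable def payoff (q : K → A → (K → ℝ)) (g : K → A → ℝ)
    (θ : ℕ → ℝ) (σ : List (K × A) → K → (A →₀ ℝ)) (k₁ : K) : ℝ :=
  ∑' t, θ t * stagePay q g σ k₁ t

/-- The `θ`-value `v_θ(k₁) = sup_σ γ_θ(k₁,σ)`. -/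
noncomputable def value (q : K → A → (K → ℝ)) (g : K → A → ℝ)
    (θ : ℕ → ℝ) (k₁ : K) : ℝ :=
  sSup {c : ℝ | ∃ σ, IsStrat σ ∧ c = payoff q g θ σ k₁}

/-- `w : Δ(K) → ℝ` is affine. -/
def IsAffineOn (w : (K → ℝ) → ℝ) : Prop :=
  ∀ p ∈ ΔK K, ∀ p' ∈ ΔK K, ∀ α : ℝ, α ∈ Icc (0:ℝ) 1 →
    w (α • p + (1 - α) • p') = α * w p + (1 - α) * w p'

/-- The graph of the correspondence `F(k,y) = {(q(k,a), g(k,a)) : a ∈ A}`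
at Dirac points. -/
def GraphF [DecidableEq K] (q : K → A → (K → ℝ)) (g : K → A → ℝ) :
    Set (((K → ℝ) × ℝ) × ((K → ℝ) × ℝ)) :=
  {z | ∃ (k : K) (a : A) (y : ℝ), y ∈ Icc (0:ℝ) 1 ∧
    z = ((dirac k, y), (q k a, g k a))}

/-- `RR = {(p,y) ∈ Δ(K)×[0,1] : ((p,y),(p,y)) ∈ cl(conv(Graph F))}`. -/
def RR [DecidableEq K] (q : K → A → (K → ℝ)) (g : K → A → ℝ) :
    Set ((K → ℝ) × ℝ) :=
  {py | py.1 ∈ ΔK K ∧ py.2 ∈ Icc (0:ℝ) 1 ∧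
    (py, py) ∈ closure (convexHull ℝ (GraphF q g))}

end Stmt17

namespace Stmt17

section Helpers
variable {K A : Type*} [Fintype K]

/-- Mean of `f` under a finitely supported weight. -/
noncomputable def M {X : Type*} (u : X →₀ ℝ) (f : X → ℝ) : ℝ := u.sum fun a p => p * f a

lemma M_eq_lc {X : Type*} (u : X →₀ ℝ) (f : X → ℝ) : M u f = Finsupp.linearCombination ℝ f u := by
  simp [M, Finsupp.linearCombination_apply]

lemma M_add {X : Type*} (u : X →₀ ℝ) (f g : X → ℝ) : M u (fun a => f a + g a) = M u f + M u g := by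
  simp [M, Finsupp.sum, mul_add, Finset.sum_add_distrib]

lemma M_sub {X : Type*} (u : X →₀ ℝ) (f g : X → ℝ) : M u (fun a => f a - g a) = M u f - M u g := by
  simp [M, Finsupp.sum, mul_sub, Finset.sum_sub_distrib]

lemma M_mul {X : Type*} (u : X →₀ ℝ) (c : ℝ) (f : X → ℝ) :
    M u (fun a => c * f a) = c * M u f := by
  simp only [M, Finsupp.sum, Finset.mul_sum]
  exact Finset.sum_congr rfl fun _ _ => by ring

lemma M_sum {X ι : Type*} (u : X →₀ ℝ) (s : Finset ι) (f : ι → X → ℝ) :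
    M u (fun a => ∑ i ∈ s, f i a) = ∑ i ∈ s, M u (f i) := by
  simp only [M, Finsupp.sum, Finset.mul_sum]
  exact Finset.sum_comm

lemma M_const {X : Type*} {u : X →₀ ℝ} (hu : u ∈ Δf X) (c : ℝ) : M u (fun _ => c) = c := by
  have := hu.2
  simp only [M, Finsupp.sum] at *
  rw [← Finset.sum_mul, this, one_mul]

lemma M_mono {X : Type*} {u : X →₀ ℝ} (hu : u ∈ Δf X) {f g : X → ℝ} (h : ∀ a, f a ≤ g a) :
    M u f ≤ M u g :=
  Finset.sum_le_sum fun a _ => mul_le_mul_of_nonneg_left (h a) (hu.1 a)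

lemma M_single {X : Type*} (a : X) (f : X → ℝ) : M (Finsupp.single a 1) f = f a := by
  simp [M]

lemma single_mem {X : Type*} (a : X) : Finsupp.single a (1:ℝ) ∈ Δf X := by
  refine ⟨fun b => ?_, by simp⟩
  classical
  rw [Finsupp.single_apply]; split_ifs <;> norm_num

/-- One step operator. -/
noncomputable def U (q : K → A → (K → ℝ)) (σ : List (K × A) → K → (A →₀ ℝ))
    (F : List (K × A) × K → ℝ) : List (K × A) × K → ℝ := fun hk =>
  M (σ hk.1 hk.2) fun a => ∑ k', q hk.2 a k' * F (hk.1 ++ [(hk.2, a)], k')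

/-- Expectation at stage `t`. -/
noncomputable def E (q : K → A → (K → ℝ)) (σ : List (K × A) → K → (A →₀ ℝ)) (k : K) (t : ℕ)
    (F : List (K × A) × K → ℝ) : ℝ := M (hist q σ k t) F

variable {q : K → A → (K → ℝ)} {g : K → A → ℝ} {σ : List (K × A) → K → (A →₀ ℝ)}

lemma E_zero (k : K) (F : List (K × A) × K → ℝ) : E q σ k 0 F = F ([], k) := by
  simp [E, hist, M_single]

lemma E_succ (k : K) (t : ℕ) (F : List (K × A) × K → ℝ) :
    E q σ k (t + 1) F = E q σ k t (U q σ F) := by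
  simp only [E, hist]
  rw [M_eq_lc, map_finsuppSum]
  conv_rhs => rw [M]
  refine Finset.sum_congr rfl fun hk _ => ?_
  dsimp only
  rw [map_finsuppSum, U, M, Finsupp.mul_sum]
  refine Finset.sum_congr rfl fun a _ => ?_
  dsimp only
  rw [map_sum, ← mul_assoc, Finset.mul_sum]
  refine Finset.sum_congr rfl fun k' _ => ?_
  rw [Finsupp.linearCombination_single, smul_eq_mul]
  ring

/-- Conditional stage payoff. -/
noncomputable def G (g : K → A → ℝ) (σ : List (K × A) → K → (A →₀ ℝ)) : List (K × A) × K → ℝ :=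
  fun hk => M (σ hk.1 hk.2) (g hk.2)

lemma stagePay_eq (k : K) (t : ℕ) : stagePay q g σ k t = E q σ k t (G g σ) := by
  simp only [stagePay, E]
  conv_rhs => rw [M]
  refine Finset.sum_congr rfl fun hk _ => ?_
  dsimp only
  rw [G, M, Finsupp.mul_sum]
  refine Finset.sum_congr rfl fun a _ => ?_
  ring

lemma U_mono (hq : ∀ k a, q k a ∈ ΔK K) (hσ : IsStrat σ) {F F' : List (K × A) × K → ℝ}
    (h : ∀ x, F x ≤ F' x) (x) : U q σ F x ≤ U q σ F' x :=
  M_mono (hσ _ _) fun a => Finset.sum_le_sum fun k' _ =>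
    mul_le_mul_of_nonneg_left (h _) ((hq _ _).1 _)

lemma U_const (hq : ∀ k a, q k a ∈ ΔK K) (hσ : IsStrat σ) (c : ℝ) :
    U q σ (fun _ => c) = fun _ => c := by
  funext x
  have : ∀ a, ∑ k', q x.2 a k' * c = c := fun a => by
    rw [← Finset.sum_mul, (hq _ _).2, one_mul]
  simp only [U, this]
  exact M_const (hσ _ _) c

lemma E_mono (hq : ∀ k a, q k a ∈ ΔK K) (hσ : IsStrat σ) (k : K) (t : ℕ) :
    ∀ {F F' : List (K × A) × K → ℝ}, (∀ x, F x ≤ F' x) → E q σ k t F ≤ E q σ k t F' := by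
  induction t with
  | zero => intro F F' h; simpa [E_zero] using h _
  | succ t ih => intro F F' h; rw [E_succ, E_succ]; exact ih (U_mono hq hσ h)

lemma E_const (hq : ∀ k a, q k a ∈ ΔK K) (hσ : IsStrat σ) (k : K) (t : ℕ) (c : ℝ) :
    E q σ k t (fun _ => c) = c := by
  induction t with
  | zero => simp [E_zero]
  | succ t ih => rw [E_succ, U_const hq hσ, ih]

lemma stagePay_mem (hq : ∀ k a, q k a ∈ ΔK K) (hg : ∀ k a, g k a ∈ Icc (0:ℝ) 1)
    (hσ : IsStrat σ) (k : K) (t : ℕ) : stagePay q g σ k t ∈ Icc (0:ℝ) 1 := by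
  rw [stagePay_eq]
  constructor
  · rw [← E_const hq hσ k t 0]
    refine E_mono hq hσ k t fun x => ?_
    rw [← M_const (hσ x.1 x.2) 0]
    exact M_mono (hσ _ _) fun a => (hg _ _).1
  · conv_rhs => rw [← E_const hq hσ k t 1]
    refine E_mono hq hσ k t fun x => ?_
    rw [← M_const (hσ x.1 x.2) 1]
    exact M_mono (hσ _ _) fun a => (hg _ _).2

lemma E_first (k : K) (t : ℕ) : ∀ F : List (K × A) × K → ℝ,
    E q σ k (t + 1) F = M (σ [] k) fun a => ∑ j, q k a j *
      E q (fun h => σ ((k, a) :: h)) j t (fun x => F ((k, a) :: x.1, x.2)) := by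
  induction t with
  | zero => intro F; rw [E_succ, E_zero]; simp [U, E_zero]
  | succ t ih =>
    intro F
    rw [E_succ, ih]
    simp only [E_succ]
    rfl

lemma stagePay_zero (k : K) : stagePay q g σ k 0 = M (σ [] k) (g k) := by
  rw [stagePay_eq, E_zero, G]

lemma stagePay_succ (k : K) (t : ℕ) : stagePay q g σ k (t + 1) =
    M (σ [] k) fun a => ∑ j, q k a j * stagePay q g (fun h => σ ((k, a) :: h)) j t := by
  simp only [stagePay_eq]
  rw [E_first]
  rfl

lemma stagePay_congr {τ : List (K × A) → K → (A →₀ ℝ)} (j : K) (h0 : σ [] j = τ [] j)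
    (h1 : ∀ a h, σ ((j, a) :: h) = τ ((j, a) :: h)) (t : ℕ) :
    stagePay q g σ j t = stagePay q g τ j t := by
  cases t with
  | zero => rw [stagePay_zero, stagePay_zero, h0]
  | succ t => rw [stagePay_succ, stagePay_succ, h0]; simp only [h1]

/-- Abel summation bound. -/
lemma abel_bound {θ : ℕ → ℝ} (hθ : IsEval θ) {z R : ℕ → ℝ} {B C c : ℝ} (hR : ∀ n, |R n| ≤ B)
    (hz : ∀ n, |z n| ≤ C) (h : ∀ n, c + R (n + 1) - R n ≤ z n) :
    c - 2 * B * impatience θ ≤ ∑' n, θ n * z n := by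
  have hs : Summable θ := by
    by_contra hn
    have := hθ.2
    rw [tsum_eq_zero_of_not_summable hn] at this
    norm_num at this
  have hbd : ∀ (y : ℕ → ℝ) (D : ℝ), (∀ n, |y n| ≤ D) → Summable fun n => θ n * y n := by
    intro y D hy
    refine Summable.of_norm_bounded (hs.mul_right D) fun n => ?_
    rw [Real.norm_eq_abs, abs_mul, abs_of_nonneg (hθ.1 n)]
    exact mul_le_mul_of_nonneg_left (hy n) (hθ.1 n)
  have hs1 : Summable fun n => θ (n + 1) := (summable_nat_add_iff 1).2 hs
  have hI : Summable fun n => |θ (n + 1) - θ n| := (hs1.sub hs).abs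
  set Q : ℕ → ℝ := fun n => R n - R 0 with hQ
  have hQb : ∀ n, |Q n| ≤ 2 * B := fun n => by
    have := abs_sub (R n) (R 0)
    have := hR n
    have := hR 0
    simp only [hQ]; linarith
  have e1 : ∑' n, θ n * Q n = ∑' n, θ (n + 1) * Q (n + 1) := by
    rw [(hbd Q _ hQb).tsum_eq_zero_add]; simp [hQ]
  have sQ1 : Summable fun n => θ n * Q (n + 1) := hbd _ _ fun n => hQb (n + 1)
  have sQ : Summable fun n => θ (n + 1) * Q (n + 1) := (summable_nat_add_iff 1).2 (hbd Q _ hQb)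
  have e2 : ∑' n, θ n * (c + Q (n + 1) - Q n)
      = c + ∑' n, (θ n - θ (n + 1)) * Q (n + 1) := by
    have : ∀ n, θ n * (c + Q (n + 1) - Q n) = θ n * c + (θ n * Q (n + 1) - θ n * Q n) :=
      fun n => by ring
    simp only [this]
    rw [(hs.mul_right c).tsum_add (sQ1.sub (hbd Q _ hQb)), sQ1.tsum_sub (hbd Q _ hQb), e1,
      tsum_mul_right, hθ.2, one_mul, ← sQ1.tsum_sub sQ]
    simp only [sub_mul]
  have sD : Summable fun n => (θ n - θ (n + 1)) * Q (n + 1) := by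
    simpa only [sub_mul] using sQ1.sub sQ
  have e3 : -(2 * B * impatience θ) ≤ ∑' n, (θ n - θ (n + 1)) * Q (n + 1) := by
    rw [impatience, ← tsum_mul_left, ← tsum_neg]
    refine (hI.mul_left _).neg.tsum_le_tsum (fun n => ?_) sD
    have := neg_abs_le ((θ n - θ (n + 1)) * Q (n + 1))
    rw [abs_mul, abs_sub_comm] at this
    have h2 := mul_le_mul_of_nonneg_left (hQb (n + 1)) (abs_nonneg (θ (n + 1) - θ n))
    linarith
  have e4 : ∑' n, θ n * (c + Q (n + 1) - Q n) ≤ ∑' n, θ n * z n := by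
    refine Summable.tsum_le_tsum (fun n => mul_le_mul_of_nonneg_left ?_ (hθ.1 n)) ?_ (hbd z C hz)
    · have := h n; simp only [hQ]; linarith
    · refine hbd _ (|c| + 2 * B + 2 * B) fun n => ?_
      have a1 := abs_sub (c + Q (n + 1)) (Q n)
      have a2 := abs_add_le c (Q (n + 1))
      linarith [hQb n, hQb (n + 1)]
  linarith

end Helpers

end Stmt17

namespace Stmt17

section Helpers2
variable {K A : Type*} [Fintype K]

/-- Transition operator. -/
noncomputable def T (P : K → K → ℝ) : (K → ℝ) →ₗ[ℝ] (K → ℝ) where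
  toFun f k := ∑ j, P k j * f j
  map_add' f f' := by funext k; simp [mul_add, Finset.sum_add_distrib]
  map_smul' c f := by
    funext k; simp only [Pi.smul_apply, smul_eq_mul, RingHom.id_apply, Finset.mul_sum]
    exact Finset.sum_congr rfl fun _ _ => by ring

lemma T_apply (P : K → K → ℝ) (f : K → ℝ) (k : K) : T P f k = ∑ j, P k j * f j := rfl

lemma avg_abs_le {p : K → ℝ} (hp : p ∈ ΔK K) {f : K → ℝ} {B : ℝ} (hf : ∀ k, |f k| ≤ B) :
    |∑ j, p j * f j| ≤ B := by
  refine (Finset.abs_sum_le_sum_abs _ _).trans ?_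
  calc ∑ j, |p j * f j| ≤ ∑ j, p j * B := Finset.sum_le_sum fun j _ => by
        rw [abs_mul, abs_of_nonneg (hp.1 j)]
        exact mul_le_mul_of_nonneg_left (hf j) (hp.1 j)
    _ = B := by rw [← Finset.sum_mul, hp.2, one_mul]

lemma T_pow_bound {P : K → K → ℝ} (hP : ∀ k, P k ∈ ΔK K) {f : K → ℝ} {B : ℝ}
    (hf : ∀ k, |f k| ≤ B) (n : ℕ) : ∀ k, |(T P ^ n) f k| ≤ B := by
  induction n with
  | zero => simpa using hf
  | succ n ih =>
    intro k
    rw [pow_succ', Module.End.mul_apply, T_apply]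
    exact avg_abs_le (hP k) ih

lemma exists_bd (f : K → ℝ) : ∃ B, ∀ k, |f k| ≤ B :=
  ⟨∑ j, |f j|, fun k => Finset.single_le_sum (f := fun j => |f j|)
    (fun _ _ => abs_nonneg _) (Finset.mem_univ k)⟩

lemma nat_bound {x B : ℝ} (h : ∀ n : ℕ, n * x ≤ B) : x ≤ 0 := by
  by_contra hx
  push Not at hx
  obtain ⟨n, hn⟩ := exists_nat_gt (B / x)
  rw [div_lt_iff₀ hx] at hn
  linarith [h n]

lemma chain_decomp {P : K → K → ℝ} (hP : ∀ k, P k ∈ ΔK K) (r : K → ℝ) :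
    ∃ ρ h : K → ℝ, T P ρ = ρ ∧ r = ρ + (h - T P h) := by
  set D : (K → ℝ) →ₗ[ℝ] (K → ℝ) := LinearMap.id - T P with hD
  have hdis : Disjoint (LinearMap.ker D) (LinearMap.range D) := by
    rw [Submodule.disjoint_def]
    rintro x hx ⟨z, hz⟩
    have hTx : T P x = x := by
      have : x - T P x = 0 := hx
      exact (sub_eq_zero.1 this).symm
    have hTz : T P z = z - x := by
      have : z - T P z = x := hz
      rw [← this]; abel
    have hn : ∀ n : ℕ, (T P ^ n) z = z - (n : ℝ) • x := by
      intro n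
      induction n with
      | zero => simp
      | succ n ih =>
        rw [pow_succ', Module.End.mul_apply, ih, map_sub, map_smul, hTz, hTx]
        push_cast; rw [add_smul, one_smul]; abel
    obtain ⟨B, hB⟩ := exists_bd z
    funext k
    have hk : ∀ n : ℕ, |z k - n * x k| ≤ B := fun n => by
      have := T_pow_bound hP hB n k
      rw [hn] at this
      simpa using this
    have h1 : x k ≤ 0 := nat_bound (B := B + B) fun n => by
      have := abs_le.1 (hk n); have := abs_le.1 (hB k); linarith
    have h2 : - x k ≤ 0 := nat_bound (B := B + B) fun n => by
      have := abs_le.1 (hk n); have := abs_le.1 (hB k); linarith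
    show x k = 0
    linarith
  have htop := Submodule.eq_top_of_disjoint _ _
    (by rw [add_comm]; exact D.finrank_range_add_finrank_ker.ge) hdis
  have hr : r ∈ LinearMap.ker D ⊔ LinearMap.range D := by rw [htop]; trivial
  obtain ⟨ρ, hρ, y, ⟨h, hh⟩, hs⟩ := Submodule.mem_sup.1 hr
  refine ⟨ρ, h, ?_, ?_⟩
  · have : ρ - T P ρ = 0 := hρ
    exact (sub_eq_zero.1 this).symm
  · rw [← hs, ← hh]; rfl

variable {q : K → A → (K → ℝ)} {g : K → A → ℝ}

/-- One-state closed convex hull of transition/payoff pairs. -/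
def C (q : K → A → (K → ℝ)) (g : K → A → ℝ) (k : K) : Set ((K → ℝ) × ℝ) :=
  closure (convexHull ℝ (range fun a => (q k a, g k a)))

lemma convex_Δf (X : Type*) : Convex ℝ (Δf X) := by
  have key : ∀ u : X →₀ ℝ, u.sum (fun _ r => r) = Finsupp.linearCombination ℝ (fun _ => (1:ℝ)) u := by
    intro u; simp [Finsupp.linearCombination_apply]
  intro u hu v hv a b ha hb hab
  refine ⟨fun x => ?_, ?_⟩
  · have := mul_nonneg ha (hu.1 x)
    have := mul_nonneg hb (hv.1 x)
    simp only [Finsupp.add_apply, Finsupp.smul_apply, smul_eq_mul]; linarith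
  · rw [key, map_add, map_smul, map_smul, ← key, ← key, hu.2, hv.2]
    simpa using hab

lemma hull_mixed {k : K} {c : (K → ℝ) × ℝ}
    (hc : c ∈ convexHull ℝ (range fun a => (q k a, g k a))) :
    ∃ u ∈ Δf A, (∀ j, c.1 j = M u (fun a => q k a j)) ∧ c.2 = M u (g k) := by
  have : convexHull ℝ (range fun a => (q k a, g k a)) ⊆
      (Finsupp.linearCombination ℝ (fun a => (q k a, g k a))) '' Δf A := by
    refine convexHull_min ?_ ((convex_Δf A).linear_image _)
    rintro _ ⟨a, rfl⟩
    exact ⟨Finsupp.single a 1, single_mem a, by simp⟩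
  obtain ⟨u, hu, rfl⟩ := this hc
  refine ⟨u, hu, fun j => ?_, ?_⟩
  · simp [M, Finsupp.linearCombination_apply, Finsupp.sum, Prod.fst_sum]
  · simp [M, Finsupp.linearCombination_apply, Finsupp.sum, Prod.snd_sum]

lemma C_approx {k : K} {c : (K → ℝ) × ℝ} (hc : c ∈ C q g k) {δ : ℝ} (hδ : 0 < δ) :
    ∃ u ∈ Δf A, (∀ j, |M u (fun a => q k a j) - c.1 j| ≤ δ) ∧ |M u (g k) - c.2| ≤ δ := by
  obtain ⟨d, hd, hdc⟩ := Metric.mem_closure_iff.1 hc δ hδ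
  obtain ⟨u, hu, h1, h2⟩ := hull_mixed hd
  rw [dist_comm, Prod.dist_eq, max_lt_iff] at hdc
  refine ⟨u, hu, fun j => ?_, ?_⟩
  · rw [← h1, ← Real.dist_eq]; exact (dist_le_pi_dist _ _ j).trans hdc.1.le
  · rw [← h2, ← Real.dist_eq]; exact hdc.2.le

/-- Markov strategy. -/
def mk (μ : ℕ → K → (A →₀ ℝ)) : List (K × A) → K → (A →₀ ℝ) := fun h k => μ h.length k

lemma mk_bound (hq : ∀ k a, q k a ∈ ΔK K) {P : K → K → ℝ} (hP : ∀ k, P k ∈ ΔK K) {r : K → ℝ}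
    (hr : ∀ k, |r k| ≤ 1) (t : ℕ) :
    ∀ (μ : ℕ → K → (A →₀ ℝ)) (_ : ∀ n k, μ n k ∈ Δf A) (δ : ℕ → ℝ)
    (_ : ∀ n k, (∑ j, |M (μ n k) (fun a => q k a j) - P k j|) ≤ δ n)
    (_ : ∀ n k, |M (μ n k) (g k) - r k| ≤ δ n) (k : K),
    |stagePay q g (mk μ) k t - (T P ^ t) r k| ≤ ∑ i ∈ Finset.range (t + 1), δ i := by
  induction t with
  | zero =>
    intro μ hμ δ h1 h2 k
    simpa [stagePay_zero, mk] using h2 0 k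
  | succ t ih =>
    intro μ hμ δ h1 h2 k
    have IH := ih (fun n => μ (n + 1)) (fun n => hμ _) (fun n => δ (n + 1)) (fun n => h1 _)
      (fun n => h2 _)
    set x : K → ℝ := fun j => stagePay q g (mk fun n => μ (n + 1)) j t with hx
    set y := (T P ^ t) r with hy
    have e1 : stagePay q g (mk μ) k (t + 1) = ∑ j, M (μ 0 k) (fun a => q k a j) * x j := by
      rw [stagePay_succ]
      have : ∀ a : A, (fun h : List (K × A) => mk μ ((k, a) :: h)) = mk fun n => μ (n + 1) :=
        fun a => rfl
      simp only [this]
      rw [M_sum]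
      refine Finset.sum_congr rfl fun j _ => ?_
      rw [mul_comm, ← M_mul]
      simp only [hx, mk, List.length_nil, mul_comm]
    have e2 : (T P ^ (t + 1)) r k = ∑ j, P k j * y j := by
      rw [pow_succ', Module.End.mul_apply, T_apply]
    have hQ : (fun j => M (μ 0 k) (fun a => q k a j)) ∈ ΔK K := by
      refine ⟨fun j => ?_, ?_⟩
      · rw [← M_const (hμ 0 k) 0]
        exact M_mono (hμ 0 k) fun a => (hq k a).1 j
      · rw [← M_sum]; simp only [(hq k _).2]; exact M_const (hμ 0 k) 1
    have e3 : stagePay q g (mk μ) k (t + 1) - (T P ^ (t + 1)) r k =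
        ∑ j, M (μ 0 k) (fun a => q k a j) * (x j - y j) +
        ∑ j, (M (μ 0 k) (fun a => q k a j) - P k j) * y j := by
      rw [e1, e2, ← Finset.sum_sub_distrib, ← Finset.sum_add_distrib]
      exact Finset.sum_congr rfl fun _ _ => by ring
    rw [e3, Finset.sum_range_succ']
    refine (abs_add_le _ _).trans (add_le_add ?_ ?_)
    · exact avg_abs_le hQ IH
    · refine (Finset.abs_sum_le_sum_abs _ _).trans (le_trans ?_ (h1 0 k))
      refine Finset.sum_le_sum fun j _ => ?_
      rw [abs_mul]
      exact mul_le_of_le_one_right (abs_nonneg _) (T_pow_bound hP hr t j)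

/-- Levels guaranteed from `k`, with a bounded bias sequence. -/
def Gu (q : K → A → (K → ℝ)) (g : K → A → ℝ) (k : K) : Set ℝ :=
  {c | ∃ σ, IsStrat σ ∧ ∃ (R : ℕ → ℝ) (B : ℝ), (∀ n, |R n| ≤ B) ∧
    ∀ n, c + R (n + 1) - R n ≤ stagePay q g σ k n}

/-- Candidate value. -/
noncomputable def u (q : K → A → (K → ℝ)) (g : K → A → ℝ) (k : K) : ℝ := sSup (Gu q g k)

lemma Gu_le (hq : ∀ k a, q k a ∈ ΔK K) (hg : ∀ k a, g k a ∈ Icc (0:ℝ) 1) (k : K) :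
    ∀ c ∈ Gu q g k, c ≤ 1 := by
  rintro c ⟨σ, hσ, R, B, hR, h⟩
  have : c - 1 ≤ 0 := nat_bound (B := B + B) fun n => by
    have : n * (c - 1) ≤ R 0 - R n := by
      induction n with
      | zero => simp
      | succ n ih =>
        have := h n
        have := (stagePay_mem hq hg hσ k n).2
        push_cast; linarith
    have := abs_le.1 (hR 0); have := abs_le.1 (hR n); linarith
  linarith

lemma zero_mem_Gu [Nonempty A] (hq : ∀ k a, q k a ∈ ΔK K) (hg : ∀ k a, g k a ∈ Icc (0:ℝ) 1)
    (k : K) : (0:ℝ) ∈ Gu q g k := by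
  obtain ⟨a⟩ := ‹Nonempty A›
  have hs : IsStrat (fun (_ : List (K × A)) (_ : K) => Finsupp.single a (1:ℝ)) :=
    fun _ _ => single_mem a
  exact ⟨_, hs, fun _ => 0, 0, by simp, fun n => by simpa using (stagePay_mem hq hg hs k n).1⟩

lemma le_u (hq : ∀ k a, q k a ∈ ΔK K) (hg : ∀ k a, g k a ∈ Icc (0:ℝ) 1) {k : K} {c : ℝ}
    (hc : c ∈ Gu q g k) : c ≤ u q g k := le_csSup ⟨1, Gu_le hq hg k⟩ hc

lemma u_mem [Nonempty A] (hq : ∀ k a, q k a ∈ ΔK K) (hg : ∀ k a, g k a ∈ Icc (0:ℝ) 1)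
    (k : K) : u q g k ∈ Icc (0:ℝ) 1 :=
  ⟨le_u hq hg (zero_mem_Gu hq hg k), csSup_le ⟨0, zero_mem_Gu hq hg k⟩ (Gu_le hq hg k)⟩

lemma exists_Gu [Nonempty A] (hq : ∀ k a, q k a ∈ ΔK K) (hg : ∀ k a, g k a ∈ Icc (0:ℝ) 1)
    (k : K) {ε : ℝ} (hε : 0 < ε) : ∃ c ∈ Gu q g k, u q g k - ε ≤ c := by
  obtain ⟨c, hc, h⟩ := exists_lt_of_lt_csSup ⟨0, zero_mem_Gu hq hg k⟩
    (show u q g k - ε < sSup (Gu q g k) by rw [u]; linarith)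
  exact ⟨c, hc, h.le⟩

/-- `u` is excessive. -/
lemma u_exc [Nonempty A] (hq : ∀ k a, q k a ∈ ΔK K) (hg : ∀ k a, g k a ∈ Icc (0:ℝ) 1)
    (k : K) (a : A) : ∑ j, q k a j * u q g j ≤ u q g k := by
  refine le_of_forall_pos_le_add fun ε hε => ?_
  choose c hc hcu using fun j => exists_Gu hq hg j hε
  choose σ hσ R B hR h using hc
  let first : List (K × A) → K → K := fun h k => match h with
    | [] => k
    | x :: _ => x.1
  let τ : List (K × A) → K → (A →₀ ℝ) := fun h k => match h with
    | [] => Finsupp.single a 1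
    | _ :: h => σ (first h k) h k
  have hτ : IsStrat τ := by
    intro h k
    cases h with
    | nil => exact single_mem a
    | cons x h => exact hσ _ _ _
  have hpay : ∀ n, stagePay q g τ k (n + 1) = ∑ j, q k a j * stagePay q g (σ j) j n := by
    intro n
    rw [stagePay_succ]
    simp only [τ]
    rw [M_single]
    refine Finset.sum_congr rfl fun j _ => ?_
    congr 1
    exact stagePay_congr (σ := fun h k => σ (first h k) h k) (τ := σ j) j rfl (fun _ _ => rfl) n
  set c' := ∑ j, q k a j * c j with hc'
  set R1 : ℕ → ℝ := fun n => ∑ j, q k a j * R j n with hR1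
  have hB : ∀ j, B j ≤ ∑ i, |B i| := fun j => (le_abs_self _).trans
    (Finset.single_le_sum (f := fun j => |B j|) (fun _ _ => abs_nonneg _) (Finset.mem_univ j))
  have hR1b : ∀ n, |R1 n| ≤ ∑ i, |B i| := fun n =>
    avg_abs_le (hq k a) fun j => (hR j n).trans (hB j)
  have hmem : c' ∈ Gu q g k := by
    refine ⟨τ, hτ, fun n => match n with
      | 0 => c' + R1 0
      | n + 1 => R1 n, |c'| + ∑ i, |B i|, fun n => ?_, fun n => ?_⟩
    · cases n with
      | zero => exact (abs_add_le _ _).trans (by linarith [hR1b 0])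
      | succ n =>
        have := abs_nonneg c'
        have := hR1b n
        dsimp only; linarith
    · cases n with
      | zero => have := (stagePay_mem hq hg hτ k 0).1; dsimp only; linarith
      | succ n =>
        dsimp only
        rw [hpay, hc', hR1]
        dsimp only
        rw [← Finset.sum_add_distrib, ← Finset.sum_sub_distrib]
        refine Finset.sum_le_sum fun j _ => ?_
        have := mul_le_mul_of_nonneg_left (h j n) ((hq k a).1 j)
        linarith
  have h1 : ∑ j, q k a j * u q g j ≤ c' + ε := by
    have : ∑ j, q k a j * u q g j ≤ ∑ j, q k a j * (c j + ε) := Finset.sum_le_sum fun j _ =>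
      mul_le_mul_of_nonneg_left (by linarith [hcu j]) ((hq k a).1 j)
    simp only [mul_add, Finset.sum_add_distrib, ← Finset.sum_mul, (hq k a).2, one_mul] at this
    exact this
  linarith [le_u hq hg hmem]

/-- `u` dominates the ergodic payoff of relaxed stationary policies. -/
lemma u_chain [Nonempty K] (hq : ∀ k a, q k a ∈ ΔK K)
    (hg : ∀ k a, g k a ∈ Icc (0:ℝ) 1) {P : K → K → ℝ} {r : K → ℝ} (hP : ∀ k, P k ∈ ΔK K)
    (hr : ∀ k, r k ∈ Icc (0:ℝ) 1) (hC : ∀ k, (P k, r k) ∈ C q g k) {p : K → ℝ} (hp : p ∈ ΔK K)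
    (hinv : ∀ j, ∑ k, p k * P k j = p j) : ∑ k, p k * r k ≤ ∑ k, p k * u q g k := by
  obtain ⟨ρ, h, hρ, hrr⟩ := chain_decomp hP r
  have hr1 : ∀ k, |r k| ≤ 1 := fun k => abs_le.2 ⟨by linarith [(hr k).1], (hr k).2⟩
  have hρu : ∀ k, ρ k ≤ u q g k := by
    intro k
    refine le_of_forall_pos_le_add fun ε hε => ?_
    set N : ℝ := ((Fintype.card K : ℕ) : ℝ) with hN
    have hN1 : 1 ≤ N := by rw [hN]; exact_mod_cast Fintype.card_pos
    have hδ : ∀ n : ℕ, 0 < ε / 2 * (1 / 2) ^ n := fun n => by positivity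
    choose μ hμ h1 h2 using fun (n : ℕ) (k : K) =>
      C_approx (hC k) (show 0 < ε / 2 * (1 / 2) ^ n / N from div_pos (hδ n) (by linarith))
    have hb := fun n => mk_bound (g := g) hq hP hr1 n μ hμ (fun n => ε / 2 * (1 / 2) ^ n)
      (fun n k => by
        refine (Finset.sum_le_sum fun j _ => h1 n k j).trans ?_
        rw [Finset.sum_const, Finset.card_univ, nsmul_eq_mul, ← hN]
        exact (mul_div_cancel₀ _ (by linarith)).le)
      (fun n k => (h2 n k).trans (div_le_self (hδ n).le hN1)) k
    have hsum : ∀ n : ℕ, ∑ i ∈ Finset.range (n + 1), ε / 2 * (1 / 2 : ℝ) ^ i ≤ ε := by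
      intro n
      rw [← Finset.mul_sum, geom_sum_eq (by norm_num)]
      have : (0:ℝ) < (1 / 2) ^ (n + 1) := by positivity
      have h3 : ((1 / 2 : ℝ) ^ (n + 1) - 1) / (1 / 2 - 1) = 2 * (1 - (1 / 2) ^ (n + 1)) := by ring
      rw [h3]
      nlinarith
    obtain ⟨B, hB⟩ := exists_bd h
    have hmem : ρ k - ε ∈ Gu q g k := by
      refine ⟨mk μ, fun _ _ => hμ _ _, fun n => - (T P ^ n) h k, B, fun n => ?_, fun n => ?_⟩
      · rw [abs_neg]; exact T_pow_bound hP hB n k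
      · have hn := abs_le.1 ((hb n).trans (hsum n))
        have hρn : (T P ^ n) ρ = ρ := by
          clear hn
          induction n with
          | zero => rfl
          | succ n ih => rw [pow_succ', Module.End.mul_apply, ih, hρ]
        have : (T P ^ n) r = ρ + ((T P ^ n) h - (T P ^ (n + 1)) h) := by
          conv_lhs => rw [hrr]
          rw [map_add, map_sub, hρn, pow_succ, Module.End.mul_apply]
        rw [this] at hn
        simp only [Pi.add_apply, Pi.sub_apply] at hn
        dsimp only
        linarith
    linarith [le_u hq hg hmem]
  have e : ∑ k, p k * r k = ∑ k, p k * ρ k := by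
    have h3 : ∑ k, p k * T P h k = ∑ k, p k * h k := by
      simp only [T_apply, Finset.mul_sum]
      rw [Finset.sum_comm]
      refine Finset.sum_congr rfl fun j _ => ?_
      rw [← hinv j, Finset.sum_mul]
      exact Finset.sum_congr rfl fun _ _ => by ring
    conv_lhs => rw [hrr]
    simp only [Pi.add_apply, Pi.sub_apply, mul_add, mul_sub, Finset.sum_add_distrib,
      Finset.sum_sub_distrib, h3]
    ring
  rw [e]
  exact Finset.sum_le_sum fun k _ => mul_le_mul_of_nonneg_left (hρu k) (hp.1 k)

end Helpers2

end Stmt17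

namespace Stmt17

section Helpers3
variable {K A : Type*} [Fintype K] [DecidableEq K] {q : K → A → (K → ℝ)} {g : K → A → ℝ}

lemma ΔK_eq : ΔK K = stdSimplex ℝ K := rfl

lemma compact_ΔK : IsCompact (ΔK K) := isCompact_stdSimplex ℝ K

lemma convex_ΔK : Convex ℝ (ΔK K) := convex_stdSimplex ℝ K

lemma dirac_mem (k : K) : dirac k ∈ ΔK K :=
  ⟨fun j => by simp only [dirac]; split_ifs <;> norm_num, by simp [dirac]⟩

lemma C_sub (hq : ∀ k a, q k a ∈ ΔK K) (hg : ∀ k a, g k a ∈ Icc (0:ℝ) 1) (k : K) :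
    C q g k ⊆ ΔK K ×ˢ Icc (0:ℝ) 1 := by
  refine closure_minimal (convexHull_min ?_ (convex_ΔK.prod (convex_Icc _ _)))
    (compact_ΔK.isClosed.prod isClosed_Icc)
  rintro _ ⟨a, rfl⟩
  exact ⟨hq k a, hg k a⟩

lemma C_compact (hq : ∀ k a, q k a ∈ ΔK K) (hg : ∀ k a, g k a ∈ Icc (0:ℝ) 1) (k : K) :
    IsCompact (C q g k) :=
  (compact_ΔK.prod isCompact_Icc).of_isClosed_subset isClosed_closure (C_sub hq hg k)

lemma C_convex (k : K) : Convex ℝ (C q g k) := (convex_convexHull ℝ _).closure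

/-- Disintegrated couples. -/
def S (q : K → A → (K → ℝ)) (g : K → A → ℝ) : Set ((K → ℝ) × ((K → ℝ) × ℝ)) :=
  (fun x : (K → ℝ) × (K → (K → ℝ) × ℝ) => (x.1, ∑ k, x.1 k • x.2 k)) ''
    (ΔK K ×ˢ pi univ (C q g))

lemma S_closed (hq : ∀ k a, q k a ∈ ΔK K) (hg : ∀ k a, g k a ∈ Icc (0:ℝ) 1) :
    IsClosed (S q g) := by
  refine IsCompact.isClosed (IsCompact.image ?_ ?_)
  · exact compact_ΔK.prod (isCompact_univ_pi fun k => C_compact hq hg k)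
  · fun_prop

lemma S_convex : Convex ℝ (S q g) := by
  rintro _ ⟨⟨p, c⟩, ⟨hp, hc⟩, rfl⟩ _ ⟨⟨p', c'⟩, ⟨hp', hc'⟩, rfl⟩ a b ha hb hab
  classical
  dsimp only at hp hp' hc hc' ⊢
  set P : K → ℝ := a • p + b • p' with hP
  have hPm : P ∈ ΔK K := convex_ΔK hp hp' ha hb hab
  have hPk : ∀ k, P k = a * p k + b * p' k := fun k => rfl
  refine ⟨(P, fun k => if P k = 0 then c k else
    (a * p k / P k) • c k + (b * p' k / P k) • c' k), ⟨hPm, fun k _ => ?_⟩, ?_⟩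
  · dsimp only
    split_ifs with h0
    · exact hc k trivial
    · have hpos : 0 < P k := lt_of_le_of_ne (hPm.1 k) (Ne.symm h0)
      refine C_convex k (hc k trivial) (hc' k trivial) ?_ ?_ ?_
      · exact div_nonneg (mul_nonneg ha (hp.1 k)) hpos.le
      · exact div_nonneg (mul_nonneg hb (hp'.1 k)) hpos.le
      · rw [← add_div, ← hPk, div_self h0]
  · dsimp only
    refine Prod.ext rfl ?_
    show _ = a • (∑ k, p k • c k) + b • ∑ k, p' k • c' k
    rw [Finset.smul_sum, Finset.smul_sum, ← Finset.sum_add_distrib]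
    refine Finset.sum_congr rfl fun k _ => ?_
    split_ifs with h0
    · have h1 := mul_nonneg ha (hp.1 k)
      have h2 := mul_nonneg hb (hp'.1 k)
      have h3 := hPk k
      rw [h0] at h3
      have h4 : a * p k = 0 := by linarith
      have h5 : b * p' k = 0 := by linarith
      rw [smul_smul, smul_smul, h4, h5, h0]; simp
    · rw [smul_add, smul_smul, smul_smul, smul_smul, smul_smul, mul_div_cancel₀ _ h0,
        mul_div_cancel₀ _ h0]

lemma RR_decomp (hq : ∀ k a, q k a ∈ ΔK K) (hg : ∀ k a, g k a ∈ Icc (0:ℝ) 1)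
    {py : (K → ℝ) × ℝ} (h : py ∈ RR q g) : ∃ (P : K → K → ℝ) (r : K → ℝ),
    (∀ k, (P k, r k) ∈ C q g k) ∧ (∀ j, ∑ k, py.1 k * P k j = py.1 j) ∧
    ∑ k, py.1 k * r k = py.2 := by
  let L : (((K → ℝ) × ℝ) × ((K → ℝ) × ℝ)) →ₗ[ℝ] (K → ℝ) × ((K → ℝ) × ℝ) :=
    ((LinearMap.fst ℝ _ _).comp (LinearMap.fst ℝ _ _)).prod (LinearMap.snd ℝ _ _)
  have hL : Continuous L := by
    show Continuous fun x : (((K → ℝ) × ℝ) × ((K → ℝ) × ℝ)) => (x.1.1, x.2)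
    fun_prop
  have hsub : closure (convexHull ℝ (GraphF q g)) ⊆ L ⁻¹' (S q g) := by
    refine closure_minimal (convexHull_min ?_ (S_convex.linear_preimage L))
      ((S_closed hq hg).preimage hL)
    rintro _ ⟨k, a, y, hy, rfl⟩
    refine ⟨(dirac k, fun k' => (q k' a, g k' a)), ⟨dirac_mem k, fun k' _ =>
      subset_closure (subset_convexHull ℝ _ ⟨a, rfl⟩)⟩, ?_⟩
    refine Prod.ext rfl ?_
    show ∑ k', dirac k k' • (q k' a, g k' a) = (q k a, g k a)
    simp [dirac]
  obtain ⟨⟨p, c⟩, ⟨hp, hc⟩, he⟩ := hsub h.2.2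
  have he1 : p = py.1 := congrArg Prod.fst he
  have he2 : ∑ k, p k • c k = py := congrArg Prod.snd he
  subst he1
  refine ⟨fun k => (c k).1, fun k => (c k).2, fun k => hc k trivial, fun j => ?_, ?_⟩
  · have := congrFun (congrArg Prod.fst he2) j
    simpa [Prod.fst_sum] using this
  · have := congrArg Prod.snd he2
    simpa [Prod.snd_sum] using this

lemma u_RR [Nonempty K] (hq : ∀ k a, q k a ∈ ΔK K)
    (hg : ∀ k a, g k a ∈ Icc (0:ℝ) 1) {py : (K → ℝ) × ℝ} (h : py ∈ RR q g) :
    py.2 ≤ ∑ k, py.1 k * u q g k := by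
  obtain ⟨P, r, hC, hinv, hy⟩ := RR_decomp hq hg h
  rw [← hy]
  exact u_chain hq hg (fun k => (C_sub hq hg k (hC k)).1) (fun k => (C_sub hq hg k (hC k)).2)
    hC h.1 hinv

lemma hull_box (hq : ∀ k a, q k a ∈ ΔK K) (hg : ∀ k a, g k a ∈ Icc (0:ℝ) 1) :
    closure (convexHull ℝ (GraphF q g)) ⊆
      (ΔK K ×ˢ Icc (0:ℝ) 1) ×ˢ (ΔK K ×ˢ Icc (0:ℝ) 1) := by
  have hc : Convex ℝ (ΔK K ×ˢ Icc (0:ℝ) 1) := convex_ΔK.prod (convex_Icc _ _)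
  have hcl : IsClosed (ΔK K ×ˢ Icc (0:ℝ) 1) := compact_ΔK.isClosed.prod isClosed_Icc
  refine closure_minimal (convexHull_min ?_ (hc.prod hc)) (hcl.prod hcl)
  rintro _ ⟨k, a, y, hy, rfl⟩
  exact ⟨⟨dirac_mem k, hy⟩, ⟨hq k a, hg k a⟩⟩

lemma hull_adjust (hg : ∀ k a, g k a ∈ Icc (0:ℝ) 1)
    {x : ((K → ℝ) × ℝ) × ((K → ℝ) × ℝ)} (hx : x ∈ closure (convexHull ℝ (GraphF q g))) :
    ((x.1.1, x.2.2), x.2) ∈ closure (convexHull ℝ (GraphF q g)) := by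
  let L : (((K → ℝ) × ℝ) × ((K → ℝ) × ℝ)) →ₗ[ℝ] (((K → ℝ) × ℝ) × ((K → ℝ) × ℝ)) :=
    (((LinearMap.fst ℝ _ _).comp (LinearMap.fst ℝ _ _)).prod
      ((LinearMap.snd ℝ _ _).comp (LinearMap.snd ℝ _ _))).prod (LinearMap.snd ℝ _ _)
  have hL : Continuous L := by
    show Continuous fun x : (((K → ℝ) × ℝ) × ((K → ℝ) × ℝ)) => ((x.1.1, x.2.2), x.2)
    fun_prop
  have hsub : closure (convexHull ℝ (GraphF q g)) ⊆
      L ⁻¹' closure (convexHull ℝ (GraphF q g)) := by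
    refine closure_minimal (convexHull_min ?_
      ((convex_convexHull ℝ _).closure.linear_preimage L)) (isClosed_closure.preimage hL)
    rintro _ ⟨k, a, y, hy, rfl⟩
    exact subset_closure (subset_convexHull ℝ _ ⟨k, a, g k a, hg k a, rfl⟩)
  exact hsub hx

/-- Separation: approximate optimality inequality with a bias vector. -/
lemma sep [Nonempty K] [Nonempty A] (hq : ∀ k a, q k a ∈ ΔK K)
    (hg : ∀ k a, g k a ∈ Icc (0:ℝ) 1) {w : K → ℝ}
    (hw : ∀ py ∈ RR q g, py.2 ≤ ∑ k, py.1 k * w k) {ε : ℝ} (hε : 0 < ε) :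
    ∃ h : K → ℝ, ∀ k a, g k a ≤ w k + ε + h k - ∑ j, q k a j * h j := by
  let W : (K → ℝ) →ₗ[ℝ] ℝ := ∑ k, w k • LinearMap.proj k
  have hW : ∀ p, W p = ∑ k, p k * w k := fun p => by
    simp [W, LinearMap.sum_apply, mul_comm]
  let L : (((K → ℝ) × ℝ) × ((K → ℝ) × ℝ)) →ₗ[ℝ] (K → ℝ) × ℝ :=
    { toFun := fun x => (x.1.1 - x.2.1, x.2.2 - W x.1.1)
      map_add' := fun x y => by
        refine Prod.ext ?_ ?_
        · simp only [Prod.fst_add, Prod.snd_add]; abel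
        · simp only [Prod.fst_add, Prod.snd_add, map_add]; ring
      map_smul' := fun c x => by
        refine Prod.ext ?_ ?_
        · simp only [Prod.smul_fst, Prod.smul_snd, RingHom.id_apply, smul_sub]
        · simp only [Prod.smul_fst, Prod.smul_snd, RingHom.id_apply, smul_sub, map_smul] }
  have hLa : ∀ x, L x = (x.1.1 - x.2.1, x.2.2 - ∑ k, x.1.1 k * w k) := fun x => by
    rw [← hW]; rfl
  have hL : Continuous L := L.continuous_of_finiteDimensional
  set H := closure (convexHull ℝ (GraphF q g)) with hH
  have hHc : IsCompact H :=
    ((compact_ΔK.prod isCompact_Icc).prod (compact_ΔK.prod isCompact_Icc)).of_isClosed_subset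
      isClosed_closure (hull_box hq hg)
  have hdisj : Disjoint (L '' H) (({0} : Set (K → ℝ)) ×ˢ Ici ε) := by
    rw [Set.disjoint_left]
    rintro _ ⟨x, hx, rfl⟩ ⟨h0, h1⟩
    rw [hLa] at h0 h1
    have h0' : x.1.1 - x.2.1 = 0 := h0
    have h1' : ε ≤ x.2.2 - ∑ k, x.1.1 k * w k := h1
    have hb := hull_box hq hg hx
    have ha := hull_adjust hg hx
    have hxe : x.2 = (x.1.1, x.2.2) := Prod.ext (sub_eq_zero.1 h0').symm rfl
    rw [hxe] at ha
    have := hw (x.1.1, x.2.2) ⟨hb.1.1, hb.2.2, ha⟩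
    dsimp only at this
    linarith
  obtain ⟨f, s, t, hfs, hst, hft⟩ := geometric_hahn_banach_compact_closed
    ((convex_convexHull ℝ _).closure.linear_image L) (hHc.image hL)
    ((convex_singleton 0).prod (convex_Ici ε)) (isClosed_singleton.prod isClosed_Ici) hdisj
  set c : ℝ := f (0, 1) with hc
  set η : K → ℝ := fun k => f (dirac k, 0) with hη
  have hf : ∀ (z : K → ℝ) (y : ℝ), f (z, y) = ∑ k, z k * η k + c * y := by
    intro z y
    have : (z, y) = ∑ k, z k • ((dirac k : K → ℝ), (0:ℝ)) + y • ((0 : K → ℝ), (1:ℝ)) := by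
      refine Prod.ext ?_ ?_
      · funext j
        simp [Prod.fst_sum, dirac]
      · simp [Prod.snd_sum]
    rw [this, map_add, map_sum, map_smul]
    simp only [map_smul, smul_eq_mul, hη, hc]
    ring
  have hct : ∀ y, ε ≤ y → t < c * y := fun y hy => by
    have := hft (0, y) ⟨rfl, hy⟩
    simpa [hf] using this
  have hgr : ∀ k a, η k - ∑ j, q k a j * η j + c * (g k a - w k) < s := by
    intro k a
    have := hfs _ ⟨_, subset_closure (subset_convexHull ℝ _ ⟨k, a, g k a, hg k a, rfl⟩), rfl⟩
    rw [hLa, hf] at this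
    simpa [dirac, sub_mul, Finset.sum_sub_distrib] using this
  have hc0 : 0 ≤ c := by
    by_contra hneg
    push Not at hneg
    have h1 := hct (max ε (t / c)) (le_max_left _ _)
    have h2 := mul_le_mul_of_nonpos_left (le_max_right ε (t / c)) hneg.le
    rw [mul_div_cancel₀ _ hneg.ne] at h2
    linarith
  have hcpos : 0 < c := by
    rcases hc0.lt_or_eq with h | h
    · exact h
    exfalso
    have ht := hct ε le_rfl
    rw [← h, zero_mul] at ht
    obtain ⟨k, hk⟩ := Finite.exists_max η
    obtain ⟨a⟩ := ‹Nonempty A›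
    have h1 := hgr k a
    rw [← h, zero_mul] at h1
    have h2 : ∑ j, q k a j * η j ≤ ∑ j, q k a j * η k := Finset.sum_le_sum fun j _ =>
      mul_le_mul_of_nonneg_left (hk j) ((hq k a).1 j)
    rw [← Finset.sum_mul, (hq k a).2, one_mul] at h2
    linarith
  refine ⟨fun k => - η k / c, fun k a => ?_⟩
  have h1 := hgr k a
  have h2 := hct ε le_rfl
  have h3 : ∑ j, q k a j * (-η j / c) = - (∑ j, q k a j * η j) / c := by
    rw [neg_div, Finset.sum_div, ← Finset.sum_neg_distrib]
    exact Finset.sum_congr rfl fun _ _ => by ring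
  rw [h3]
  have h4 : c * (g k a - w k) < c * ε + (- η k - - ∑ j, q k a j * η j) := by linarith
  have h5 : g k a - w k < ε + (- η k - - ∑ j, q k a j * η j) / c := by
    rw [← mul_lt_mul_iff_right₀ hcpos, mul_add, mul_div_cancel₀ _ hcpos.ne']
    exact h4
  rw [sub_div] at h5
  linarith

/-- Upper bound on payoffs. -/
lemma upper [Nonempty K] [Nonempty A] (hq : ∀ k a, q k a ∈ ΔK K)
    (hg : ∀ k a, g k a ∈ Icc (0:ℝ) 1) {w : K → ℝ}
    (hw : ∀ py ∈ RR q g, py.2 ≤ ∑ k, py.1 k * w k)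
    (hexc : ∀ k a, ∑ j, q k a j * w j ≤ w k) {ε : ℝ} (hε : 0 < ε) :
    ∃ B : ℝ, ∀ σ, IsStrat σ → ∀ k θ, IsEval θ →
      payoff q g θ σ k ≤ w k + ε + B * impatience θ := by
  obtain ⟨h, hh⟩ := sep hq hg hw hε
  obtain ⟨B, hB⟩ := exists_bd h
  refine ⟨2 * B, fun σ hσ k θ hθ => ?_⟩
  have hUle : ∀ x, U q σ (fun y => w y.2) x ≤ w x.2 := fun x => by
    rw [← M_const (hσ x.1 x.2) (w x.2)]
    exact M_mono (hσ _ _) fun a => hexc x.2 a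
  have hEw : ∀ t, E q σ k t (fun y => w y.2) ≤ w k := by
    intro t
    induction t with
    | zero => rw [E_zero]
    | succ t ih => rw [E_succ]; exact (E_mono hq hσ k t hUle).trans ih
  set R : ℕ → ℝ := fun t => E q σ k t (fun y => h y.2) with hR
  have hRb : ∀ n, |R n| ≤ B := fun n => by
    rw [abs_le]
    constructor
    · rw [← E_const hq hσ k n (-B)]
      exact E_mono hq hσ k n fun x => (abs_le.1 (hB x.2)).1
    · rw [← E_const hq hσ k n B]
      exact E_mono hq hσ k n fun x => (abs_le.1 (hB x.2)).2
  have hstep : ∀ n, stagePay q g σ k n ≤ w k + ε + R n - R (n + 1) := by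
    intro n
    have h1 : stagePay q g σ k n ≤ E q σ k n (fun x => ((w x.2 + ε) + h x.2) -
        U q σ (fun y => h y.2) x) := by
      rw [stagePay_eq]
      refine E_mono hq hσ k n fun x => ?_
      have : G g σ x ≤ M (σ x.1 x.2) (fun a => (w x.2 + ε + h x.2) - ∑ j, q x.2 a j * h j) :=
        M_mono (hσ _ _) fun a => hh x.2 a
      rw [M_sub, M_const (hσ _ _)] at this
      exact this
    have h2 : E q σ k n (fun x => ((w x.2 + ε) + h x.2) - U q σ (fun y => h y.2) x)
        = E q σ k n (fun y => w y.2) + ε + R n - R (n + 1) := by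
      rw [hR]
      dsimp only
      rw [E_succ]
      conv_rhs => rw [← E_const hq hσ k n ε]
      unfold E
      rw [M_sub, M_add, M_add]
    linarith [hEw n]
  have := abel_bound hθ (z := fun n => - stagePay q g σ k n) (R := R) (B := B) (C := 1)
    (c := -(w k + ε)) hRb (fun n => by
      rw [abs_neg]
      have := stagePay_mem hq hg hσ k n
      exact abs_le.2 ⟨by linarith [this.1], this.2⟩) (fun n => by linarith [hstep n])
  simp only [mul_neg, tsum_neg] at this
  rw [payoff]
  linarith

lemma affine_eq {w : (K → ℝ) → ℝ} (hw : IsAffineOn w) {p : K → ℝ} (hp : p ∈ ΔK K) :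
    w p = ∑ k, p k * w (dirac k) := by
  have hpe : ∑ k, p k • (dirac k : K → ℝ) = p := by
    funext j; simp [dirac]
  have key : ∀ ⦃x⦄, x ∈ ΔK K → ∀ ⦃y⦄, y ∈ ΔK K → ∀ ⦃a b : ℝ⦄, 0 ≤ a → 0 ≤ b → a + b = 1 →
      w (a • x + b • y) = a • w x + b • w y := by
    intro x hx y hy a b ha hb hab
    have : b = 1 - a := by linarith
    subst this
    exact hw x hx y hy a ⟨ha, by linarith⟩
  have h1 : ConvexOn ℝ (ΔK K) w := ⟨convex_ΔK, fun x hx y hy a b ha hb hab =>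
    (key hx hy ha hb hab).le⟩
  have h2 : ConcaveOn ℝ (ΔK K) w := ⟨convex_ΔK, fun x hx y hy a b ha hb hab =>
    (key hx hy ha hb hab).ge⟩
  have a1 := h1.map_sum_le (t := Finset.univ) (w := p) (p := fun k => (dirac k : K → ℝ))
    (fun k _ => hp.1 k) hp.2 (fun k _ => dirac_mem k)
  have a2 := h2.le_map_sum (t := Finset.univ) (w := p) (p := fun k => (dirac k : K → ℝ))
    (fun k _ => hp.1 k) hp.2 (fun k _ => dirac_mem k)
  rw [hpe] at a1 a2
  exact le_antisymm a1 a2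

end Helpers3

end Stmt17
/-- **Corollary 11 (Renault–Venel).** Every standard MDP with a finite nonempty set of
states has a general uniform value `v*`, characterized via affine functions
`w : Δ(K) → [0,1]` which are (1) excessive and (2) above the payoff on the invariant
couples `RR`. -/
theorem stmt17 (K A : Type*) [Fintype K] [Nonempty K] [DecidableEq K] [Nonempty A]
    (q : K → A → (K → ℝ)) (hq : ∀ k a, q k a ∈ Stmt17.ΔK K)
    (g : K → A → ℝ) (hg : ∀ k a, g k a ∈ Icc (0:ℝ) 1) :
    ∃ vstar : K → ℝ,
      -- general limit value
      (∀ ε > (0:ℝ), ∃ α > (0:ℝ), ∀ θ : ℕ → ℝ, Stmt17.IsEval θ →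
        Stmt17.impatience θ ≤ α →
        ∀ k : K, |Stmt17.value q g θ k - vstar k| ≤ ε) ∧
      -- general uniform value
      (∀ ε > (0:ℝ), ∃ α > (0:ℝ), ∀ k : K, ∃ σ, Stmt17.IsStrat σ ∧
        ∀ θ : ℕ → ℝ, Stmt17.IsEval θ → Stmt17.impatience θ ≤ α →
          Stmt17.payoff q g θ σ k ≥ vstar k - ε) ∧
      -- characterization of `v*`
      (∀ k : K, vstar k =
        sInf {c : ℝ | ∃ w : (K → ℝ) → ℝ, Stmt17.IsAffineOn w ∧
          (∀ p ∈ Stmt17.ΔK K, w p ∈ Icc (0:ℝ) 1) ∧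
          (∀ (k' : K) (a : A), w (Stmt17.dirac k') ≥ w (q k' a)) ∧
          (∀ py ∈ Stmt17.RR q g, w py.1 ≥ py.2) ∧
          c = w (Stmt17.dirac k)}) := by
  set Φ : K → Set ℝ := fun k => {c : ℝ | ∃ w : (K → ℝ) → ℝ, Stmt17.IsAffineOn w ∧
          (∀ p ∈ Stmt17.ΔK K, w p ∈ Icc (0:ℝ) 1) ∧
          (∀ (k' : K) (a : A), w (Stmt17.dirac k') ≥ w (q k' a)) ∧
          (∀ py ∈ Stmt17.RR q g, w py.1 ≥ py.2) ∧
          c = w (Stmt17.dirac k)} with hΦ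
  have hbelow : ∀ k, BddBelow (Φ k) := fun k =>
    ⟨0, by rintro c ⟨w, -, h1, -, -, rfl⟩; exact (h1 _ (Stmt17.dirac_mem k)).1⟩
  have hdir : ∀ (f : K → ℝ) k, ∑ j, (Stmt17.dirac k : K → ℝ) j * f j = f k := fun f k => by
    simp [Stmt17.dirac]
  have humem : ∀ k, Stmt17.u q g k ∈ Φ k := by
    intro k
    refine ⟨fun p => ∑ j, p j * Stmt17.u q g j, ?_, ?_, ?_, ?_, (hdir _ k).symm⟩
    · intro p _ p' _ α _
      simp only [Pi.add_apply, Pi.smul_apply, smul_eq_mul, Finset.mul_sum,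
        ← Finset.sum_add_distrib]
      exact Finset.sum_congr rfl fun _ _ => by ring
    · intro p hp
      refine ⟨Finset.sum_nonneg fun j _ => mul_nonneg (hp.1 j) (Stmt17.u_mem hq hg j).1, ?_⟩
      rw [← hp.2]
      exact Finset.sum_le_sum fun j _ => mul_le_of_le_one_right (hp.1 j) (Stmt17.u_mem hq hg j).2
    · intro k' a
      dsimp only
      rw [hdir]
      exact Stmt17.u_exc hq hg k' a
    · intro py hpy
      exact Stmt17.u_RR hq hg hpy
  have hle : ∀ k, sInf (Φ k) ≤ Stmt17.u q g k := fun k => csInf_le (hbelow k) (humem k)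
  -- a common positive threshold over the finite state space
  have hmin : ∀ f : K → ℝ, (∀ k, 0 < f k) → ∃ α > (0:ℝ), ∀ k, α ≤ f k := fun f hf => by
    obtain ⟨k, hk⟩ := Finite.exists_min f
    exact ⟨f k, hf k, hk⟩
  have hlow : ∀ ε > (0:ℝ), ∃ α > (0:ℝ), ∀ k : K, ∃ σ, Stmt17.IsStrat σ ∧
        ∀ θ : ℕ → ℝ, Stmt17.IsEval θ → Stmt17.impatience θ ≤ α →
          Stmt17.payoff q g θ σ k ≥ sInf (Φ k) - ε := by
    intro ε hε
    choose c hc hcu using fun k => Stmt17.exists_Gu hq hg k (half_pos hε)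
    choose σ hσ R B hR h using hc
    have hB : ∀ k, 0 ≤ B k := fun k => (abs_nonneg _).trans (hR k 0)
    obtain ⟨α, hα, hαk⟩ := hmin (fun k => ε / (4 * (B k + 1))) fun k =>
      div_pos hε (by linarith [hB k])
    refine ⟨α, hα, fun k => ⟨σ k, hσ k, fun θ hθ hI => ?_⟩⟩
    have h1 := Stmt17.abel_bound hθ (hR k) (C := 1) (fun n => by
      have := Stmt17.stagePay_mem hq hg (hσ k) k n
      exact abs_le.2 ⟨by linarith [this.1], this.2⟩) (h k)
    have h2 : Stmt17.impatience θ * (4 * (B k + 1)) ≤ ε :=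
      (le_div_iff₀ (by linarith [hB k])).1 (hI.trans (hαk k))
    have h3 : 0 ≤ Stmt17.impatience θ := tsum_nonneg fun _ => abs_nonneg _
    rw [← Stmt17.payoff] at h1
    have := hcu k
    have := hle k
    have := mul_nonneg h3 (hB k)
    linarith
  have hup : ∀ ε > (0:ℝ), ∃ α > (0:ℝ), ∀ θ : ℕ → ℝ, Stmt17.IsEval θ →
        Stmt17.impatience θ ≤ α → ∀ k σ, Stmt17.IsStrat σ →
          Stmt17.payoff q g θ σ k ≤ sInf (Φ k) + ε := by
    intro ε hε
    have hex : ∀ k, ∃ B : ℝ, ∀ σ, Stmt17.IsStrat σ → ∀ θ, Stmt17.IsEval θ →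
        Stmt17.payoff q g θ σ k ≤ sInf (Φ k) + ε / 2 + B * Stmt17.impatience θ := by
      intro k
      obtain ⟨c, ⟨w, hwa, hw1, hw2, hw3, rfl⟩, hlt⟩ := exists_lt_of_csInf_lt ⟨_, humem k⟩
        (show sInf (Φ k) < sInf (Φ k) + ε / 4 by linarith)
      obtain ⟨B, hB⟩ := Stmt17.upper hq hg (w := fun j => w (Stmt17.dirac j))
        (fun py hpy => by rw [← Stmt17.affine_eq hwa hpy.1]; exact hw3 py hpy)
        (fun k a => by rw [← Stmt17.affine_eq hwa (hq k a)]; exact hw2 k a)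
        (show 0 < ε / 4 by linarith)
      refine ⟨B, fun σ hσ θ hθ => ?_⟩
      have := hB σ hσ k θ hθ
      linarith
    choose B hB using hex
    obtain ⟨α, hα, hαk⟩ := hmin (fun k => ε / (2 * (|B k| + 1))) fun k =>
      div_pos hε (by linarith [abs_nonneg (B k)])
    refine ⟨α, hα, fun θ hθ hI k σ hσ => ?_⟩
    have h1 := hB k σ hσ θ hθ
    have h2 : Stmt17.impatience θ * (2 * (|B k| + 1)) ≤ ε :=
      (le_div_iff₀ (by linarith [abs_nonneg (B k)])).1 (hI.trans (hαk k))
    have h3 : 0 ≤ Stmt17.impatience θ := tsum_nonneg fun _ => abs_nonneg _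
    have h4 := mul_le_mul_of_nonneg_right (le_abs_self (B k)) h3
    linarith
  refine ⟨fun k => sInf (Φ k), fun ε hε => ?_, hlow, fun k => rfl⟩
  obtain ⟨α₁, hα₁, h1⟩ := hlow ε hε
  obtain ⟨α₂, hα₂, h2⟩ := hup ε hε
  refine ⟨min α₁ α₂, lt_min hα₁ hα₂, fun θ hθ hI k => ?_⟩
  obtain ⟨σ, hσ, hp⟩ := h1 k
  have hub := h2 θ hθ (hI.trans (min_le_right _ _)) k
  have a1 : Stmt17.value q g θ k ≤ sInf (Φ k) + ε := by
    refine csSup_le ⟨_, σ, hσ, rfl⟩ ?_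
    rintro _ ⟨τ, hτ, rfl⟩
    exact hub τ hτ
  have a2 : Stmt17.payoff q g θ σ k ≤ Stmt17.value q g θ k := by
    refine le_csSup ⟨sInf (Φ k) + ε, ?_⟩ ⟨σ, hσ, rfl⟩
    rintro _ ⟨τ, hτ, rfl⟩
    exact hub τ hτ
  have a3 := hp θ hθ (hI.trans (min_le_left _ _))
  rw [abs_le]
  constructor <;> linarith
end
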